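/- arXiv:2206.00206 — 7 statements merged into one kernel-verified Lean document; each statement's English description precedes it below -/
import Mathlib

section
/- Let φ(z) = z², so that p_{N,R}^φ is the Fejér-type density estimator. Suppose the true density p ∈ L¹(ℝ^D) ∩ L²(ℝ^D) is ordinary smooth of order β > 3, i.e. its Fourier transform satisfies |p̂(x)| ≤ c ∏_{j=1}^D 1/(1 + |x_j|^β) almost everywhere for some constant c > 0. Then there exists a universal constant c' such that for all R > 0 and all N ≥ 1, MISE(p_{N,R}^φ, p) ≤ c' ( 1/R² + R^D / N ). -/
/-!
The estimator is `N⁻¹ ∑ᵢ K_R (k - kᵢ)`, where `K_R` is the product Fejér kernel, a nonnegative function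
of total mass `1` bounded by `(R / A) ^ D`. For fixed `k` the mean squared error splits into a variance
and a squared bias (`mse_bound`), and Tonelli (`integral_integral_le_of_slices`) lets each be
integrated over `k`.

* Variance: it is at most `N⁻¹ (p * K_R²)(k)`, whose integral is `N⁻¹ ∫ K_R² ≤ N⁻¹ (R / A) ^ D`.
* Bias: `K_R * p - p` has Fourier transform `p̂ (K̂_R - 1)`. The kernel satisfies
  `|1 - K̂_R(t)| ≤ ∑ⱼ |tⱼ| / R` (`norm_one_sub_charFun_fejerKernel_le`), and the decay of `p̂` makes
  `|p̂(t)| ∑ⱼ |tⱼ|` both integrable and square integrable, so Plancherel bounds the integrated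
  squared bias by a constant times `1 / R²` (`bias_bound`).

Plancherel is needed for integrable functions with integrable transform, and follows from an
almost-everywhere Fourier inversion formula (`ae_eq_fourierInv_fourier`).
-/

open MeasureTheory Real Finset

/-- `sin z / z`, with the convention that its value at `z = 0` is `1`. -/
noncomputable def sincLike (z : ℝ) : ℝ := if z = 0 then 1 else Real.sin z / z

/-- The generalized Fourier density estimator, with `A` passed explicitly. -/
noncomputable def pEst (D N : ℕ) (φ : ℝ → ℝ) (A R : ℝ)
    (ks : Fin N → Fin D → ℝ) (k : Fin D → ℝ) : ℝ :=
  R ^ D / (N * A ^ D) *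
    ∑ i : Fin N, ∏ j : Fin D, φ (sincLike (R * (k j - ks i j)))

/-- The law of an i.i.d. sample of size `N` from the distribution on `ℝ^D` with density `p`. -/
noncomputable def sampleMeasure (D N : ℕ) (p : (Fin D → ℝ) → ℝ) :
    Measure (Fin N → Fin D → ℝ) :=
  Measure.pi fun _ : Fin N => volume.withDensity fun x => ENNReal.ofReal (p x)

/-- The mean integrated squared error of the generalized Fourier density estimator. -/
noncomputable def MISE (D N : ℕ) (φ : ℝ → ℝ) (A R : ℝ) (p : (Fin D → ℝ) → ℝ) : ℝ :=
  ∫ ks : Fin N → Fin D → ℝ,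
    (∫ k : Fin D → ℝ, (pEst D N φ A R ks k - p k) ^ 2) ∂(sampleMeasure D N p)

/-- The Fourier transform `p̂(t) = ∫ e^{i t·x} p(x) dx` of the density `p` on `ℝ^D`. -/
noncomputable def charFun (D : ℕ) (p : (Fin D → ℝ) → ℝ) (t : Fin D → ℝ) : ℂ :=
  ∫ x : Fin D → ℝ, Complex.exp (Complex.I * ((∑ j : Fin D, t j * x j : ℝ) : ℂ)) * (p x : ℂ)

open scoped FourierTransform

/-! ### Plancherel's identity -/

/-- Fourier inversion almost everywhere, for an integrable function that need not be continuous: both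
sides have the same integral against every smooth compactly supported `g = 𝓕 (𝓕⁻ g)`, because
the Fourier transform is self-adjoint. -/
theorem ae_eq_fourierInv_fourier {V : Type*} [NormedAddCommGroup V] [InnerProductSpace ℝ V]
    [FiniteDimensional ℝ V] [MeasurableSpace V] [BorelSpace V] {f : V → ℂ}
    (hf : Integrable f) (hf' : Integrable (𝓕 f)) : f =ᵐ[volume] 𝓕⁻ (𝓕 f) := by
  have hcont : Continuous (𝓕⁻ (𝓕 f)) :=
    VectorFourier.fourierIntegral_continuous Real.continuous_fourierChar
      (L := -innerₗ V) continuous_inner.neg hf'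
  refine ae_eq_of_integral_contDiff_smul_eq hf.locallyIntegrable hcont.locallyIntegrable ?_
  intro g hg hgs
  have hgs' : HasCompactSupport (fun x => (g x : ℂ)) := hgs.comp_left (g := fun r : ℝ => (r : ℂ)) rfl
  let G : SchwartzMap V ℂ := hgs'.toSchwartzMap (Complex.ofRealCLM.contDiff.comp hg)
  have hG : ∀ x, G x = (g x : ℂ) := fun x => rfl
  have h1 : ∀ x, (g x : ℂ) = 𝓕 (⇑(𝓕⁻ G : SchwartzMap V ℂ)) x := by
    intro x
    rw [← hG x, ← SchwartzMap.fourier_coe, FourierTransform.fourier_fourierInv_eq]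
  have e1 : ∫ x, g x • f x = ∫ x, (𝓕⁻ G) x • 𝓕 f x := by
    have := VectorFourier.integral_fourierIntegral_smul_eq_flip (L := innerₗ V)
      Real.continuous_fourierChar continuous_inner
      ((𝓕⁻ G : SchwartzMap V ℂ).integrable (μ := volume)) hf
    rw [flip_innerₗ] at this
    refine Eq.trans ?_ this
    refine integral_congr_ae (Filter.Eventually.of_forall fun x => ?_)
    simp only [Complex.real_smul, smul_eq_mul]
    rw [h1 x]; rfl
  have e2 : ∫ x, g x • (𝓕⁻ (𝓕 f)) x = ∫ x, (𝓕⁻ G) x • 𝓕 f x := by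
    have := VectorFourier.integral_fourierIntegral_smul_eq_flip (L := -innerₗ V)
      Real.continuous_fourierChar continuous_inner.neg (G.integrable (μ := volume)) hf'
    have hflip : (-innerₗ V).flip = -innerₗ V := by
      ext x y; simp [real_inner_comm]
    rw [hflip] at this
    have e3 : ∫ x, (𝓕⁻ G) x • 𝓕 f x = ∫ x, G x • (𝓕⁻ (𝓕 f)) x := by
      refine Eq.trans ?_ this
      refine integral_congr_ae (Filter.Eventually.of_forall fun x => ?_)
      simp only
      rw [SchwartzMap.fourierInv_coe]; rfl
    rw [e3]
    rfl
  rw [e1, e2]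

/-- Plancherel's identity for `f ∈ L¹` with `𝓕 f ∈ L¹`; such an `f` is essentially bounded, hence
square integrable. -/
theorem plancherel_of_integrable {V : Type*} [NormedAddCommGroup V] [InnerProductSpace ℝ V]
    [FiniteDimensional ℝ V] [MeasurableSpace V] [BorelSpace V] {f : V → ℂ}
    (hf : Integrable f) (hf' : Integrable (𝓕 f)) :
    Integrable (fun x => ‖f x‖ ^ 2) ∧ ∫ x, ‖f x‖ ^ 2 = ∫ x, ‖𝓕 f x‖ ^ 2 := by
  have hae := ae_eq_fourierInv_fourier hf hf'
  constructor
  · have hb : ∀ᵐ x, ‖f x‖ ≤ ∫ w, ‖𝓕 f w‖ := by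
      filter_upwards [hae] with x hx
      rw [hx]
      exact VectorFourier.norm_fourierIntegral_le_integral_norm _ _ _ _ _
    have := hf.norm.bdd_mul (c := ∫ w, ‖𝓕 f w‖) hf.norm.aestronglyMeasurable (by simpa using hb)
    simpa [sq] using this
  · have := VectorFourier.integral_sesq_fourierIntegral_eq_neg_flip (L := innerₗ V)
      (innerSL ℂ) Real.continuous_fourierChar continuous_inner hf hf'
    rw [flip_innerₗ] at this
    have e1 : ∫ x, ((‖𝓕 f x‖ ^ 2 : ℝ) : ℂ) = ∫ x, ((‖f x‖ ^ 2 : ℝ) : ℂ) := by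
      refine Eq.trans ?_ (this.trans ?_)
      · refine integral_congr_ae (Filter.Eventually.of_forall fun x => ?_)
        have := inner_self_eq_norm_sq_to_K (𝕜 := ℂ) (𝓕 f x)
        exact (this.trans (by simp)).symm
      · refine integral_congr_ae ?_
        filter_upwards [hae] with x hx
        have := inner_self_eq_norm_sq_to_K (𝕜 := ℂ) (f x)
        nth_rw 2 [hx] at this
        exact this.trans (by simp)
    rw [integral_complex_ofReal, integral_complex_ofReal] at e1
    exact_mod_cast e1.symm

/-- Plancherel for the transform `charFun` on `Fin D → ℝ`, as an upper bound under an integrable and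
square-integrable majorant `B` of the transform. It is transported from `EuclideanSpace`, where
`𝓕 h w = charFun D h (-2π w)`; the factor `(2π)^{-D}` is the Jacobian of this rescaling. -/
theorem plancherel_charFun (D : ℕ) (h : (Fin D → ℝ) → ℝ) (hh : Integrable h)
    (B : (Fin D → ℝ) → ℝ) (hB : Integrable B) (hB2 : Integrable (fun t => B t ^ 2))
    (hle : ∀ᵐ t, ‖_root_.charFun D h t‖ ≤ B t) :
    Integrable (fun x => h x ^ 2) ∧
      ∫ x, h x ^ 2 ≤ |((2 * π) ^ D)⁻¹| * ∫ t, B t ^ 2 := by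
  have mp := PiLp.volume_preserving_ofLp (Fin D)
  have emb : MeasurableEmbedding (@WithLp.ofLp 2 (Fin D → ℝ)) :=
    (MeasurableEquiv.toLp 2 (Fin D → ℝ)).symm.measurableEmbedding
  set H : EuclideanSpace ℝ (Fin D) → ℂ := fun v => (h v.ofLp : ℂ) with hH
  have hHint : Integrable H := (mp.integrable_comp_of_integrable hh).ofReal
  have hfour : ∀ w : EuclideanSpace ℝ (Fin D), 𝓕 H w = _root_.charFun D h ((-(2 * π)) • w.ofLp) := by
    intro w
    rw [Real.fourier_eq', _root_.charFun,
      ← mp.integral_comp emb]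
    refine integral_congr_ae (Filter.Eventually.of_forall fun v => ?_)
    simp only [hH, smul_eq_mul]
    congr 2
    rw [mul_comm]
    congr 2
    simp [PiLp.inner_apply, Finset.mul_sum]
    refine Finset.sum_congr rfl fun i _ => by ring
  have hcont : Continuous (𝓕 H) :=
    VectorFourier.fourierIntegral_continuous Real.continuous_fourierChar
      (L := innerₗ _) continuous_inner hHint
  have hpi : (-(2 * π)) ≠ 0 := by have := Real.pi_pos; linarith
  have hcch : Continuous (_root_.charFun D h) := by
    have : _root_.charFun D h = fun t => 𝓕 H (WithLp.toLp 2 ((-(2 * π))⁻¹ • t)) := by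
      ext t
      rw [hfour]
      simp only [smul_smul]
      rw [mul_inv_cancel₀ hpi, one_smul]
    rw [this]
    exact hcont.comp ((PiLp.continuous_toLp 2 _).comp (continuous_const_smul _))
  have hchint : Integrable (_root_.charFun D h) :=
    hB.mono' hcch.aestronglyMeasurable hle
  have hchint2 : Integrable (fun t => ‖_root_.charFun D h t‖ ^ 2) := by
    refine hB2.mono' (by fun_prop) ?_
    filter_upwards [hle] with t ht
    rw [Real.norm_of_nonneg (by positivity)]
    gcongr
  have hF : Integrable (𝓕 H) := by
    have h1 : Integrable (fun t => _root_.charFun D h ((-(2 * π)) • t)) := hchint.comp_smul hpi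
    have := mp.integrable_comp_of_integrable h1
    refine this.congr (Filter.Eventually.of_forall fun w => (hfour w).symm)
  obtain ⟨i1, i2⟩ := plancherel_of_integrable hHint hF
  have n1 : ∀ v, ‖H v‖ ^ 2 = (fun x => h x ^ 2) (WithLp.ofLp v) := by
    intro v; simp [hH]
  constructor
  · rw [← mp.integrable_comp_emb emb]
    exact i1.congr (Filter.Eventually.of_forall n1)
  · calc ∫ x, h x ^ 2 = ∫ v, ‖H v‖ ^ 2 := by
          rw [← mp.integral_comp emb]; simp only [n1]
      _ = ∫ w, ‖𝓕 H w‖ ^ 2 := i2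
      _ = ∫ t, ‖_root_.charFun D h ((-(2 * π)) • t)‖ ^ 2 := by
          rw [← mp.integral_comp emb]; simp only [hfour]
      _ = |((2 * π) ^ D)⁻¹| * ∫ t, ‖_root_.charFun D h t‖ ^ 2 := by
          rw [Measure.integral_comp_smul volume (fun t => ‖_root_.charFun D h t‖ ^ 2)]
          simp [abs_mul]
      _ ≤ _ := by
          gcongr ?_ * ?_
          refine integral_mono_ae hchint2 hB2 ?_
          filter_upwards [hle] with t ht
          gcongr

/-! ### The Fejér kernel and its Fourier transform -/

/-- The normalizing constant `A = ∫ (sin z / z)² dz` of the estimator. -/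
noncomputable def fejerConst : ℝ := ∫ z : ℝ, sincLike z ^ 2

/-- The one-dimensional Fejér kernel `(R / A) (sin (R z) / (R z))²`, of total mass `1`. -/
noncomputable def fejer (R z : ℝ) : ℝ := R / fejerConst * sincLike (R * z) ^ 2

/-- The `D`-dimensional product Fejér kernel. -/
noncomputable def fejerKernel (D : ℕ) (R : ℝ) (x : Fin D → ℝ) : ℝ := ∏ j, fejer R (x j)

theorem sincLike_eq_sinc : sincLike = Real.sinc := rfl

theorem continuous_sincLike : Continuous sincLike := by
  rw [sincLike_eq_sinc]; exact Real.continuous_sinc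

theorem sincLike_sq_le_one (z : ℝ) : sincLike z ^ 2 ≤ 1 := by
  rw [sincLike_eq_sinc, sq_le_one_iff_abs_le_one]; exact Real.abs_sinc_le_one z

theorem sincLike_sq_mul_sq (z : ℝ) : sincLike z ^ 2 * z ^ 2 = Real.sin z ^ 2 := by
  unfold sincLike
  split_ifs with h
  · simp [h]
  · field_simp

theorem integrable_sincLike_sq : Integrable (fun z : ℝ => sincLike z ^ 2) := by
  refine (integrable_inv_one_add_sq.const_mul 2).mono'
    (continuous_sincLike.pow 2).aestronglyMeasurable (Filter.Eventually.of_forall fun z => ?_)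
  rw [Real.norm_of_nonneg (by positivity), ← div_eq_mul_inv, le_div_iff₀ (by positivity)]
  nlinarith [sincLike_sq_le_one z, sincLike_sq_mul_sq z, Real.sin_sq_le_one z]

theorem fejerConst_pos : 0 < fejerConst :=
  integral_pos_of_integrable_nonneg_nonzero (x := 0) (continuous_sincLike.pow 2)
    integrable_sincLike_sq (fun z => by positivity) (by simp [sincLike])

theorem continuous_fejer (R : ℝ) : Continuous (fejer R) := by
  have := continuous_sincLike
  unfold fejer; fun_prop

theorem fejer_nonneg {R : ℝ} (hR : 0 < R) (z : ℝ) : 0 ≤ fejer R z := by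
  have := fejerConst_pos
  unfold fejer; positivity

theorem fejer_le {R : ℝ} (hR : 0 < R) (z : ℝ) : fejer R z ≤ R / fejerConst := by
  have := fejerConst_pos
  exact mul_le_of_le_one_right (by positivity) (sincLike_sq_le_one _)

theorem integrable_fejer {R : ℝ} (hR : 0 < R) : Integrable (fejer R) :=
  (integrable_sincLike_sq.comp_mul_left' hR.ne').const_mul _

theorem integral_fejer {R : ℝ} (hR : 0 < R) : ∫ z, fejer R z = 1 := by
  have hA := fejerConst_pos
  unfold fejer
  rw [integral_const_mul, Measure.integral_comp_mul_left (fun z => sincLike z ^ 2) R]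
  change R / fejerConst * (|R⁻¹| * fejerConst) = 1
  rw [abs_of_pos (by positivity)]
  field_simp

theorem fejer_neg (R z : ℝ) : fejer R (-z) = fejer R z := by
  simp [fejer, sincLike_eq_sinc]

/-- Bounding `sin²(R z)` by `1` gives `fejer R z ≤ 1 / (A R z²)`. As `1 - cos (t z) = 2 sin²(t z / 2)`,
the integrand is then at most `t² / (2 A R)` times `(sin w / w)²` at `w = t z / 2`, and rescaling turns
the integral of this bound into exactly `|t| / R`. -/
theorem integral_one_sub_cos_mul_fejer_le {R : ℝ} (hR : 0 < R) (t : ℝ) :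
    ∫ z, (1 - Real.cos (t * z)) * fejer R z ≤ |t| / R := by
  have hA := fejerConst_pos
  rcases eq_or_ne t 0 with rfl | ht
  · simp
  have ht2 : t / 2 ≠ 0 := by positivity
  have hI : Integrable (fun z : ℝ => t ^ 2 / (2 * (fejerConst * R)) * sincLike (t / 2 * z) ^ 2) :=
    (integrable_sincLike_sq.comp_mul_left' ht2).const_mul _
  have hpt : ∀ z, (1 - Real.cos (t * z)) * fejer R z
      ≤ t ^ 2 / (2 * (fejerConst * R)) * sincLike (t / 2 * z) ^ 2 := by
    intro z
    rcases eq_or_ne z 0 with rfl | hz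
    · simp; positivity
    have h1 : 1 - Real.cos (t * z) = 2 * Real.sin (t / 2 * z) ^ 2 := by
      have := Real.cos_sq (t / 2 * z)
      rw [Real.sin_sq, this, show 2 * (t / 2 * z) = t * z by ring]; ring
    have h2 := sincLike_sq_mul_sq (t / 2 * z)
    have h3 := sincLike_sq_mul_sq (R * z)
    have h4 : sincLike (R * z) ^ 2 ≤ 1 / (R * z) ^ 2 := by
      rw [le_div_iff₀ (by positivity), h3]; exact Real.sin_sq_le_one _
    rw [h1, ← h2, fejer]
    calc 2 * (sincLike (t / 2 * z) ^ 2 * (t / 2 * z) ^ 2) * (R / fejerConst * sincLike (R * z) ^ 2)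
        ≤ 2 * (sincLike (t / 2 * z) ^ 2 * (t / 2 * z) ^ 2) *
          (R / fejerConst * (1 / (R * z) ^ 2)) := by gcongr
      _ = _ := by field_simp
  calc ∫ z, (1 - Real.cos (t * z)) * fejer R z
      ≤ ∫ z : ℝ, t ^ 2 / (2 * (fejerConst * R)) * sincLike (t / 2 * z) ^ 2 :=
        integral_mono_of_nonneg
          (Filter.Eventually.of_forall fun z => mul_nonneg
            (by linarith [Real.cos_le_one (t * z)]) (fejer_nonneg hR z)) hI
          (Filter.Eventually.of_forall hpt)
    _ = |t| / R := by
        rw [integral_const_mul, Measure.integral_comp_mul_left (fun z => sincLike z ^ 2) (t / 2)]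
        change _ * (|(t / 2)⁻¹| * fejerConst) = _
        rw [abs_inv, abs_div, abs_two, ← sq_abs t]
        have : |t| ≠ 0 := abs_ne_zero.mpr ht
        field_simp

/-- The Fourier transform `∫ e^{i t z} fejer R z dz` of the one-dimensional kernel. -/
noncomputable def fejerChar (R t : ℝ) : ℂ :=
  ∫ z : ℝ, Complex.exp (Complex.I * ((t * z : ℝ) : ℂ)) * (fejer R z : ℂ)

theorem norm_cexp_I_mul (r : ℝ) : ‖Complex.exp (Complex.I * (r : ℂ))‖ = 1 := by
  rw [mul_comm]; exact Complex.norm_exp_ofReal_mul_I r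

theorem norm_fejerChar_le {R : ℝ} (hR : 0 < R) (t : ℝ) : ‖fejerChar R t‖ ≤ 1 := by
  refine (norm_integral_le_integral_norm _).trans ?_
  simp only [norm_mul, norm_cexp_I_mul, one_mul, Complex.norm_real,
    Real.norm_of_nonneg (fejer_nonneg hR _)]
  exact (integral_fejer hR).le

/-- The sine part of the transform vanishes because the kernel is even. -/
theorem fejerChar_eq {R : ℝ} (hR : 0 < R) (t : ℝ) :
    1 - fejerChar R t = ((∫ z, (1 - Real.cos (t * z)) * fejer R z : ℝ) : ℂ) := by
  have hf := integrable_fejer hR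
  have hcos : Integrable (fun z => Real.cos (t * z) * fejer R z) :=
    hf.bdd_mul (c := 1) (by fun_prop) (Filter.Eventually.of_forall fun z => Real.abs_cos_le_one _)
  have hsin : Integrable (fun z => Real.sin (t * z) * fejer R z) :=
    hf.bdd_mul (c := 1) (by fun_prop) (Filter.Eventually.of_forall fun z => Real.abs_sin_le_one _)
  have hodd : ∫ z, Real.sin (t * z) * fejer R z = 0 := by
    have := integral_neg_eq_self (fun z => Real.sin (t * z) * fejer R z) volume
    simp only [mul_neg, Real.sin_neg, fejer_neg, neg_mul, integral_neg] at this
    linarith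
  have e : fejerChar R t = ((∫ z, Real.cos (t * z) * fejer R z : ℝ) : ℂ) +
      Complex.I * ((∫ z, Real.sin (t * z) * fejer R z : ℝ) : ℂ) := by
    rw [← integral_complex_ofReal, ← integral_complex_ofReal, ← integral_const_mul,
      ← integral_add hcos.ofReal (hsin.ofReal.const_mul _), fejerChar]
    refine integral_congr_ae (Filter.Eventually.of_forall fun z => ?_)
    simp only
    rw [mul_comm Complex.I, Complex.exp_mul_I]
    push_cast
    ring
  rw [e, hodd]
  have : ∫ z, (1 - Real.cos (t * z)) * fejer R z
      = 1 - ∫ z, Real.cos (t * z) * fejer R z := by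
    simp only [sub_mul, one_mul]
    rw [integral_sub hf hcos, integral_fejer hR]
  rw [this]
  push_cast
  ring

theorem norm_one_sub_fejerChar_le {R : ℝ} (hR : 0 < R) (t : ℝ) :
    ‖1 - fejerChar R t‖ ≤ |t| / R := by
  rw [fejerChar_eq hR, Complex.norm_real, Real.norm_of_nonneg]
  · exact integral_one_sub_cos_mul_fejer_le hR t
  · exact integral_nonneg fun z => mul_nonneg
      (by linarith [Real.cos_le_one (t * z)]) (fejer_nonneg hR z)

theorem norm_one_sub_prod_le {ι : Type*} (s : Finset ι) (a : ι → ℂ) (ha : ∀ i, ‖a i‖ ≤ 1) :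
    ‖1 - ∏ i ∈ s, a i‖ ≤ ∑ i ∈ s, ‖1 - a i‖ := by
  classical
  induction s using Finset.induction_on with
  | empty => simp
  | insert i s hi ih =>
    rw [Finset.prod_insert hi, Finset.sum_insert hi]
    calc ‖1 - a i * ∏ j ∈ s, a j‖ = ‖(1 - a i) + a i * (1 - ∏ j ∈ s, a j)‖ := by ring_nf
      _ ≤ ‖1 - a i‖ + ‖a i‖ * ‖1 - ∏ j ∈ s, a j‖ := by
        rw [← norm_mul]; exact norm_add_le _ _
      _ ≤ ‖1 - a i‖ + 1 * ‖1 - ∏ j ∈ s, a j‖ := by gcongr; exact ha i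
      _ ≤ _ := by rw [one_mul]; gcongr

theorem continuous_fejerKernel (D : ℕ) (R : ℝ) : Continuous (fejerKernel D R) := by
  have := continuous_fejer R
  unfold fejerKernel; fun_prop

theorem fejerKernel_nonneg (D : ℕ) {R : ℝ} (hR : 0 < R) (x : Fin D → ℝ) :
    0 ≤ fejerKernel D R x := Finset.prod_nonneg fun _ _ => fejer_nonneg hR _

theorem fejerKernel_le (D : ℕ) {R : ℝ} (hR : 0 < R) (x : Fin D → ℝ) :
    fejerKernel D R x ≤ (R / fejerConst) ^ D := by
  refine (Finset.prod_le_prod (fun _ _ => fejer_nonneg hR _) fun j _ => fejer_le hR (x j)).trans ?_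
  rw [Finset.prod_const, Finset.card_univ, Fintype.card_fin]

theorem integrable_fejerKernel (D : ℕ) {R : ℝ} (hR : 0 < R) : Integrable (fejerKernel D R) :=
  Integrable.fintype_prod (f := fun _ => fejer R) fun _ => integrable_fejer hR

theorem integral_fejerKernel (D : ℕ) {R : ℝ} (hR : 0 < R) : ∫ x, fejerKernel D R x = 1 := by
  unfold fejerKernel
  rw [integral_fintype_prod_volume_eq_prod (fun _ : Fin D => fejer R)]
  simp [integral_fejer hR]

theorem integrable_fejerKernel_sq (D : ℕ) {R : ℝ} (hR : 0 < R) :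
    Integrable (fun x => fejerKernel D R x ^ 2) := by
  have := (integrable_fejerKernel D hR).bdd_mul (c := (R / fejerConst) ^ D)
    (continuous_fejerKernel D R).aestronglyMeasurable (Filter.Eventually.of_forall fun x => by
      rw [Real.norm_of_nonneg (fejerKernel_nonneg D hR x)]; exact fejerKernel_le D hR x)
  simpa [sq] using this

theorem integral_fejerKernel_sq_le (D : ℕ) {R : ℝ} (hR : 0 < R) :
    ∫ x, fejerKernel D R x ^ 2 ≤ (R / fejerConst) ^ D := by
  calc ∫ x, fejerKernel D R x ^ 2 ≤ ∫ x, (R / fejerConst) ^ D * fejerKernel D R x := by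
        refine integral_mono (integrable_fejerKernel_sq D hR)
          ((integrable_fejerKernel D hR).const_mul _) fun x => ?_
        simp only [sq]
        exact mul_le_mul_of_nonneg_right (fejerKernel_le D hR x) (fejerKernel_nonneg D hR x)
    _ = _ := by rw [integral_const_mul, integral_fejerKernel D hR, mul_one]

theorem charFun_fejerKernel (D : ℕ) (R : ℝ) (t : Fin D → ℝ) :
    _root_.charFun D (fejerKernel D R) t = ∏ j, fejerChar R (t j) := by
  unfold _root_.charFun fejerChar
  rw [← integral_fintype_prod_volume_eq_prod
    (fun (j : Fin D) (z : ℝ) => Complex.exp (Complex.I * ((t j * z : ℝ) : ℂ)) * (fejer R z : ℂ))]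
  refine integral_congr_ae (Filter.Eventually.of_forall fun x => ?_)
  simp only [fejerKernel]
  rw [Finset.prod_mul_distrib, ← Complex.exp_sum, ← Finset.mul_sum]
  push_cast
  rfl

theorem norm_one_sub_charFun_fejerKernel_le (D : ℕ) {R : ℝ} (hR : 0 < R) (t : Fin D → ℝ) :
    ‖1 - _root_.charFun D (fejerKernel D R) t‖ ≤ (∑ j, |t j|) / R := by
  rw [charFun_fejerKernel, Finset.sum_div]
  exact (norm_one_sub_prod_le _ _ fun j => norm_fejerChar_le hR (t j)).trans
    (Finset.sum_le_sum fun j _ => norm_one_sub_fejerChar_le hR (t j))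

/-! ### Convolution with the kernel -/

theorem charFun_convolution (D : ℕ) {p K : (Fin D → ℝ) → ℝ} (hp : Integrable p)
    (hK : Integrable K) (t : Fin D → ℝ) :
    _root_.charFun D (fun k => ∫ y, p y * K (k - y)) t
      = _root_.charFun D p t * _root_.charFun D K t := by
  have hprod : Integrable (fun q : (Fin D → ℝ) × (Fin D → ℝ) => p q.2 * K (q.1 - q.2))
      (volume.prod volume) := hp.convolution_integrand (ContinuousLinearMap.mul ℝ ℝ) hK
  have hprod' : Integrable (fun q : (Fin D → ℝ) × (Fin D → ℝ) =>
      Complex.exp (Complex.I * ((∑ j : Fin D, t j * q.1 j : ℝ) : ℂ)) *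
        ((p q.2 * K (q.1 - q.2) : ℝ) : ℂ)) (volume.prod volume) :=
    hprod.ofReal.bdd_mul (c := 1) (Continuous.aestronglyMeasurable (by fun_prop))
      (Filter.Eventually.of_forall fun q => (norm_cexp_I_mul _).le)
  calc _root_.charFun D (fun k => ∫ y, p y * K (k - y)) t
      = ∫ k : Fin D → ℝ, ∫ y : Fin D → ℝ,
          Complex.exp (Complex.I * ((∑ j : Fin D, t j * k j : ℝ) : ℂ)) *
            ((p y * K (k - y) : ℝ) : ℂ) := by
        unfold _root_.charFun
        refine integral_congr_ae (Filter.Eventually.of_forall fun k => ?_)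
        simp only
        rw [integral_const_mul, integral_complex_ofReal]
    _ = ∫ y : Fin D → ℝ, ∫ k : Fin D → ℝ,
          Complex.exp (Complex.I * ((∑ j : Fin D, t j * k j : ℝ) : ℂ)) *
            ((p y * K (k - y) : ℝ) : ℂ) := integral_integral_swap hprod'
    _ = ∫ y : Fin D → ℝ, (Complex.exp (Complex.I * ((∑ j : Fin D, t j * y j : ℝ) : ℂ)) * (p y : ℂ))
          * _root_.charFun D K t := by
        refine integral_congr_ae (Filter.Eventually.of_forall fun y => ?_)
        simp only
        rw [← integral_add_right_eq_self _ y, _root_.charFun, ← integral_const_mul]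
        refine integral_congr_ae (Filter.Eventually.of_forall fun k => ?_)
        simp only [add_sub_cancel_right, Pi.add_apply, mul_add, Finset.sum_add_distrib,
          Complex.ofReal_add, Complex.ofReal_mul, Complex.exp_add]
        ring
    _ = _ := by rw [integral_mul_const]; rfl

theorem integrable_smoothed (D : ℕ) {p K : (Fin D → ℝ) → ℝ} (hp : Integrable p)
    (hK : Integrable K) :
    Integrable (fun k => ∫ y, p y * K (k - y)) :=
  hp.integrable_convolution (ContinuousLinearMap.mul ℝ ℝ) hK

theorem integral_smoothed (D : ℕ) {p K : (Fin D → ℝ) → ℝ} (hp : Integrable p)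
    (hK : Integrable K) :
    ∫ k, ∫ y, p y * K (k - y) = (∫ y, p y) * ∫ y, K y :=
  integral_convolution (ContinuousLinearMap.mul ℝ ℝ) hp hK

/-! ### Bias -/

/-- The integrable function `∏ⱼ 4 / (1 + tⱼ²)`, which dominates `|tⱼ| ∏ᵢ 1 / (1 + |tᵢ|^β)` for
every `j` as soon as `β ≥ 3`. -/
noncomputable def majorant (D : ℕ) (t : Fin D → ℝ) : ℝ := ∏ j, 4 * (1 + t j ^ 2)⁻¹

theorem majorant_nonneg (D : ℕ) (t : Fin D → ℝ) : 0 ≤ majorant D t :=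
  Finset.prod_nonneg fun _ _ => by positivity

theorem integrable_majorant (D : ℕ) : Integrable (majorant D) :=
  Integrable.fintype_prod (f := fun _ s => 4 * (1 + s ^ 2)⁻¹)
    fun _ => integrable_inv_one_add_sq.const_mul 4

theorem integrable_majorant_sq (D : ℕ) : Integrable (fun t => majorant D t ^ 2) := by
  have := (integrable_majorant D).bdd_mul (c := (4 : ℝ) ^ D)
    (integrable_majorant D).aestronglyMeasurable (Filter.Eventually.of_forall fun t => by
      rw [Real.norm_of_nonneg (majorant_nonneg D t)]
      refine (Finset.prod_le_prod (g := fun _ => (4 : ℝ)) (fun _ _ => by positivity)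
        fun j _ => ?_).trans ?_
      · exact mul_le_of_le_one_right (by norm_num)
          (inv_le_one_of_one_le₀ (by nlinarith [sq_nonneg (t j)]))
      · rw [Finset.prod_const, Finset.card_univ, Fintype.card_fin])
  simpa [sq] using this

theorem one_add_abs_div_le {β : ℝ} (hβ : 3 < β) (s : ℝ) :
    (1 + |s|) * (1 / (1 + |s| ^ β)) ≤ 4 * (1 + s ^ 2)⁻¹ := by
  have hs := abs_nonneg s
  have hpow : 0 ≤ |s| ^ β := Real.rpow_nonneg hs β
  rw [mul_one_div, ← div_eq_mul_inv, div_le_div_iff₀ (by positivity) (by positivity), ← sq_abs s]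
  rcases le_total |s| 1 with h | h
  · have h2 : |s| ^ 2 ≤ 1 := pow_le_one₀ hs h
    nlinarith
  · have h3 : |s| ^ 3 ≤ |s| ^ β := by
      rw [← Real.rpow_natCast]
      exact Real.rpow_le_rpow_of_exponent_le h (by push_cast; exact hβ.le)
    nlinarith [pow_le_pow_right₀ h (show 2 ≤ 3 by norm_num),
      pow_le_pow_right₀ h (show 1 ≤ 3 by norm_num), pow_le_pow_right₀ h (show 0 ≤ 3 by norm_num)]

theorem sum_abs_mul_prod_le (D : ℕ) {β : ℝ} (hβ : 3 < β) (t : Fin D → ℝ) :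
    (∑ j, |t j|) * ∏ j, 1 / (1 + |t j| ^ β) ≤ D * majorant D t := by
  have hpos : ∀ j, 0 ≤ 1 / (1 + |t j| ^ β) := fun j => by positivity
  have h1 : ∀ j, |t j| ≤ ∏ i, (1 + |t i|) := by
    intro j
    calc |t j| ≤ 1 + |t j| := by linarith
      _ ≤ (1 + |t j|) * ∏ i ∈ Finset.univ.erase j, (1 + |t i|) := by
        refine le_mul_of_one_le_right (by positivity) ?_
        have : ∏ _i ∈ Finset.univ.erase j, (1 : ℝ) ≤ ∏ i ∈ Finset.univ.erase j, (1 + |t i|) :=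
          Finset.prod_le_prod (fun _ _ => zero_le_one) fun i _ => by linarith [abs_nonneg (t i)]
        simpa using this
      _ = _ := Finset.mul_prod_erase _ (fun i => 1 + |t i|) (Finset.mem_univ j)
  calc (∑ j, |t j|) * ∏ j, 1 / (1 + |t j| ^ β)
      ≤ (∑ _j : Fin D, ∏ i, (1 + |t i|)) * ∏ j, 1 / (1 + |t j| ^ β) := by
        gcongr with j
        exact h1 j
    _ = D * ∏ j, ((1 + |t j|) * (1 / (1 + |t j| ^ β))) := by
        rw [Finset.prod_mul_distrib, Finset.sum_const, Finset.card_univ, Fintype.card_fin,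
          nsmul_eq_mul, mul_assoc]
    _ ≤ _ := by
        unfold majorant
        refine mul_le_mul_of_nonneg_left (Finset.prod_le_prod (fun j _ => ?_) fun j _ => ?_)
          (Nat.cast_nonneg D)
        · exact mul_nonneg (by positivity) (hpos j)
        · exact one_add_abs_div_le hβ (t j)

/-- The squared bias is `O(1 / R²)` in `L¹`: the transform of `K_R * p - p` is `p̂ (K̂_R - 1)`, which is
at most `(c D / R) · majorant`, and the Plancherel identity applies. -/
theorem bias_bound (D : ℕ) {p : (Fin D → ℝ) → ℝ} (hp : Integrable p) {β c : ℝ} (hβ : 3 < β)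
    (hc : 0 < c) (hordinary : ∀ᵐ x : Fin D → ℝ,
      ‖_root_.charFun D p x‖ ≤ c * ∏ j : Fin D, 1 / (1 + |x j| ^ β)) {R : ℝ} (hR : 0 < R) :
    Integrable (fun k => ((∫ y, p y * fejerKernel D R (k - y)) - p k) ^ 2) ∧
    ∫ k, ((∫ y, p y * fejerKernel D R (k - y)) - p k) ^ 2 ≤
      (|((2 * π) ^ D)⁻¹| * ((c * D) ^ 2 * ∫ t, majorant D t ^ 2)) * (1 / R ^ 2) := by
  have hK := integrable_fejerKernel D hR
  have hs := integrable_smoothed D hp hK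
  have hchar : ∀ t, _root_.charFun D (fun k => (∫ y, p y * fejerKernel D R (k - y)) - p k) t
      = _root_.charFun D p t * (_root_.charFun D (fejerKernel D R) t - 1) := by
    intro t
    have hb : ∀ {f : (Fin D → ℝ) → ℝ}, Integrable f → Integrable (fun x : Fin D → ℝ =>
        Complex.exp (Complex.I * ((∑ j : Fin D, t j * x j : ℝ) : ℂ)) * (f x : ℂ)) := fun hf =>
      hf.ofReal.bdd_mul (c := 1) (Continuous.aestronglyMeasurable (by fun_prop))
        (Filter.Eventually.of_forall fun q => (norm_cexp_I_mul _).le)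
    rw [mul_sub, mul_one, ← charFun_convolution D hp hK]
    unfold _root_.charFun
    rw [← integral_sub (hb hs) (hb hp)]
    refine integral_congr_ae (Filter.Eventually.of_forall fun k => ?_)
    simp only
    push_cast
    ring
  have hle : ∀ᵐ t, ‖_root_.charFun D (fun k => (∫ y, p y * fejerKernel D R (k - y)) - p k) t‖
      ≤ c * D / R * majorant D t := by
    filter_upwards [hordinary] with t ht
    rw [hchar, norm_mul, norm_sub_rev]
    calc ‖_root_.charFun D p t‖ * ‖1 - _root_.charFun D (fejerKernel D R) t‖
        ≤ (c * ∏ j : Fin D, 1 / (1 + |t j| ^ β)) * ((∑ j, |t j|) / R) := by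
          gcongr
          exact norm_one_sub_charFun_fejerKernel_le D hR t
      _ = c / R * ((∑ j, |t j|) * ∏ j, 1 / (1 + |t j| ^ β)) := by ring
      _ ≤ c / R * (D * majorant D t) := by
          exact mul_le_mul_of_nonneg_left (sum_abs_mul_prod_le D hβ t) (by positivity)
      _ = _ := by ring
  have := plancherel_charFun D _ (hs.sub hp) (fun t => c * D / R * majorant D t)
    ((integrable_majorant D).const_mul _)
    (by simpa only [mul_pow] using (integrable_majorant_sq D).const_mul ((c * D / R) ^ 2)) hle
  refine ⟨this.1, this.2.trans (le_of_eq ?_)⟩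
  simp only [mul_pow, integral_const_mul]
  ring

/-! ### Variance and assembly -/

open ProbabilityTheory in
/-- Bias-variance decomposition of the empirical mean of `Y` over an i.i.d. sample, with the variance
of `Y` bounded by its second moment. -/
theorem mse_bound {X : Type*} [MeasurableSpace X] (μ : Measure X) [IsProbabilityMeasure μ]
    {Y : X → ℝ} (hY : MemLp Y 2 μ) (q : ℝ) {N : ℕ} (hN : 1 ≤ N) :
    Integrable (fun ks : Fin N → X => ((N : ℝ)⁻¹ * ∑ i, Y (ks i) - q) ^ 2)
      (Measure.pi fun _ : Fin N => μ) ∧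
    ∫ ks : Fin N → X, ((N : ℝ)⁻¹ * ∑ i, Y (ks i) - q) ^ 2 ∂(Measure.pi fun _ : Fin N => μ)
      ≤ (N : ℝ)⁻¹ * ∫ y, Y y ^ 2 ∂μ + ((∫ y, Y y ∂μ) - q) ^ 2 := by
  have hN0 : (N : ℝ) ≠ 0 := by positivity
  set P := Measure.pi fun _ : Fin N => μ with hP
  have hmp : ∀ i : Fin N, MeasurePreserving (Function.eval i) P μ :=
    fun i => measurePreserving_eval (fun _ : Fin N => μ) i
  have hYi : ∀ i : Fin N, MemLp (fun ks : Fin N → X => Y (ks i)) 2 P :=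
    fun i => hY.comp_measurePreserving (hmp i)
  have hS : MemLp (∑ i, fun ks : Fin N → X => Y (ks i)) 2 P := memLp_finsetSum' _ fun i _ => hYi i
  have hZ : MemLp (fun ks : Fin N → X => (N : ℝ)⁻¹ * ∑ i, Y (ks i)) 2 P := by
    have := hS.const_mul (N : ℝ)⁻¹
    simpa [Finset.sum_apply] using! this
  have hZq : MemLp (fun ks : Fin N → X => (N : ℝ)⁻¹ * ∑ i, Y (ks i) - q) 2 P :=
    hZ.sub (memLp_const q)
  refine ⟨hZq.integrable_sq, ?_⟩
  have hmean : ∫ ks, ((N : ℝ)⁻¹ * ∑ i, Y (ks i) - q) ∂P = (∫ y, Y y ∂μ) - q := by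
    rw [integral_sub (hZ.integrable one_le_two) (integrable_const q), integral_const_mul,
      integral_finsetSum _ fun i _ => (hYi i).integrable one_le_two]
    have : ∀ i : Fin N, ∫ ks : Fin N → X, Y (ks i) ∂P = ∫ y, Y y ∂μ := fun i =>
      integral_comp_eval (μ := fun _ : Fin N => μ) (i := i) hY.aestronglyMeasurable
    simp only [this]
    simp [hN0]
  have hvar : Var[fun ks : Fin N → X => (N : ℝ)⁻¹ * ∑ i, Y (ks i) - q; P]
      = (N : ℝ)⁻¹ * Var[Y; μ] := by
    rw [variance_sub_const hZ.aestronglyMeasurable, variance_const_mul]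
    have := variance_sum_pi (μ := fun _ : Fin N => μ) (X := fun _ => Y) fun _ => hY
    have e : (∑ i, fun ks : Fin N → X => Y (ks i)) = fun ks => ∑ i, Y (ks i) := by
      ext ks; simp
    rw [e] at this
    rw [this]
    simp
    field_simp
  have h1 := variance_eq_sub hZq
  have h2 := variance_le_expectation_sq (μ := μ) (X := Y) hY.aestronglyMeasurable
  rw [hmean, hvar] at h1
  simp only [Pi.pow_apply] at h1 h2
  have h3 : (N : ℝ)⁻¹ * Var[Y; μ] ≤ (N : ℝ)⁻¹ * ∫ y, Y y ^ 2 ∂μ := by gcongr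
  linarith

/-- Tonelli in the form needed for the MISE: the order of integration is exchanged through `lintegral`,
so no joint integrability of `F` has to be known beforehand. -/
theorem integral_integral_le_of_slices {X Z : Type*} [MeasurableSpace X] [MeasurableSpace Z]
    (μ : Measure X) (ν : Measure Z) [SFinite μ] [SFinite ν] {F : X → Z → ℝ}
    (hF : Measurable (Function.uncurry F)) (hF0 : ∀ x z, 0 ≤ F x z) {b : Z → ℝ}
    (hFi : ∀ z, Integrable (fun x => F x z) μ) (hb : Integrable b ν)
    (hFb : ∀ z, ∫ x, F x z ∂μ ≤ b z) :
    ∫ x, ∫ z, F x z ∂ν ∂μ ≤ ∫ z, b z ∂ν := by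
  have hb0 : ∀ z, 0 ≤ b z := fun z => (integral_nonneg fun x => hF0 x z).trans (hFb z)
  have hsm : AEStronglyMeasurable (fun x => ∫ z, F x z ∂ν) μ :=
    (hF.stronglyMeasurable.integral_prod_right).aestronglyMeasurable
  rw [integral_eq_lintegral_of_nonneg_ae
    (Filter.Eventually.of_forall fun x => integral_nonneg fun z => hF0 x z) hsm]
  refine ENNReal.toReal_le_of_le_ofReal (integral_nonneg hb0) ?_
  calc ∫⁻ x, ENNReal.ofReal (∫ z, F x z ∂ν) ∂μ
      ≤ ∫⁻ x, ∫⁻ z, ENNReal.ofReal (F x z) ∂ν ∂μ := by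
        refine lintegral_mono fun x => ?_
        rw [integral_eq_lintegral_of_nonneg_ae (Filter.Eventually.of_forall (hF0 x))
          (hF.comp measurable_prodMk_left).aestronglyMeasurable]
        exact ENNReal.ofReal_toReal_le
    _ = ∫⁻ z, ∫⁻ x, ENNReal.ofReal (F x z) ∂μ ∂ν :=
        lintegral_lintegral_swap hF.ennreal_ofReal.aemeasurable
    _ ≤ ∫⁻ z, ENNReal.ofReal (b z) ∂ν := by
        refine lintegral_mono fun z => ?_
        rw [← ofReal_integral_eq_lintegral_ofReal (hFi z)
          (Filter.Eventually.of_forall fun x => hF0 x z)]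
        exact ENNReal.ofReal_le_ofReal (hFb z)
    _ = ENNReal.ofReal (∫ z, b z ∂ν) :=
        (ofReal_integral_eq_lintegral_ofReal hb (Filter.Eventually.of_forall hb0)).symm

theorem pEst_eq (D N : ℕ) (R : ℝ) (ks : Fin N → Fin D → ℝ) (k : Fin D → ℝ) :
    pEst D N (fun z => z ^ 2) fejerConst R ks k
      = (N : ℝ)⁻¹ * ∑ i, fejerKernel D R (k - ks i) := by
  unfold pEst fejerKernel fejer
  simp only [Finset.prod_mul_distrib, Finset.prod_const, Finset.card_univ, Fintype.card_fin,
    Pi.sub_apply, ← Finset.mul_sum]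
  rw [div_pow, ← mul_assoc]
  congr 1
  rw [div_eq_mul_inv, mul_inv, div_eq_mul_inv]
  ring

/-- MISE bound for the Fejér-type density estimator (`φ(z) = z²`,
`A = ∫ (sin z / z)² dz`) when the density is ordinary smooth of order `β > 3`. -/
theorem mise_bound_fejer_ordinary_smooth
    (D : ℕ) (hD : 0 < D)
    (p : (Fin D → ℝ) → ℝ)
    (hp_meas : Measurable p) (hp_nonneg : ∀ x, 0 ≤ p x)
    (hp_int : Integrable p) (hp_sq : Integrable (fun x => p x ^ 2))
    (hp_one : ∫ x : Fin D → ℝ, p x = 1)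
    (β c : ℝ) (hβ : 3 < β) (hc : 0 < c)
    (hordinary : ∀ᵐ x : Fin D → ℝ,
      ‖charFun D p x‖ ≤ c * ∏ j : Fin D, 1 / (1 + |x j| ^ β)) :
    ∃ c' : ℝ, 0 < c' ∧
      ∀ R : ℝ, 0 < R → ∀ N : ℕ, 1 ≤ N →
        MISE D N (fun z => z ^ 2) (∫ z : ℝ, sincLike z ^ 2) R p
          ≤ c' * (1 / R ^ 2 + R ^ D / N) := by
  set C : ℝ := |((2 * π) ^ D)⁻¹| * ((c * D) ^ 2 * ∫ t, majorant D t ^ 2) with hC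
  have hC0 : 0 ≤ C := by
    have : 0 ≤ ∫ t, majorant D t ^ 2 := integral_nonneg fun t => sq_nonneg _
    positivity
  have hA := fejerConst_pos
  -- `C` bounds the bias term, and `(1 / A) ^ D` comes from `∫ K_R² ≤ (R / A) ^ D` in the variance.
  refine ⟨C + (1 / fejerConst) ^ D, by positivity, fun R hR N hN => ?_⟩
  have hpm : Measurable fun x => ENNReal.ofReal (p x) := hp_meas.ennreal_ofReal
  have hprob : IsProbabilityMeasure
      ((volume : Measure (Fin D → ℝ)).withDensity fun x => ENNReal.ofReal (p x)) := by
    refine ⟨?_⟩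
    rw [withDensity_apply _ MeasurableSet.univ, Measure.restrict_univ,
      ← ofReal_integral_eq_lintegral_ofReal hp_int (Filter.Eventually.of_forall hp_nonneg),
      hp_one, ENNReal.ofReal_one]
  have hwd : ∀ g : (Fin D → ℝ) → ℝ,
      ∫ y, g y ∂((volume : Measure (Fin D → ℝ)).withDensity fun x => ENNReal.ofReal (p x))
        = ∫ y, p y * g y := by
    intro g
    rw [integral_withDensity_eq_integral_toReal_smul hpm (by simp)]
    simp only [ENNReal.toReal_ofReal (hp_nonneg _), smul_eq_mul]
  have hKc := continuous_fejerKernel D R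
  have hK2 := integrable_fejerKernel_sq D hR
  have hv := (integrable_smoothed D hp_int hK2).const_mul (N : ℝ)⁻¹
  obtain ⟨hbi, hbb⟩ := bias_bound D hp_int hβ hc hordinary hR
  have hmse := fun k : Fin D → ℝ =>
    mse_bound ((volume : Measure (Fin D → ℝ)).withDensity fun x => ENNReal.ofReal (p x))
      (Y := fun y => fejerKernel D R (k - y))
      (MemLp.of_bound (Continuous.aestronglyMeasurable (by fun_prop)) ((R / fejerConst) ^ D)
        (Filter.Eventually.of_forall fun y => by
          rw [Real.norm_of_nonneg (fejerKernel_nonneg D hR _)]; exact fejerKernel_le D hR _))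
      (p k) hN
  simp only [hwd] at hmse
  change MISE D N (fun z => z ^ 2) fejerConst R p ≤ _
  unfold MISE sampleMeasure
  simp only [pEst_eq]
  calc _ ≤ ∫ k, ((N : ℝ)⁻¹ * (∫ y, p y * fejerKernel D R (k - y) ^ 2) +
        ((∫ y, p y * fejerKernel D R (k - y)) - p k) ^ 2) := by
        refine integral_integral_le_of_slices _ _ ?_ (fun _ _ => sq_nonneg _)
          (fun k => (hmse k).1) (hv.add hbi) (fun k => (hmse k).2)
        refine Measurable.pow_const (Measurable.sub ?_ (hp_meas.comp measurable_snd)) 2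
        exact Continuous.measurable (by fun_prop)
    _ = (N : ℝ)⁻¹ * (∫ k, fejerKernel D R k ^ 2) +
        ∫ k, ((∫ y, p y * fejerKernel D R (k - y)) - p k) ^ 2 := by
        rw [integral_add hv hbi, integral_const_mul,
          integral_smoothed D (K := fun x => fejerKernel D R x ^ 2) hp_int hK2, hp_one, one_mul]
    _ ≤ (N : ℝ)⁻¹ * (R / fejerConst) ^ D + C * (1 / R ^ 2) := by
        gcongr
        exact integral_fejerKernel_sq_le D hR
    _ = C * (1 / R ^ 2) + (1 / fejerConst) ^ D * (R ^ D / N) := by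
        rw [div_pow, div_pow]; ring
    _ ≤ (C + (1 / fejerConst) ^ D) * (1 / R ^ 2 + R ^ D / N) := by
        have h1 : 0 ≤ C * (R ^ D / N) := by positivity
        have h2 : 0 ≤ (1 / fejerConst) ^ D * (1 / R ^ 2) := by positivity
        linarith
end

section
/- Let m ∈ ℕ and let φ: ℝ → ℝ satisfy ∫_ℝ φ(sin z / z) z^j dz = 0 for all j ∈ {1,…,m}, ∫_ℝ |φ(sin z / z)| |z|^{m+1} dz < ∞ and A := ∫_ℝ φ(sin z / z) dz ≠ 0. Let p be a density on ℝ^D of class C^{m+1} with all partial derivatives of order m+1 uniformly bounded. Then there exists a constant C (depending on D, A, φ and sup-norms of the (m+1)-st derivatives of p) such that for all R > 0 and all k ∈ ℝ^D, |E[p_{N,R}^φ(k)] − p(k)| ≤ C / R^{m+1}. -/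
/-!
Write `ψ z = φ (sin z / z)`. By linearity and the substitution `z = R (k - y)`, the expectation is
`A⁻ᴰ ∫ ∏ ψ (z_l) p (k - z / R) dz` (`expectation_pEst`, `kernel_rescale`). Expand `p` at `k` to order
`m` (`taylor_bound`). The constant term contributes exactly `p k`, as `∫ ∏ ψ (z_l) dz = Aᴰ`. The terms
of degree `1, …, m` integrate to zero (`integral_kernel_mul_multilinear`): after expansion into
monomials the integral factors over the coordinates, and some factor is a vanishing moment of `ψ`.
The remainder is at most `Md / m! * ‖z‖ ^ (m + 1) / R ^ (m + 1)`, which is integrable against the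
absolute value of the kernel (`integrable_kernel_mul_norm_pow`); see `kernel_bias`.
-/

open MeasureTheory Real Finset

/-- Multivariate Taylor estimate, from the one-variable one along `t ↦ p (k + t • h)`. The constant
`1 / m!` rather than `1 / (m + 1)!` comes from the one-variable bound used. -/
theorem taylor_bound {E : Type*} [NormedAddCommGroup E] [NormedSpace ℝ E] (m : ℕ)
    (p : E → ℝ) (hp : ContDiff ℝ (m + 1) p)
    (Md : ℝ) (hMd : ∀ x, ‖iteratedFDeriv ℝ (m + 1) p x‖ ≤ Md) (k h : E) :
    |p (k + h) - ∑ j ∈ range (m + 1),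
      (j.factorial : ℝ)⁻¹ * iteratedFDeriv ℝ j p k (fun _ => h)| ≤
      Md / m.factorial * ‖h‖ ^ (m + 1) := by
  let L : ℝ →L[ℝ] E := ContinuousLinearMap.toSpanSingleton ℝ h
  let g : ℝ → ℝ := (fun x => p (k + x)) ∘ L
  have hq : ContDiff ℝ (m + 1) (fun x => p (k + x)) := hp.comp (contDiff_const.add contDiff_id)
  have hg : ContDiff ℝ (m + 1) g := hq.comp L.contDiff
  have hder : ∀ j : ℕ, j ≤ m + 1 → ∀ t ∈ Set.Icc (0 : ℝ) 1,
      iteratedDerivWithin j g (Set.Icc 0 1) t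
        = iteratedFDeriv ℝ j p (k + t • h) (fun _ => h) := by
    intro j hj t ht
    rw [iteratedDerivWithin_eq_iteratedDeriv (uniqueDiffOn_Icc zero_lt_one)
      (hg.contDiffAt.of_le (by exact_mod_cast hj)) ht, iteratedDeriv_eq_iteratedFDeriv,
      L.iteratedFDeriv_comp_right hq t (by exact_mod_cast hj), iteratedFDeriv_comp_add_left]
    simp [L]
  have := taylor_mean_remainder_bound (f := g) (n := m) (C := Md * ‖h‖ ^ (m + 1)) (x := 1)
    zero_le_one (hg.contDiffOn) (by simp) (by
      intro y hy
      rw [hder _ le_rfl y hy]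
      refine (ContinuousMultilinearMap.le_opNorm _ _).trans ?_
      simp only [prod_const, card_univ, Fintype.card_fin]
      gcongr
      exact hMd _)
  rw [taylor_within_apply, Real.norm_eq_abs] at this
  convert this using 1
  · congr 2
    · simp [g, L]
    · refine Finset.sum_congr rfl fun j hj => ?_
      rw [hder j (by have := mem_range.1 hj; omega) 0 (by simp)]
      simp
  · simp; ring

theorem integrable_moment {ψ : ℝ → ℝ} {n j : ℕ} (hψ : Integrable ψ)
    (habs : Integrable fun z => |ψ z| * |z| ^ n) (hj : j ≤ n) :
    Integrable fun z => ψ z * z ^ j := by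
  refine (hψ.norm.add habs).mono'
    (hψ.aestronglyMeasurable.mul (by fun_prop)) (.of_forall fun z => ?_)
  have h : |z| ^ j ≤ 1 + |z| ^ n := by
    rcases le_total |z| 1 with h | h
    · exact (pow_le_one₀ (abs_nonneg z) h).trans (le_add_of_nonneg_right (by positivity))
    · exact (pow_le_pow_right₀ h hj).trans (le_add_of_nonneg_left zero_le_one)
  simp only [norm_mul, norm_pow, Real.norm_eq_abs, Pi.add_apply]
  nlinarith [mul_le_mul_of_nonneg_left h (abs_nonneg (ψ z))]

theorem kernel_mul_monomial {D j : ℕ} (ψ : ℝ → ℝ) (f : Fin j → Fin D) (z : Fin D → ℝ) :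
    (∏ l, ψ (z l)) * ∏ i, z (f i) = ∏ l, (ψ (z l) * z l ^ #{i | f i = l}) := by
  rw [prod_mul_distrib, ← prod_fiberwise' univ f z]
  simp

/-- Expanding `T z … z` in the standard basis turns the product kernel times a homogeneous
polynomial into a combination of products of one-variable moment integrands. -/
theorem kernel_mul_multilinear {D j : ℕ} (ψ : ℝ → ℝ)
    (T : ContinuousMultilinearMap ℝ (fun _ : Fin j => Fin D → ℝ) ℝ) (z : Fin D → ℝ) :
    (∏ l, ψ (z l)) * T (fun _ => z) =
      ∑ f : Fin j → Fin D, (∏ l, (ψ (z l) * z l ^ #{i | f i = l})) *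
        T (fun i => Pi.single (f i) 1) := by
  have h : T (fun _ => z) = T (fun _ => ∑ l, z l • (Pi.single l (1 : ℝ) : Fin D → ℝ)) := by
    congr 1
    funext _
    exact pi_eq_sum_univ' z
  rw [h, T.map_sum, mul_sum]
  refine sum_congr rfl fun f _ => ?_
  rw [T.map_smul_univ, ← kernel_mul_monomial, smul_eq_mul, mul_assoc]

theorem integrable_kernel_mul_multilinear {D j n : ℕ} {ψ : ℝ → ℝ} (hψ : Integrable ψ)
    (habs : Integrable fun z => |ψ z| * |z| ^ n) (hj : j ≤ n)
    (T : ContinuousMultilinearMap ℝ (fun _ : Fin j => Fin D → ℝ) ℝ) :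
    Integrable fun z : Fin D → ℝ => (∏ l, ψ (z l)) * T (fun _ => z) := by
  simp_rw [kernel_mul_multilinear]
  refine integrable_finsetSum _ fun f _ => Integrable.mul_const ?_ _
  refine Integrable.fintype_prod (f := fun l x => ψ x * x ^ #{i | f i = l})
    fun l => integrable_moment hψ habs (le_trans ?_ hj)
  simpa using card_filter_le (univ : Finset (Fin j)) (fun i => f i = l)

/-- The product kernel annihilates homogeneous polynomials of degree `1, …, m`: in each monomial
some coordinate occurs with an exponent between `1` and `m`, and the corresponding one-dimensional
moment vanishes. -/
theorem integral_kernel_mul_multilinear {D j m : ℕ} {ψ : ℝ → ℝ} (hψ : Integrable ψ)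
    (habs : Integrable fun z => |ψ z| * |z| ^ (m + 1))
    (hmom : ∀ j : ℕ, 1 ≤ j → j ≤ m → ∫ z : ℝ, ψ z * z ^ j = 0) (hj1 : 1 ≤ j) (hj : j ≤ m)
    (T : ContinuousMultilinearMap ℝ (fun _ : Fin j => Fin D → ℝ) ℝ) :
    ∫ z : Fin D → ℝ, (∏ l, ψ (z l)) * T (fun _ => z) = 0 := by
  have hcard (f : Fin j → Fin D) (l : Fin D) : #{i | f i = l} ≤ m :=
    le_trans (by simpa using card_filter_le (univ : Finset (Fin j)) (fun i => f i = l)) hj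
  have hint (f : Fin j → Fin D) :
      Integrable fun z : Fin D → ℝ => ∏ l, (ψ (z l) * z l ^ #{i | f i = l}) :=
    Integrable.fintype_prod (f := fun l x => ψ x * x ^ #{i | f i = l})
      fun l => integrable_moment hψ habs ((hcard f l).trans m.le_succ)
  simp_rw [kernel_mul_multilinear]
  rw [integral_finsetSum _ fun f _ => (hint f).mul_const _]
  refine sum_eq_zero fun f _ => ?_
  rw [integral_mul_const,
    integral_fintype_prod_volume_eq_prod (fun l x => ψ x * x ^ #{i | f i = l})]
  -- The coordinate hit by the first index occurs with an exponent between `1` and `m`.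
  obtain ⟨i₀⟩ : Nonempty (Fin j) := Fin.pos_iff_nonempty.1 hj1
  have hpos : 1 ≤ #{i | f i = f i₀} := card_pos.2 ⟨i₀, by simp⟩
  rw [prod_eq_zero (mem_univ (f i₀)) (hmom _ hpos (hcard f _)), zero_mul]

/-- Here `‖z‖` is the sup norm, so `‖z‖ ^ n ≤ 1 + ∑ i, |z i| ^ n`; the summand `1` covers the
empty index set. -/
theorem integrable_kernel_mul_norm_pow {D n : ℕ} {ψ : ℝ → ℝ} (hψ : Integrable ψ)
    (habs : Integrable fun z => |ψ z| * |z| ^ n) :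
    Integrable fun z : Fin D → ℝ => (∏ l, |ψ (z l)|) * ‖z‖ ^ n := by
  have hint : Integrable fun z : Fin D → ℝ =>
      (∏ l, |ψ (z l)|) + ∑ i, ∏ l, (|ψ (z l)| * if l = i then |z l| ^ n else 1) := by
    refine (Integrable.fintype_prod (f := fun _ x => |ψ x|) fun _ => hψ.abs).add
      (integrable_finsetSum _ fun i _ => ?_)
    refine Integrable.fintype_prod
      (f := fun l x => |ψ x| * if l = i then |x| ^ n else 1) fun l => ?_
    by_cases h : l = i
    · simpa [h] using habs
    · simpa [h] using hψ.abs
  refine hint.mono' ((Integrable.fintype_prod (f := fun _ x => |ψ x|)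
    fun _ => hψ.abs).aestronglyMeasurable.mul (by fun_prop)) (.of_forall fun z => ?_)
  have hK : 0 ≤ ∏ l, |ψ (z l)| := prod_nonneg fun _ _ => abs_nonneg _
  rw [Real.norm_of_nonneg (by positivity)]
  simp_rw [prod_mul_distrib, prod_ite_eq' univ, mem_univ, if_true]
  rw [← mul_sum, ← mul_one_add]
  refine mul_le_mul_of_nonneg_left ?_ hK
  have hs : 0 ≤ ∑ i, |z i| ^ n := sum_nonneg fun _ _ => by positivity
  rcases isEmpty_or_nonempty (Fin D) with h | h
  · have : ‖z‖ ≤ 1 := by simp [Subsingleton.elim z 0]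
    have := pow_le_one₀ (n := n) (norm_nonneg z) this
    linarith
  · obtain ⟨i, hi⟩ : ∃ i, ‖z‖ ≤ |z i| := by
      by_contra! hlt
      exact lt_irrefl _
        ((pi_norm_lt_iff ((abs_nonneg _).trans_lt (hlt (Classical.arbitrary _)))).2 hlt)
    have hpow : ‖z‖ ^ n ≤ |z i| ^ n := pow_le_pow_left₀ (norm_nonneg z) hi n
    have := single_le_sum (f := fun i => |z i| ^ n) (fun _ _ => by positivity) (mem_univ i)
    linarith

/-- The bias estimate after rescaling, for an arbitrary one-dimensional kernel `ψ` not normalised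
to have integral `1`. Integrability is part of the conclusion: the Taylor expansion bounds `p` by a
polynomial of degree `m + 1`, which the kernel integrates. -/
theorem kernel_bias {D m : ℕ} {ψ : ℝ → ℝ} (hψ : Integrable ψ)
    (habs : Integrable fun z => |ψ z| * |z| ^ (m + 1))
    (hmom : ∀ j : ℕ, 1 ≤ j → j ≤ m → ∫ z : ℝ, ψ z * z ^ j = 0)
    (p : (Fin D → ℝ) → ℝ) (hp : ContDiff ℝ (m + 1) p)
    (Md : ℝ) (hMd : ∀ x, ‖iteratedFDeriv ℝ (m + 1) p x‖ ≤ Md) (R : ℝ) (hR : 0 < R)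
    (k : Fin D → ℝ) :
    Integrable (fun z : Fin D → ℝ => (∏ l, ψ (z l)) * p (k - R⁻¹ • z)) ∧
    |(∫ z : Fin D → ℝ, (∏ l, ψ (z l)) * p (k - R⁻¹ • z)) - (∫ z, ψ z) ^ D * p k| ≤
      Md / m.factorial * (∫ z : Fin D → ℝ, (∏ l, |ψ (z l)|) * ‖z‖ ^ (m + 1)) / R ^ (m + 1) := by
  have hψD : Integrable fun z : Fin D → ℝ => ∏ l, ψ (z l) :=
    Integrable.fintype_prod (f := fun _ x => ψ x) fun _ => hψ
  -- The Taylor polynomial of degree `m` at `k`, in the increment `-z / R`.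
  let P (z : Fin D → ℝ) : ℝ := ∑ j ∈ range (m + 1),
    (j.factorial : ℝ)⁻¹ * iteratedFDeriv ℝ j p k (fun _ => -(R⁻¹ • z))
  have hKP (z : Fin D → ℝ) : (∏ l, ψ (z l)) * P z = ∑ j ∈ range (m + 1),
      ((j.factorial : ℝ)⁻¹ * (-R⁻¹) ^ j) *
        ((∏ l, ψ (z l)) * iteratedFDeriv ℝ j p k (fun _ => z)) := by
    simp only [P, mul_sum]
    refine sum_congr rfl fun j _ => ?_
    simp_rw [← neg_smul]
    rw [(iteratedFDeriv ℝ j p k).map_smul_univ (fun _ => -R⁻¹) (fun _ => z)]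
    simp only [prod_const, card_univ, Fintype.card_fin, smul_eq_mul]
    ring
  have hterm (j) (hj : j ∈ range (m + 1)) : Integrable fun z : Fin D → ℝ =>
      ((j.factorial : ℝ)⁻¹ * (-R⁻¹) ^ j) *
        ((∏ l, ψ (z l)) * iteratedFDeriv ℝ j p k (fun _ => z)) :=
    (integrable_kernel_mul_multilinear hψ habs (mem_range.1 hj).le _).const_mul _
  have hPint : Integrable fun z : Fin D → ℝ => (∏ l, ψ (z l)) * P z := by
    simp_rw [hKP]
    exact integrable_finsetSum _ hterm
  have hPval : ∫ z : Fin D → ℝ, (∏ l, ψ (z l)) * P z = (∫ z, ψ z) ^ D * p k := by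
    simp_rw [hKP]
    rw [integral_finsetSum _ hterm, sum_eq_single 0]
    · simp only [iteratedFDeriv_zero_apply]
      rw [integral_const_mul, integral_mul_const, integral_fintype_prod_volume_eq_pow]
      simp
    · intro j hj hj0
      rw [integral_const_mul, integral_kernel_mul_multilinear hψ habs hmom (by omega)
        (by have := mem_range.1 hj; omega), mul_zero]
    · simp
  have hbd (z : Fin D → ℝ) : ‖(∏ l, ψ (z l)) * (p (k - R⁻¹ • z) - P z)‖ ≤
      Md / m.factorial / R ^ (m + 1) * ((∏ l, |ψ (z l)|) * ‖z‖ ^ (m + 1)) := by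
    have h := taylor_bound m p hp Md hMd k (-(R⁻¹ • z))
    rw [← sub_eq_add_neg, norm_neg, norm_smul, norm_inv, Real.norm_of_nonneg hR.le, mul_pow,
      inv_pow] at h
    rw [norm_mul, Real.norm_eq_abs, Real.norm_eq_abs, abs_prod]
    refine (mul_le_mul_of_nonneg_left h (prod_nonneg fun _ _ => abs_nonneg _)).trans_eq ?_
    rw [div_eq_mul_inv _ (R ^ (m + 1))]
    ring
  have hdom := (integrable_kernel_mul_norm_pow (D := D) hψ habs).const_mul
    (Md / m.factorial / R ^ (m + 1))
  have hpc : Continuous p := hp.continuous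
  have hPc : Continuous P := by
    refine continuous_finsetSum _ fun j _ => continuous_const.mul ?_
    exact (iteratedFDeriv ℝ j p k).cont.comp (by fun_prop)
  have hrem : Integrable fun z : Fin D → ℝ => (∏ l, ψ (z l)) * (p (k - R⁻¹ • z) - P z) :=
    hdom.mono' (hψD.aestronglyMeasurable.mul
      (Continuous.aestronglyMeasurable (by fun_prop))) (.of_forall hbd)
  have hint : Integrable fun z : Fin D → ℝ => (∏ l, ψ (z l)) * p (k - R⁻¹ • z) := by
    refine (hrem.add hPint).congr (.of_forall fun z => ?_)
    simp only [Pi.add_apply]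
    ring
  refine ⟨hint, ?_⟩
  rw [← hPval, ← integral_sub hint hPint]
  simp_rw [← mul_sub]
  refine (norm_integral_le_of_norm_le hdom (.of_forall hbd)).trans_eq ?_
  rw [integral_const_mul]
  ring

/-- The substitution `z = R (k - y)`. -/
theorem kernel_rescale {D : ℕ} (K p : (Fin D → ℝ) → ℝ) {R : ℝ} (hR : 0 < R) (k : Fin D → ℝ) :
    (Integrable (fun z => K z * p (k - R⁻¹ • z)) →
      Integrable (fun y => p y * K (R • (k - y)))) ∧
    ∫ z, K z * p (k - R⁻¹ • z) = R ^ D * ∫ y, p y * K (R • (k - y)) := by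
  have hc (y) : p y * K (R • (k - y)) =
      (fun x => (fun z => K z * p (k - R⁻¹ • z)) (R • x)) (k - y) := by
    simp [smul_smul, inv_mul_cancel₀ hR.ne', mul_comm]
  simp_rw [hc]
  constructor
  · intro h
    exact (h.comp_smul hR.ne').comp_sub_left k
  · rw [integral_sub_left_eq_self (fun x => (fun z => K z * p (k - R⁻¹ • z)) (R • x)) volume k,
      Measure.integral_comp_smul_of_nonneg volume (fun z => K z * p (k - R⁻¹ • z)) R (hR := hR.le)]
    simp [ne_of_gt hR]

/-- By linearity, and since each sample point has law `p`, the expectation does not depend on the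
sample size and equals a convolution integral. -/
theorem expectation_pEst {D N : ℕ} (hN : 1 ≤ N) (φ : ℝ → ℝ) (A R : ℝ)
    (p : (Fin D → ℝ) → ℝ) (hp_meas : Measurable p) (hp_nonneg : ∀ x, 0 ≤ p x)
    (hp_int : Integrable p) (hp_one : ∫ x : Fin D → ℝ, p x = 1) (k : Fin D → ℝ)
    (hint : Integrable fun y => p y * ∏ j, φ (sincLike (R * (k j - y j)))) :
    ∫ ks, pEst D N φ A R ks k ∂(sampleMeasure D N p) =
      R ^ D / A ^ D * ∫ y, p y * ∏ j, φ (sincLike (R * (k j - y j))) := by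
  let F (y : Fin D → ℝ) : ℝ := ∏ j, φ (sincLike (R * (k j - y j)))
  let μ : Measure (Fin D → ℝ) := volume.withDensity fun x => ENNReal.ofReal (p x)
  have hd : Measurable fun x => ENNReal.ofReal (p x) := hp_meas.ennreal_ofReal
  have : IsProbabilityMeasure μ := by
    constructor
    rw [withDensity_apply _ .univ, Measure.restrict_univ,
      ← ofReal_integral_eq_lintegral_ofReal hp_int (.of_forall hp_nonneg), hp_one,
      ENNReal.ofReal_one]
  have hFint : Integrable F μ := by
    rw [integrable_withDensity_iff_integrable_smul' hd (.of_forall fun _ => ENNReal.ofReal_lt_top)]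
    simpa [F, ENNReal.toReal_ofReal (hp_nonneg _)] using hint
  have hFval : ∫ y, F y ∂μ = ∫ y, p y * F y := by
    rw [integral_withDensity_eq_integral_toReal_smul hd
      (.of_forall fun _ => ENNReal.ofReal_lt_top)]
    simp [ENNReal.toReal_ofReal (hp_nonneg _)]
  have hmp (i : Fin N) := measurePreserving_eval (fun _ : Fin N => μ) i
  have hi (i : Fin N) : ∫ ks, F (ks i) ∂(Measure.pi fun _ : Fin N => μ) = ∫ y, F y ∂μ := by
    conv_rhs => rw [← (hmp i).map_eq]
    rw [integral_map (hmp i).aemeasurable]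
    rw [(hmp i).map_eq]
    exact hFint.aestronglyMeasurable
  have hi' (i : Fin N) : Integrable (fun ks => F (ks i)) (Measure.pi fun _ : Fin N => μ) :=
    (hmp i).integrable_comp_of_integrable hFint
  change ∫ ks, R ^ D / (N * A ^ D) * ∑ i : Fin N, F (ks i) ∂(Measure.pi fun _ : Fin N => μ) =
    R ^ D / A ^ D * ∫ y, p y * F y
  rw [integral_const_mul, integral_finsetSum _ fun i _ => hi' i]
  simp_rw [hi, hFval]
  have : (N : ℝ) ≠ 0 := by positivity
  simp only [sum_const, card_univ, Fintype.card_fin, nsmul_eq_mul]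
  rw [← mul_assoc]
  congr 1
  rw [mul_comm (N : ℝ), ← div_div, div_mul_cancel₀ _ this]

/-- bias bound for the generalized Fourier density estimator:
`|E[p_{N,R}^φ(k)] − p(k)| ≤ C / R^{m+1}`. -/
theorem bias_bound_generalized_fourier_estimator
    (D m : ℕ) (hD : 0 < D)
    (φ : ℝ → ℝ) (hφ_meas : Measurable φ)
    (A : ℝ) (hA_int : Integrable (fun z : ℝ => φ (sincLike z)))
    (hA_def : A = ∫ z : ℝ, φ (sincLike z)) (hA_ne : A ≠ 0)
    (hmom : ∀ j : ℕ, 1 ≤ j → j ≤ m → ∫ z : ℝ, φ (sincLike z) * z ^ j = 0)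
    (habs : Integrable (fun z : ℝ => |φ (sincLike z)| * |z| ^ (m + 1)))
    (p : (Fin D → ℝ) → ℝ)
    (hp_meas : Measurable p) (hp_nonneg : ∀ x, 0 ≤ p x)
    (hp_int : Integrable p) (hp_one : ∫ x : Fin D → ℝ, p x = 1)
    (hp_smooth : ContDiff ℝ (m + 1) p)
    (Md : ℝ) (hp_deriv : ∀ x, ‖iteratedFDeriv ℝ (m + 1) p x‖ ≤ Md) :
    ∃ C : ℝ, 0 < C ∧
      ∀ R : ℝ, 0 < R → ∀ N : ℕ, 1 ≤ N → ∀ k : Fin D → ℝ,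
        |(∫ ks : Fin N → Fin D → ℝ, pEst D N φ A R ks k ∂(sampleMeasure D N p)) - p k|
          ≤ C / R ^ (m + 1) := by
  set ψ : ℝ → ℝ := fun z => φ (sincLike z) with hψ
  have hMd : 0 ≤ Md := (norm_nonneg _).trans (hp_deriv 0)
  set B : ℝ := ∫ z : Fin D → ℝ, (∏ l, |ψ (z l)|) * ‖z‖ ^ (m + 1) with hB
  have hB0 : 0 ≤ B := integral_nonneg fun z =>
    mul_nonneg (prod_nonneg fun _ _ => abs_nonneg _) (by positivity)
  have hAD : 0 < |A| ^ D := by positivity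
  -- The summand `1` makes the constant positive even for `Md = 0`.
  refine ⟨Md / m.factorial * B / |A| ^ D + 1, by positivity, fun R hR N hN k => ?_⟩
  obtain ⟨hint, hbias⟩ := kernel_bias hA_int habs hmom p hp_smooth Md hp_deriv R hR k
  obtain ⟨hresc, hval⟩ := kernel_rescale (fun z => ∏ l, ψ (z l)) p hR k
  have hE := expectation_pEst hN φ A R p hp_meas hp_nonneg hp_int hp_one k (hresc hint)
  have hE' : ∫ ks, pEst D N φ A R ks k ∂(sampleMeasure D N p) =
      (∫ z : Fin D → ℝ, (∏ l, ψ (z l)) * p (k - R⁻¹ • z)) / A ^ D := by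
    rw [hE, hval, div_mul_eq_mul_div]
    rfl
  rw [← hA_def] at hbias
  have hADne : A ^ D ≠ 0 := pow_ne_zero _ hA_ne
  rw [hE', div_sub' hADne, abs_div, abs_pow, div_le_iff₀ hAD]
  refine hbias.trans ?_
  rw [div_mul_eq_mul_div _ (R ^ (m + 1))]
  refine div_le_div_of_nonneg_right ?_ (by positivity)
  rw [add_mul, div_mul_cancel₀ _ hAD.ne']
  linarith
end

section
/- Let φ: ℝ → ℝ with ∫_ℝ φ²(sin z / z) dz < ∞ and A := ∫_ℝ φ(sin z / z) dz ≠ 0, and let p be a bounded density on ℝ^D. Then there exists a constant C' (depending on D, A and ∫_ℝ φ²(sin z / z) dz and ‖p‖_∞) such that for all R > 0, N ≥ 1 and k ∈ ℝ^D, Var[p_{N,R}^φ(k)] ≤ C' R^D / N. -/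
/-!
The estimator is a constant times a sum of `N` i.i.d. copies of the kernel product
`g x = ∏ j, φ (sincLike (R * (k j - x j)))`, so its variance is
`(R ^ D / (N * A ^ D)) ^ 2 * N * Var g`. The variance of `g` is at most its second moment, which is
at most `Mp * ∫ g ^ 2` because the density is bounded by `Mp`. By Fubini and the substitution
`z = R * (k j - x j)` in each coordinate, `∫ g ^ 2 = (B / R) ^ D` with
`B = ∫ φ (sincLike z) ^ 2` (`integral_kernel_sq`). Altogether
`Var ≤ Mp * B ^ D / A ^ (2 * D) * R ^ D / N`.
-/

open MeasureTheory Real Finset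

open ProbabilityTheory

lemma measurable_sincLike : Measurable sincLike :=
  Measurable.ite (measurableSet_singleton 0) measurable_const
    (Real.measurable_sin.div measurable_id)

lemma measurable_kernel {D : ℕ} {φ : ℝ → ℝ} (hφ : Measurable φ) (R : ℝ) (k : Fin D → ℝ) :
    Measurable fun x : Fin D → ℝ => ∏ j, φ (sincLike (R * (k j - x j))) := by
  have := measurable_sincLike
  fun_prop

lemma integrable_kernel_sq {D : ℕ} {φ : ℝ → ℝ}
    (hφ2 : Integrable (fun z : ℝ => φ (sincLike z) ^ 2)) {R : ℝ} (hR : 0 < R) (k : Fin D → ℝ) :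
    Integrable fun x : Fin D → ℝ => (∏ j, φ (sincLike (R * (k j - x j)))) ^ 2 := by
  simp_rw [← Finset.prod_pow]
  exact Integrable.fintype_prod (f := fun j t => φ (sincLike (R * (k j - t))) ^ 2)
    fun j => (hφ2.comp_mul_left' hR.ne').comp_sub_left (k j)

lemma integral_kernel_sq {D : ℕ} (φ : ℝ → ℝ) {R : ℝ} (hR : 0 < R) (k : Fin D → ℝ) :
    ∫ x : Fin D → ℝ, (∏ j, φ (sincLike (R * (k j - x j)))) ^ 2
      = ((∫ z : ℝ, φ (sincLike z) ^ 2) / R) ^ D := by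
  simp_rw [← Finset.prod_pow]
  rw [integral_fintype_prod_volume_eq_prod (fun j t => φ (sincLike (R * (k j - t))) ^ 2)]
  have h : ∀ j : Fin D, ∫ t : ℝ, φ (sincLike (R * (k j - t))) ^ 2
      = (∫ z : ℝ, φ (sincLike z) ^ 2) / R := by
    intro j
    rw [integral_sub_left_eq_self (fun t => φ (sincLike (R * t)) ^ 2) volume (k j),
      Measure.integral_comp_mul_left (fun z => φ (sincLike z) ^ 2) R,
      abs_of_pos (inv_pos.2 hR), smul_eq_mul]
    ring
  simp [h, div_pow]

/-- variance bound for the generalized Fourier density estimator: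
`Var[p_{N,R}^φ(k)] ≤ C' R^D / N`. -/
theorem variance_bound_generalized_fourier_estimator
    (D : ℕ) (hD : 0 < D)
    (φ : ℝ → ℝ) (hφ_meas : Measurable φ)
    (A : ℝ) (hA_int : Integrable (fun z : ℝ => φ (sincLike z)))
    (hA_def : A = ∫ z : ℝ, φ (sincLike z)) (hA_ne : A ≠ 0)
    (hφ2 : Integrable (fun z : ℝ => φ (sincLike z) ^ 2))
    (p : (Fin D → ℝ) → ℝ)
    (hp_meas : Measurable p) (hp_nonneg : ∀ x, 0 ≤ p x)
    (hp_int : Integrable p) (hp_one : ∫ x : Fin D → ℝ, p x = 1)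
    (Mp : ℝ) (hp_bdd : ∀ x, p x ≤ Mp) :
    ∃ C' : ℝ, 0 < C' ∧
      ∀ R : ℝ, 0 < R → ∀ N : ℕ, 1 ≤ N → ∀ k : Fin D → ℝ,
        (∫ ks : Fin N → Fin D → ℝ,
            (pEst D N φ A R ks k -
              ∫ ks' : Fin N → Fin D → ℝ, pEst D N φ A R ks' k ∂(sampleMeasure D N p)) ^ 2
          ∂(sampleMeasure D N p))
          ≤ C' * R ^ D / N := by
  set B : ℝ := ∫ z : ℝ, φ (sincLike z) ^ 2 with hB
  have hB0 : 0 ≤ B := integral_nonneg fun z => sq_nonneg _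
  have hMp : 0 ≤ Mp := (hp_nonneg 0).trans (hp_bdd 0)
  -- Adding `1` makes the constant positive without having to show `0 < B` and `0 < Mp`.
  refine ⟨Mp * B ^ D / (A ^ D) ^ 2 + 1, by positivity, fun R hR N hN k => ?_⟩
  set μ : Measure (Fin D → ℝ) := volume.withDensity fun x => ENNReal.ofReal (p x) with hμ
  have hprob : IsProbabilityMeasure μ := ⟨by
    rw [hμ, withDensity_apply _ MeasurableSet.univ, Measure.restrict_univ,
      ← ofReal_integral_eq_lintegral_ofReal hp_int (Filter.Eventually.of_forall hp_nonneg),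
      hp_one, ENNReal.ofReal_one]⟩
  have hμle : μ ≤ ENNReal.ofReal Mp • (volume : Measure (Fin D → ℝ)) := by
    rw [← withDensity_const]
    exact withDensity_mono
      (Filter.Eventually.of_forall fun x => ENNReal.ofReal_le_ofReal (hp_bdd x))
  set g : (Fin D → ℝ) → ℝ := fun x => ∏ j, φ (sincLike (R * (k j - x j))) with hg
  have hgm : Measurable g := measurable_kernel hφ_meas R k
  have hg2 : Integrable (fun x => g x ^ 2) (ENNReal.ofReal Mp • volume) :=
    (integrable_kernel_sq hφ2 hR k).smul_measure ENNReal.ofReal_ne_top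
  have hgL : MemLp g 2 μ :=
    (memLp_two_iff_integrable_sq hgm.aestronglyMeasurable).2 (hg2.mono_measure hμle)
  have hvar : Var[g; μ] ≤ Mp * (B / R) ^ D := calc
    Var[g; μ] ≤ ∫ x, g x ^ 2 ∂μ := variance_le_expectation_sq hgm.aestronglyMeasurable
    _ ≤ ∫ x, g x ^ 2 ∂(ENNReal.ofReal Mp • volume) :=
      integral_mono_measure hμle (Filter.Eventually.of_forall fun x => sq_nonneg _) hg2
    _ = Mp * (B / R) ^ D := by
      rw [integral_smul_measure, ENNReal.toReal_ofReal hMp, integral_kernel_sq φ hR k,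
        smul_eq_mul]
  have hest : (fun ks : Fin N → Fin D → ℝ => pEst D N φ A R ks k)
      = fun ks => R ^ D / (N * A ^ D) * (∑ i : Fin N, fun ω : Fin N → Fin D → ℝ => g (ω i)) ks := by
    funext ks
    simp [pEst, hg, Finset.sum_apply]
  have hmeas : Measurable fun ks : Fin N → Fin D → ℝ => pEst D N φ A R ks k := by
    have : Measurable fun ks : Fin N → Fin D → ℝ =>
        R ^ D / (N * A ^ D) * ∑ i : Fin N, g (ks i) := by fun_prop
    exact this
  have hN0 : (0 : ℝ) < N := by exact_mod_cast hN
  have hAD : A ^ D ≠ 0 := pow_ne_zero _ hA_ne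
  have hRD : 0 < R ^ D := pow_pos hR D
  rw [← variance_eq_integral hmeas.aemeasurable, hest, variance_const_mul, sampleMeasure,
    variance_sum_pi (X := fun _ => g) (fun _ => hgL), Finset.sum_const, Finset.card_univ,
    Fintype.card_fin, nsmul_eq_mul]
  calc (R ^ D / (N * A ^ D)) ^ 2 * (N * Var[g; μ])
      ≤ (R ^ D / (N * A ^ D)) ^ 2 * (N * (Mp * (B / R) ^ D)) := by gcongr
    _ = Mp * B ^ D / (A ^ D) ^ 2 * R ^ D / N := by
      rw [div_pow B R D]
      field_simp
    _ ≤ (Mp * B ^ D / (A ^ D) ^ 2 + 1) * R ^ D / N := by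
      gcongr
      linarith
end

section
/- Let φ(z) = z (classical Fourier integral estimator) and let p ∈ L¹(ℝ^D) ∩ L²(ℝ^D) be a density with Fourier transform p̂. Then for all R > 0 and N ≥ 1, the mean integrated squared error of p_{N,R}^φ satisfies the exact decomposition MISE(p_{N,R}^φ, p) = (2π)^{−D} [ ∫_{ℝ^D \ [−R,R]^D} |p̂(t)|² dt + (1/N) ∫_{[−R,R]^D} (1 − |p̂(t)|²) dt ]. -/
/-! Write `e(t) = N⁻¹ ∑ᵢ exp(i t·kᵢ)` for the empirical characteristic function and `B = [-R, R]^D`.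
The sinc kernel is, up to the factor `(2π)^{-D}`, the Fourier transform of the indicator of `B`, so
the estimator is the transform of the conjugate of `e` cut off to `B` (`pEst_eq_cF`). Plancherel's
theorem then gives, for every fixed sample (`ise_eq`),

  `∫ (p_{N,R} - p)² = (2π)^{-D} (∫_B |e - p̂|² + ∫_{Bᶜ} |p̂|²)`.

Since `e(t)` is the mean of `N` i.i.d. unimodular variables with expectation `p̂(t)`, its variance
is `(1 - |p̂(t)|²) / N` (`integral_ecf_sub_sq`), and Fubini on the bounded set `B` finishes the
proof.

Plancherel is needed for the Fourier integral of functions in `L¹ ∩ L²` (`plancherel_cF`). Mathlib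
has the isometry of the abstract `L²` transform; `toLp_fourier_ae` identifies that transform with
the integral almost everywhere.
-/

open MeasureTheory Real Finset

section Fourier

open FourierTransform SchwartzMap

/-! ### Plancherel's theorem for functions in `L¹ ∩ L²` -/

/-- The `L²` Fourier transform, defined by extension from Schwartz functions, agrees almost
everywhere with the Fourier integral when `f` is also integrable: both give the same value when
tested against smooth compactly supported functions. -/
theorem toLp_fourier_ae {E : Type*} [NormedAddCommGroup E] [InnerProductSpace ℝ E]
    [FiniteDimensional ℝ E] [MeasurableSpace E] [BorelSpace E]
    {f : E → ℂ} (hf : Integrable f) (hf2 : MemLp f 2) :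
    (𝓕 (hf2.toLp f) : Lp (α := E) ℂ 2) =ᵐ[volume] 𝓕 f := by
  have hcont : Continuous (𝓕 f) :=
    VectorFourier.fourierIntegral_continuous Real.continuous_fourierChar
      (by exact continuous_inner) hf
  apply ae_eq_of_integral_contDiff_smul_eq
  · exact (Lp.memLp _).locallyIntegrable one_le_two
  · exact hcont.locallyIntegrable
  intro g g_smooth g_cpt
  set G : Lp (α := E) ℂ 2 volume := 𝓕 (hf2.toLp f) with hG
  have hg₁ : HasCompactSupport (Complex.ofRealCLM ∘ g) := g_cpt.comp_left rfl
  have hg₂ : ContDiff ℝ ((⊤ : ℕ∞) : WithTop ℕ∞) (Complex.ofRealCLM ∘ g) := by fun_prop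
  set ψ : 𝓢(E, ℂ) := hg₁.toSchwartzMap hg₂ with hψ
  have key := congrArg (fun T : 𝓢'(E, ℂ) => T ψ)
    (Lp.fourier_toTemperedDistribution_eq (hf2.toLp f))
  simp only [TemperedDistribution.fourier_apply, Lp.toTemperedDistribution_apply] at key
  have h1 : ∫ x, g x • G x
      = ∫ x, ψ x • G x := by
    simp [hψ]
  have h2 : ∫ x, (𝓕 ψ) x • (hf2.toLp f) x = ∫ x, (𝓕 ψ) x • f x := by
    refine integral_congr_ae ?_
    filter_upwards [hf2.coeFn_toLp] with x hx
    rw [hx]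
  have h3 : ∫ x, (𝓕 ψ) x • f x = ∫ x, ψ x • (𝓕 f) x := by
    simpa using! (VectorFourier.integral_fourierIntegral_smul_eq_flip (L := innerₗ E)
      Real.continuous_fourierChar continuous_inner ψ.integrable hf)
  rw [h1, ← key, h2, h3]
  simp [hψ]

theorem plancherel_euclid {E : Type*} [NormedAddCommGroup E] [InnerProductSpace ℝ E]
    [FiniteDimensional ℝ E] [MeasurableSpace E] [BorelSpace E]
    {f : E → ℂ} (hf : Integrable f) (hf2 : MemLp f 2) :
    MemLp (𝓕 f) 2 ∧ ∫ w, ‖𝓕 f w‖ ^ 2 = ∫ x, ‖f x‖ ^ 2 := by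
  have hae := toLp_fourier_ae hf hf2
  have hm : MemLp (𝓕 f) 2 := (memLp_congr_ae hae).1 (Lp.memLp _)
  refine ⟨hm, ?_⟩
  have hn : eLpNorm (𝓕 f) 2 = eLpNorm f 2 := by
    rw [← eLpNorm_congr_ae hae, ← eLpNorm_congr_ae hf2.coeFn_toLp,
      ← Lp.enorm_def, ← Lp.enorm_def, ← ofReal_norm, ← ofReal_norm, Lp.norm_fourier_eq]
  have aux : ∀ u : E → ℂ, MemLp u 2 → ∫ x, ‖u x‖ ^ 2 = (eLpNorm u 2 volume).toReal ^ 2 := by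
    intro u hu
    rw [hu.eLpNorm_eq_integral_rpow_norm (by norm_num) (by norm_num)]
    have h0 : 0 ≤ ∫ x, ‖u x‖ ^ 2 := integral_nonneg fun x => by positivity
    simp only [ENNReal.toReal_ofNat, Real.rpow_ofNat]
    rw [ENNReal.toReal_ofReal (by positivity), ← Real.rpow_natCast,
      ← Real.rpow_mul h0]
    norm_num
  rw [aux _ hm, aux _ hf2, hn]

/-- The transform `t ↦ ∫ e^{i t·x} f(x) dx` of a complex-valued function on `ℝ^D`, in the
normalisation of `charFun`. -/
noncomputable def cF (D : ℕ) (f : (Fin D → ℝ) → ℂ) (t : Fin D → ℝ) : ℂ :=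
  ∫ x : Fin D → ℝ, Complex.exp (Complex.I * ((∑ j : Fin D, t j * x j : ℝ) : ℂ)) * f x

/-- `cF` in terms of Mathlib's transform, whose kernel is `e^{-2πi⟨v, w⟩}`. -/
theorem cF_eq_fourier (D : ℕ) (f : (Fin D → ℝ) → ℂ) (t : Fin D → ℝ) :
    cF D f t = 𝓕 (fun v : EuclideanSpace ℝ (Fin D) => f v.ofLp)
      (WithLp.toLp 2 ((-(2 * π)⁻¹) • t)) := by
  rw [Real.fourier_eq', ← (PiLp.volume_preserving_toLp (Fin D)).integral_comp
    (MeasurableEquiv.toLp 2 _).measurableEmbedding]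
  unfold cF
  refine integral_congr_ae (Filter.Eventually.of_forall fun x => ?_)
  simp only [PiLp.inner_apply, smul_eq_mul]
  congr 2
  have : (∑ j, t j * x j) = -2 * π * ∑ i, inner ℝ (x i) ((-(2 * π)⁻¹ • t) i) := by
    rw [Finset.mul_sum]
    refine Finset.sum_congr rfl fun j _ => ?_
    simp
    field_simp
  rw [this]; push_cast; ring

theorem continuous_cF (D : ℕ) {f : (Fin D → ℝ) → ℂ} (hf : Integrable f) :
    Continuous (cF D f) := by
  have hcont : Continuous (𝓕 (fun v : EuclideanSpace ℝ (Fin D) => f v.ofLp)) :=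
    VectorFourier.fourierIntegral_continuous Real.continuous_fourierChar
      (by exact continuous_inner)
      ((PiLp.volume_preserving_ofLp (Fin D)).integrable_comp_of_integrable hf)
  rw [funext fun t => cF_eq_fourier D f t]
  exact hcont.comp (by fun_prop)

/-- Plancherel's theorem in the normalisation of `cF`; the rescaling `t ↦ -t / (2π)` produces the
factor `(2π)^D`. -/
theorem plancherel_cF (D : ℕ) {f : (Fin D → ℝ) → ℂ} (hf : Integrable f) (hf2 : MemLp f 2) :
    MemLp (cF D f) 2 ∧ ∫ t, ‖cF D f t‖ ^ 2 = (2 * π) ^ D * ∫ x, ‖f x‖ ^ 2 := by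
  have hmp := PiLp.volume_preserving_ofLp (Fin D)
  have hmp' := PiLp.volume_preserving_toLp (Fin D)
  obtain ⟨hm, hi⟩ := plancherel_euclid (f := fun v : EuclideanSpace ℝ (Fin D) => f v.ofLp)
    (hmp.integrable_comp_of_integrable hf) (hf2.comp_measurePreserving hmp)
  set F := 𝓕 (fun v : EuclideanSpace ℝ (Fin D) => f v.ofLp) with hF
  have hm' : MemLp (fun s : Fin D → ℝ => F (WithLp.toLp 2 s)) 2 :=
    hm.comp_measurePreserving hmp'
  have he : cF D f = fun t => (fun s : Fin D → ℝ => F (WithLp.toLp 2 s)) ((-(2 * π)⁻¹) • t) :=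
    funext fun t => cF_eq_fourier D f t
  have hc : (-(2 * π)⁻¹ : ℝ) ≠ 0 := by simp [Real.pi_ne_zero]
  have hi' : ∫ s : Fin D → ℝ, ‖F (WithLp.toLp 2 s)‖ ^ 2 = ∫ x, ‖f x‖ ^ 2 := by
    rw [hmp'.integral_comp (MeasurableEquiv.toLp 2 _).measurableEmbedding (fun w => ‖F w‖ ^ 2), hi,
      hmp.integral_comp (MeasurableEquiv.toLp 2 _).symm.measurableEmbedding (fun w => ‖f w‖ ^ 2)]
  constructor
  · have hq := (memLp_two_iff_integrable_sq_norm hm'.1).1 hm'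
    rw [memLp_two_iff_integrable_sq_norm (continuous_cF D hf).aestronglyMeasurable, he]
    exact hq.comp_smul hc
  · rw [he, Measure.integral_comp_smul volume
      (fun t => ‖(fun s : Fin D → ℝ => F (WithLp.toLp 2 s)) t‖ ^ 2), hi']
    have hp := Real.pi_pos
    simp only [smul_eq_mul, Module.finrank_fin_fun, abs_inv, abs_pow, abs_neg,
      abs_of_pos (show 0 < 2 * π by positivity), inv_pow, inv_inv]


/-! ### Three integral identities -/

/-- The Fourier transform of the indicator of `[-R, R]^D`. -/
theorem setIntegral_box_exp (D : ℕ) {R : ℝ} (hR : 0 < R) (u : Fin D → ℝ) :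
    ∫ t in {t : Fin D → ℝ | ∀ j, |t j| ≤ R},
        Complex.exp (Complex.I * ((∑ j : Fin D, t j * u j : ℝ) : ℂ)) =
      ((2 * R) ^ D * ∏ j, sincLike (R * u j) : ℝ) := by
  have hbox : {t : Fin D → ℝ | ∀ j, |t j| ≤ R} = Set.univ.pi fun _ => Set.Icc (-R) R := by
    ext t; simp only [abs_le, Set.mem_pi, Set.mem_ofPred_eq, Set.mem_univ, true_imp_iff, Set.mem_Icc]
  have h1 : ∀ a : ℝ, ∫ s in Set.Icc (-R) R, Complex.exp (Complex.I * ((s * a : ℝ) : ℂ))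
      = ((2 * R * sincLike (R * a) : ℝ) : ℂ) := by
    intro a
    rw [integral_Icc_eq_integral_Ioc, ← intervalIntegral.integral_of_le (by linarith)]
    by_cases ha : a = 0
    · subst ha
      simp [sincLike]
      ring
    · have hne : Complex.I * (a : ℂ) ≠ 0 := by simp [ha]
      have hRa : R * a ≠ 0 := by positivity
      have := integral_exp_mul_complex (a := -R) (b := R) hne
      rw [intervalIntegral.integral_congr (g := fun x : ℝ => Complex.exp (Complex.I * a * x))
        (fun x _ => by dsimp only; push_cast; ring_nf), this]
      simp only [sincLike, hRa, if_false]
      push_cast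
      rw [Complex.sin]
      have hac : (a : ℂ) ≠ 0 := by exact_mod_cast ha
      have hRc : (R : ℂ) ≠ 0 := by exact_mod_cast hR.ne'
      have e1 : Complex.I * a * -(R : ℂ) = -(R * a) * Complex.I := by ring
      have e2 : Complex.I * a * (R : ℂ) = (R * a) * Complex.I := by ring
      rw [e1, e2]
      field_simp
      rw [Complex.I_sq]
      ring
  rw [hbox, volume_pi, Measure.restrict_pi_pi]
  have h2 : ∀ t : Fin D → ℝ, Complex.exp (Complex.I * ((∑ j : Fin D, t j * u j : ℝ) : ℂ))
      = ∏ j, Complex.exp (Complex.I * ((t j * u j : ℝ) : ℂ)) := by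
    intro t
    rw [← Complex.exp_sum, Complex.ofReal_sum, Finset.mul_sum]
  simp_rw [h2]
  rw [integral_fintype_prod_eq_prod
    (f := fun j (s : ℝ) => Complex.exp (Complex.I * ((s * u j : ℝ) : ℂ)))]
  simp_rw [h1]
  push_cast
  rw [Finset.prod_mul_distrib]
  simp

/-- The variance of the mean of `N` i.i.d. copies of `X` is `Var X / N`. -/
theorem integral_sq_empirical {Ω : Type*} [MeasurableSpace Ω] (μ : Measure Ω)
    [IsProbabilityMeasure μ] {X : Ω → ℝ} (hX : MemLp X 2 μ) {N : ℕ} (hN : 1 ≤ N) :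
    ∫ ω : Fin N → Ω, ((1 / N : ℝ) * ∑ i, X (ω i) - ∫ x, X x ∂μ) ^ 2 ∂(Measure.pi fun _ => μ) =
      (1 / N : ℝ) * ((∫ x, X x ^ 2 ∂μ) - (∫ x, X x ∂μ) ^ 2) := by
  have hN0 : (N : ℝ) ≠ 0 := by positivity
  have hXi : ∀ i : Fin N, MemLp (fun ω : Fin N → Ω => X (ω i)) 2 (Measure.pi fun _ => μ) :=
    fun i => hX.comp_measurePreserving (measurePreserving_eval (fun _ : Fin N => μ) i)
  have hInt : ∀ i : Fin N, ∫ ω : Fin N → Ω, X (ω i) ∂(Measure.pi fun _ => μ) = ∫ x, X x ∂μ :=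
    fun i => integral_comp_eval (μ := fun _ : Fin N => μ) (i := i) hX.1
  have hv := ProbabilityTheory.variance_sum_pi (μ := fun _ : Fin N => μ) (X := fun _ => X)
    (fun _ => hX)
  have hsum : (∑ i : Fin N, fun ω : Fin N → Ω => X (ω i)) = fun ω => ∑ i, X (ω i) := by
    ext ω; simp
  rw [hsum] at hv
  have hmean : ∫ ω : Fin N → Ω, (1 / N : ℝ) * ∑ i, X (ω i) ∂(Measure.pi fun _ => μ)
      = ∫ x, X x ∂μ := by
    rw [integral_const_mul, integral_finsetSum _ fun i _ => (hXi i).integrable one_le_two]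
    simp [hInt]
    field_simp
  have hae : AEMeasurable (fun ω : Fin N → Ω => (1 / N : ℝ) * ∑ i, X (ω i))
      (Measure.pi fun _ => μ) :=
    ((memLp_finsetSum _ fun i _ => hXi i).const_mul _).1.aemeasurable
  have h := ProbabilityTheory.variance_eq_integral hae
  rw [hmean] at h
  rw [← h, ProbabilityTheory.variance_const_mul, hv, ProbabilityTheory.variance_eq_sub hX]
  simp
  field_simp

/-- The transform moves across an integral of a product, by Fubini. -/
theorem integral_cF_mul (D : ℕ) {f g : (Fin D → ℝ) → ℂ} (hf : Integrable f) (hg : Integrable g) :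
    ∫ k, cF D g k * f k = ∫ t, g t * cF D f t := by
  have hInt : Integrable (fun z : (Fin D → ℝ) × (Fin D → ℝ) =>
      Complex.exp (Complex.I * ((∑ j : Fin D, z.1 j * z.2 j : ℝ) : ℂ)) * (f z.1 * g z.2))
      (volume.prod volume) := by
    refine (hf.mul_prod hg).bdd_mul (c := 1) (Continuous.aestronglyMeasurable (by fun_prop)) ?_
    refine Filter.Eventually.of_forall fun z => ?_
    rw [mul_comm, Complex.norm_exp_ofReal_mul_I]
  have h := integral_integral_swap (f := fun k t : Fin D → ℝ =>
      Complex.exp (Complex.I * ((∑ j : Fin D, k j * t j : ℝ) : ℂ)) * (f k * g t)) hInt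
  simp only [cF, ← integral_mul_const, ← integral_const_mul]
  calc _ = _ := by
        refine integral_congr_ae (Filter.Eventually.of_forall fun k => ?_)
        exact integral_congr_ae (Filter.Eventually.of_forall fun t => by dsimp only; ring)
    _ = _ := h
    _ = _ := by
        refine integral_congr_ae (Filter.Eventually.of_forall fun t => ?_)
        refine integral_congr_ae (Filter.Eventually.of_forall fun k => ?_)
        simp only [mul_comm (t _)]
        ring

/-! ### The estimator on the Fourier side -/

/-- The empirical characteristic function `t ↦ N⁻¹ ∑ᵢ e^{i t·kᵢ}` of the sample `ks`. -/
noncomputable def ecf (D N : ℕ) (ks : Fin N → Fin D → ℝ) (t : Fin D → ℝ) : ℂ :=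
  (1 / N : ℂ) * ∑ i, Complex.exp (Complex.I * ((∑ j : Fin D, t j * ks i j : ℝ) : ℂ))

theorem continuous_ecf (D N : ℕ) :
    Continuous fun z : (Fin N → Fin D → ℝ) × (Fin D → ℝ) => ecf D N z.1 z.2 := by
  unfold ecf; fun_prop

theorem continuous_ecf_right (D N : ℕ) (ks : Fin N → Fin D → ℝ) : Continuous (ecf D N ks) := by
  unfold ecf; fun_prop

theorem norm_ecf_le (D N : ℕ) (ks : Fin N → Fin D → ℝ) (t : Fin D → ℝ) :
    ‖ecf D N ks t‖ ≤ 1 := by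
  unfold ecf
  rcases Nat.eq_zero_or_pos N with rfl | hN
  · simp
  have h : ‖∑ i : Fin N, Complex.exp (Complex.I * ((∑ j : Fin D, t j * ks i j : ℝ) : ℂ))‖ ≤ N := by
    refine (norm_sum_le _ _).trans ?_
    simp only [mul_comm Complex.I, Complex.norm_exp_ofReal_mul_I]
    simp
  rw [norm_mul]
  simp only [one_div, norm_inv, Complex.norm_natCast]
  rw [inv_mul_le_iff₀ (by positivity)]
  simpa using h

/-- The Fourier-side profile of the estimator: `(2π)^{-D}` times the conjugate empirical
characteristic function cut off to the box `[-R, R]^D`. -/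
noncomputable def estProfile (D N : ℕ) (R : ℝ) (ks : Fin N → Fin D → ℝ) (t : Fin D → ℝ) : ℂ :=
  Set.indicator {t : Fin D → ℝ | ∀ j, |t j| ≤ R}
    (fun t => (((2 * π) ^ D)⁻¹ : ℝ) * (starRingEnd ℂ) (ecf D N ks t)) t

theorem isCompact_box (D : ℕ) (R : ℝ) : IsCompact {t : Fin D → ℝ | ∀ j, |t j| ≤ R} := by
  have hbox : {t : Fin D → ℝ | ∀ j, |t j| ≤ R} = Set.univ.pi fun _ => Set.Icc (-R) R := by
    ext t
    simp only [abs_le, Set.mem_pi, Set.mem_ofPred_eq, Set.mem_univ, true_imp_iff, Set.mem_Icc]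
  rw [hbox]
  exact isCompact_univ_pi fun _ => isCompact_Icc

/-- The estimator is the Fourier transform of its profile: the kernel `∏ⱼ sin(R uⱼ) / (π uⱼ)` is
`(2π)^{-D}` times the transform of the indicator of the box. -/
theorem pEst_eq_cF (D N : ℕ) {R : ℝ} (hR : 0 < R) (ks : Fin N → Fin D → ℝ) (k : Fin D → ℝ) :
    (pEst D N (fun z => z) π R ks k : ℂ) = cF D (estProfile D N R ks) k := by
  have hS := (isCompact_box D R).measurableSet
  have h1 : cF D (estProfile D N R ks) k =
      ∫ t in {t : Fin D → ℝ | ∀ j, |t j| ≤ R}, ∑ i : Fin N,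
        ((((2 * π) ^ D)⁻¹ : ℝ) * (1 / N : ℂ)) *
          Complex.exp (Complex.I * ((∑ j : Fin D, t j * (k j - ks i j) : ℝ) : ℂ)) := by
    rw [← integral_indicator hS]
    refine integral_congr_ae (Filter.Eventually.of_forall fun t => ?_)
    simp only [estProfile]
    by_cases ht : t ∈ {t : Fin D → ℝ | ∀ j, |t j| ≤ R}
    · rw [Set.indicator_of_mem ht, Set.indicator_of_mem ht]
      simp only [ecf, map_mul, map_sum, ← Complex.exp_conj, Complex.conj_I, Complex.conj_ofReal,
        map_div₀, map_one, map_natCast]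
      rw [Finset.mul_sum, Finset.mul_sum, Finset.mul_sum]
      refine Finset.sum_congr rfl fun i _ => ?_
      have : Complex.exp (Complex.I * ((∑ j : Fin D, t j * (k j - ks i j) : ℝ) : ℂ)) =
          Complex.exp (Complex.I * ((∑ j : Fin D, k j * t j : ℝ) : ℂ)) *
          Complex.exp (-Complex.I * ((∑ j : Fin D, t j * ks i j : ℝ) : ℂ)) := by
        rw [← Complex.exp_add]
        congr 1
        simp only [mul_sub, Finset.sum_sub_distrib, mul_comm (k _)]
        push_cast
        ring
      rw [this]
      ring
    · rw [Set.indicator_of_notMem ht, Set.indicator_of_notMem ht, mul_zero]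
  rw [h1, integral_finsetSum]
  · simp_rw [integral_const_mul, setIntegral_box_exp D hR]
    rw [← Finset.mul_sum, pEst]
    push_cast
    rw [← Finset.mul_sum]
    have hp : (π : ℂ) ≠ 0 := by exact_mod_cast Real.pi_ne_zero
    rw [mul_pow, mul_pow]
    field_simp
  · intro i _
    refine Integrable.const_mul ?_ _
    exact (Continuous.continuousOn (by fun_prop)).integrableOn_compact (isCompact_box D R)

theorem integrable_estProfile (D N : ℕ) (R : ℝ) (ks : Fin N → Fin D → ℝ) :
    Integrable (estProfile D N R ks) ∧ MemLp (estProfile D N R ks) 2 := by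
  have hc : Continuous (ecf D N ks) :=
    continuous_ecf_right D N ks
  have hS := (isCompact_box D R).measurableSet
  have : IsFiniteMeasure (volume.restrict {t : Fin D → ℝ | ∀ j, |t j| ≤ R}) :=
    ⟨by simpa using (isCompact_box D R).measure_lt_top⟩
  have hm : MemLp (fun t => ((((2 * π) ^ D)⁻¹ : ℝ) : ℂ) * (starRingEnd ℂ) (ecf D N ks t)) ⊤
      (volume.restrict {t : Fin D → ℝ | ∀ j, |t j| ≤ R}) := by
    refine memLp_top_of_bound (C := ‖((((2 * π) ^ D)⁻¹ : ℝ) : ℂ)‖ * 1)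
      (Continuous.aestronglyMeasurable (by fun_prop)) ?_
    refine Filter.Eventually.of_forall fun t => ?_
    rw [norm_mul, RCLike.norm_conj]
    gcongr
    exact norm_ecf_le _ _ _ _
  constructor
  · exact (integrable_indicator_iff hS).2 (hm.integrable le_top)
  · exact (memLp_indicator_iff_restrict hS).2 (hm.mono_exponent le_top)

/-- For a fixed sample, the integrated squared error computed on the Fourier side. -/
theorem ise_eq (D N : ℕ) {R : ℝ} (hR : 0 < R) (p : (Fin D → ℝ) → ℝ)
    (hp_int : Integrable p) (hp_sq : Integrable (fun x => p x ^ 2)) (ks : Fin N → Fin D → ℝ) :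
    ∫ k, (pEst D N (fun z => z) π R ks k - p k) ^ 2 =
      ((2 * π) ^ D)⁻¹ *
        ((∫ t in {t : Fin D → ℝ | ∀ j, |t j| ≤ R}, ‖ecf D N ks t - _root_.charFun D p t‖ ^ 2) +
          ∫ t in {t : Fin D → ℝ | ∀ j, |t j| ≤ R}ᶜ, ‖_root_.charFun D p t‖ ^ 2) := by
  set S := {t : Fin D → ℝ | ∀ j, |t j| ≤ R} with hSdef
  have hS : MeasurableSet S := (isCompact_box D R).measurableSet
  have : IsFiniteMeasure (volume.restrict S) :=
    ⟨by simpa using (isCompact_box D R).measure_lt_top⟩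
  have hpi : 0 < (2 * π) ^ D := by positivity
  set c : ℝ := ((2 * π) ^ D)⁻¹ with hcdef
  have hc0 : 0 < c := by positivity
  have hcc : (2 * π) ^ D = c⁻¹ := by simp [hcdef]
  set q := pEst D N (fun z => z) π R ks with hq
  have hqF : (fun k => (q k : ℂ)) = cF D (estProfile D N R ks) :=
    funext fun k => pEst_eq_cF D N hR ks k
  obtain ⟨hg1, hg2⟩ := integrable_estProfile D N R ks
  obtain ⟨hqL, hqI⟩ := plancherel_cF D hg1 hg2
  have hpc : Integrable fun x => (p x : ℂ) := hp_int.ofReal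
  have hpL : MemLp p 2 := (memLp_two_iff_integrable_sq hp_int.1).2 hp_sq
  have hpcL : MemLp (fun x => (p x : ℂ)) 2 := hpL.ofReal
  obtain ⟨hPL, hPI⟩ := plancherel_cF D hpc hpcL
  have hP : _root_.charFun D p = cF D fun x => (p x : ℂ) := rfl
  rw [← hP] at hPL hPI
  set P := _root_.charFun D p with hPdef
  rw [← hqF] at hqL hqI
  have hqL' : MemLp q 2 := by simpa using hqL.re
  simp only [Complex.norm_real, Real.norm_eq_abs, sq_abs] at hqI hPI
  have hcont : Continuous (ecf D N ks) :=
    continuous_ecf_right D N ks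
  have hE : MemLp (ecf D N ks) 2 (volume.restrict S) :=
    (memLp_top_of_bound hcont.aestronglyMeasurable 1
      (Filter.Eventually.of_forall fun t => norm_ecf_le _ _ _ _)).mono_exponent le_top
  have hPS : MemLp P 2 (volume.restrict S) := hPL.restrict S
  have hEconj : MemLp (fun t => (starRingEnd ℂ) (ecf D N ks t)) 2 (volume.restrict S) := hE.star
  have hEP : Integrable (fun t => (starRingEnd ℂ) (ecf D N ks t) * P t) (volume.restrict S) :=
    hEconj.integrable_mul hPS
  have hEsq := (memLp_two_iff_integrable_sq_norm hE.1).1 hE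
  have hPsq := (memLp_two_iff_integrable_sq_norm hPL.1).1 hPL
  -- Expand `(q - p)²`: the pure squares go through Plancherel, the cross term only needs Fubini.
  have t1 : ∫ k, q k ^ 2 = c * ∫ t in S, ‖ecf D N ks t‖ ^ 2 := by
    rw [hqI, hcc, ← integral_const_mul, ← integral_const_mul, ← integral_indicator hS]
    refine integral_congr_ae (Filter.Eventually.of_forall fun t => ?_)
    simp only [estProfile]
    by_cases ht : t ∈ S
    · rw [Set.indicator_of_mem ht, Set.indicator_of_mem ht, norm_mul, RCLike.norm_conj,
        Complex.norm_real, Real.norm_eq_abs, ← hcdef, abs_of_pos hc0]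
      field_simp
    · rw [Set.indicator_of_notMem ht, Set.indicator_of_notMem ht]
      simp
  have t2 : ∫ k, q k * p k = c * ∫ t in S, ((starRingEnd ℂ) (ecf D N ks t) * P t).re := by
    have h := integral_cF_mul D hpc hg1
    rw [← hqF, ← hP] at h
    have h3 : ∫ t, estProfile D N R ks t * P t
        = (c : ℂ) * ∫ t in S, (starRingEnd ℂ) (ecf D N ks t) * P t := by
      rw [← integral_const_mul, ← integral_indicator hS]
      refine integral_congr_ae (Filter.Eventually.of_forall fun t => ?_)
      simp only [estProfile]
      by_cases ht : t ∈ S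
      · rw [Set.indicator_of_mem ht, Set.indicator_of_mem ht, mul_assoc]
      · rw [Set.indicator_of_notMem ht, Set.indicator_of_notMem ht, zero_mul]
    rw [h3] at h
    have h4 : ∫ k, (q k : ℂ) * (p k : ℂ) = ((∫ k, q k * p k : ℝ) : ℂ) := by
      rw [← integral_complex_ofReal]; simp
    rw [h4] at h
    have h5 := congrArg Complex.re h
    rw [Complex.ofReal_re, Complex.re_ofReal_mul] at h5
    rw [h5]
    congr 1
    exact (integral_re hEP).symm
  have t3 : ∫ k, p k ^ 2 = c * ((∫ t in S, ‖P t‖ ^ 2) + ∫ t in Sᶜ, ‖P t‖ ^ 2) := by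
    rw [integral_add_compl hS hPsq, hPI, hcc]
    field_simp
  have e1 : ∫ k, (q k - p k) ^ 2 = (∫ k, q k ^ 2) - 2 * (∫ k, q k * p k) + ∫ k, p k ^ 2 := by
    have hqp : Integrable (fun k => q k * p k) := hqL'.integrable_mul hpL
    have hqq : Integrable (fun k => q k ^ 2) := hqL'.integrable_sq
    have hd : Integrable (fun k => q k ^ 2 - 2 * (q k * p k)) := hqq.sub (hqp.const_mul 2)
    rw [← integral_const_mul, ← integral_sub hqq (hqp.const_mul 2), ← integral_add hd hp_sq]
    refine integral_congr_ae (Filter.Eventually.of_forall fun k => ?_)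
    dsimp only
    ring
  have e2 : ∫ t in S, ‖ecf D N ks t - P t‖ ^ 2 = (∫ t in S, ‖ecf D N ks t‖ ^ 2)
      - 2 * (∫ t in S, ((starRingEnd ℂ) (ecf D N ks t) * P t).re) + ∫ t in S, ‖P t‖ ^ 2 := by
    have hre : Integrable (fun t => ((starRingEnd ℂ) (ecf D N ks t) * P t).re)
      (volume.restrict S) := hEP.re
    have hd : Integrable (fun t => ‖ecf D N ks t‖ ^ 2
        - 2 * ((starRingEnd ℂ) (ecf D N ks t) * P t).re) (volume.restrict S) :=
      hEsq.sub (hre.const_mul 2)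
    rw [← integral_const_mul, ← integral_sub hEsq (hre.const_mul 2),
      ← integral_add hd hPsq.restrict]
    refine integral_congr_ae (Filter.Eventually.of_forall fun t => ?_)
    simp only [← Complex.normSq_eq_norm_sq, Complex.normSq_apply, Complex.sub_re,
      Complex.sub_im, Complex.mul_re, Complex.conj_re, Complex.conj_im]
    ring
  rw [e1, e2, t1, t2, t3]
  ring

/-! ### Variance of the empirical characteristic function -/

/-- The pointwise variance of the empirical characteristic function. Real and imaginary parts are
averages of `cos (t·kᵢ)` and `sin (t·kᵢ)`, whose second moments add up to `1`. -/
theorem integral_ecf_sub_sq (D N : ℕ) (hN : 1 ≤ N) (p : (Fin D → ℝ) → ℝ)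
    (hp_meas : Measurable p) (hp_nonneg : ∀ x, 0 ≤ p x)
    [IsProbabilityMeasure (volume.withDensity fun x => ENNReal.ofReal (p x))]
    (t : Fin D → ℝ) :
    ∫ ks, ‖ecf D N ks t - _root_.charFun D p t‖ ^ 2 ∂(sampleMeasure D N p) =
      (1 / N : ℝ) * (1 - ‖_root_.charFun D p t‖ ^ 2) := by
  set μ := volume.withDensity fun x => ENNReal.ofReal (p x) with hμ
  set C : (Fin D → ℝ) → ℝ := fun x => Real.cos (∑ j, t j * x j) with hC
  set S : (Fin D → ℝ) → ℝ := fun x => Real.sin (∑ j, t j * x j) with hS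
  have hCc : Continuous C := by fun_prop
  have hSc : Continuous S := by fun_prop
  have hCL : MemLp C 2 μ := (memLp_top_of_bound hCc.aestronglyMeasurable 1
    (Filter.Eventually.of_forall fun x => Real.abs_cos_le_one _)).mono_exponent le_top
  have hSL : MemLp S 2 μ := (memLp_top_of_bound hSc.aestronglyMeasurable 1
    (Filter.Eventually.of_forall fun x => Real.abs_sin_le_one _)).mono_exponent le_top
  have hexp : ∀ x : Fin D → ℝ, Complex.exp (Complex.I * ((∑ j, t j * x j : ℝ) : ℂ))
      = (C x : ℂ) + (S x : ℂ) * Complex.I := by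
    intro x
    rw [mul_comm, Complex.exp_mul_I, hC, hS, Complex.ofReal_cos, Complex.ofReal_sin]
  have hmean : _root_.charFun D p t =
      ((∫ x, C x ∂μ : ℝ) : ℂ) + ((∫ x, S x ∂μ : ℝ) : ℂ) * Complex.I := by
    have h1 : _root_.charFun D p t
        = ∫ x, Complex.exp (Complex.I * ((∑ j, t j * x j : ℝ) : ℂ)) ∂μ := by
      rw [hμ, integral_withDensity_eq_integral_toReal_smul (by fun_prop) (by simp)]
      refine integral_congr_ae (Filter.Eventually.of_forall fun x => ?_)
      simp only [ENNReal.toReal_ofReal (hp_nonneg x), Complex.real_smul]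
      ring
    rw [h1]
    simp_rw [hexp]
    rw [integral_add (hCL.integrable one_le_two).ofReal
      ((hSL.integrable one_le_two).ofReal.mul_const _), integral_mul_const,
      integral_complex_ofReal, integral_complex_ofReal]
  set a := ∫ x, C x ∂μ with ha
  set b := ∫ x, S x ∂μ with hb
  have hnorm : ∀ ks : Fin N → Fin D → ℝ, ‖ecf D N ks t - _root_.charFun D p t‖ ^ 2 =
      ((1 / N : ℝ) * ∑ i, C (ks i) - a) ^ 2 + ((1 / N : ℝ) * ∑ i, S (ks i) - b) ^ 2 := by
    intro ks
    have : ecf D N ks t - _root_.charFun D p t =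
        (((1 / N : ℝ) * ∑ i, C (ks i) - a : ℝ) : ℂ) +
          (((1 / N : ℝ) * ∑ i, S (ks i) - b : ℝ) : ℂ) * Complex.I := by
      rw [hmean, ecf]
      simp_rw [hexp]
      rw [Finset.sum_add_distrib, ← Finset.sum_mul]
      push_cast
      ring
    rw [this, ← Complex.normSq_eq_norm_sq, Complex.normSq_add_mul_I]
  have hnP : ‖_root_.charFun D p t‖ ^ 2 = a ^ 2 + b ^ 2 := by
    rw [hmean, ← Complex.normSq_eq_norm_sq, Complex.normSq_add_mul_I]
  have hsum : ∀ {X : (Fin D → ℝ) → ℝ} (_ : MemLp X 2 μ) (d : ℝ),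
      Integrable (fun ks : Fin N → Fin D → ℝ => ((1 / N : ℝ) * ∑ i, X (ks i) - d) ^ 2)
        (Measure.pi fun _ => μ) := by
    intro X hX d
    have hXi : ∀ i ∈ (Finset.univ : Finset (Fin N)),
        MemLp (fun ks : Fin N → Fin D → ℝ => X (ks i)) 2 (Measure.pi fun _ => μ) := fun i _ =>
      hX.comp_measurePreserving (measurePreserving_eval (fun _ : Fin N => μ) i)
    have hs := (memLp_finsetSum _ hXi).const_mul (1 / N : ℝ)
    exact (hs.sub (memLp_const d)).integrable_sq
  have hone : (∫ x, C x ^ 2 ∂μ) + ∫ x, S x ^ 2 ∂μ = 1 := by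
    rw [← integral_add hCL.integrable_sq hSL.integrable_sq]
    simp [hC, hS, Real.cos_sq_add_sin_sq]
  simp_rw [hnorm]
  rw [sampleMeasure, integral_add (hsum hCL a) (hsum hSL b), integral_sq_empirical μ hCL hN,
    integral_sq_empirical μ hSL hN, hnP, ← hone]
  ring

end Fourier

/-- exact bias–variance decomposition of the MISE of the classical
Fourier integral estimator (`φ(z) = z`, `A = π`) via the Plancherel theorem. -/
theorem mise_decomposition_fourier_estimator
    (D : ℕ) (hD : 0 < D)
    (p : (Fin D → ℝ) → ℝ)
    (hp_meas : Measurable p) (hp_nonneg : ∀ x, 0 ≤ p x)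
    (hp_int : Integrable p) (hp_sq : Integrable (fun x => p x ^ 2))
    (hp_one : ∫ x : Fin D → ℝ, p x = 1) :
    ∀ R : ℝ, 0 < R → ∀ N : ℕ, 1 ≤ N →
      MISE D N (fun z => z) Real.pi R p =
        (1 / (2 * Real.pi) ^ D) *
          ((∫ t in {t : Fin D → ℝ | ∀ j, |t j| ≤ R}ᶜ, ‖charFun D p t‖ ^ 2) +
            (1 / N) *
              ∫ t in {t : Fin D → ℝ | ∀ j, |t j| ≤ R}, (1 - ‖charFun D p t‖ ^ 2)) := by
  intro R hR N hN
  have hprob : IsProbabilityMeasure (volume.withDensity fun x => ENNReal.ofReal (p x)) := by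
    constructor
    rw [withDensity_apply _ MeasurableSet.univ, Measure.restrict_univ,
      ← ofReal_integral_eq_lintegral_ofReal hp_int (Filter.Eventually.of_forall hp_nonneg),
      hp_one, ENNReal.ofReal_one]
  have : IsProbabilityMeasure (sampleMeasure D N p) := by
    unfold sampleMeasure; infer_instance
  have hfin : IsFiniteMeasure (volume.restrict {t : Fin D → ℝ | ∀ j, |t j| ≤ R}) :=
    ⟨by simpa using (isCompact_box D R).measure_lt_top⟩
  have hPc : Continuous (_root_.charFun D p) := continuous_cF D hp_int.ofReal
  have hPle : ∀ t, ‖_root_.charFun D p t‖ ≤ 1 := by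
    intro t
    refine (norm_integral_le_integral_norm _).trans ?_
    rw [← hp_one]
    refine le_of_eq (integral_congr_ae (Filter.Eventually.of_forall fun x => ?_))
    dsimp only
    rw [norm_mul, mul_comm Complex.I, Complex.norm_exp_ofReal_mul_I, one_mul, Complex.norm_real,
      Real.norm_of_nonneg (hp_nonneg x)]
  have hInt : Integrable (fun z : (Fin N → Fin D → ℝ) × (Fin D → ℝ) =>
      ‖ecf D N z.1 z.2 - _root_.charFun D p z.2‖ ^ 2)
      ((sampleMeasure D N p).prod (volume.restrict {t : Fin D → ℝ | ∀ j, |t j| ≤ R})) := by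
    have hc := continuous_ecf D N
    refine Integrable.of_bound (Continuous.aestronglyMeasurable (by fun_prop)) 4
      (Filter.Eventually.of_forall fun z => ?_)
    rw [Real.norm_of_nonneg (by positivity)]
    have h2 : ‖ecf D N z.1 z.2 - _root_.charFun D p z.2‖ ≤ 2 :=
      (norm_sub_le _ _).trans (by linarith [norm_ecf_le D N z.1 z.2, hPle z.2])
    nlinarith [norm_nonneg (ecf D N z.1 z.2 - _root_.charFun D p z.2)]
  -- Integrate the samplewise identity over the sample and exchange the two integrals on the box.
  unfold MISE
  simp_rw [ise_eq D N hR p hp_int hp_sq]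
  rw [integral_const_mul, integral_add hInt.integral_prod_left (integrable_const _),
    integral_const, integral_integral_swap hInt]
  simp_rw [integral_ecf_sub_sq D N hN p hp_meas hp_nonneg]
  rw [integral_const_mul]
  simp only [probReal_univ, one_smul, one_div]
  rw [add_comm]
end

section
/- Let g: ℝ^D → ℂ satisfy |g(t)| ≤ C₁ exp(−C₂ Σ_{j=1}^D |t_j|^α) almost everywhere, for constants C₁, C₂ > 0 and α > 0. Then there exists a constant C₃ (depending on α, D, C₁, C₂) such that for all sufficiently large R, ∫_{ℝ^D \ [−R,R]^D} |g(t)|² dt ≤ C₃ R^{max{1−α, 0}} exp(−2 C₂ R^α). -/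
/-!
Squaring the envelope gives `‖g t‖² ≤ C₁² ∏ᵢ exp (-c |tᵢ|^α)` with `c = 2 C₂`. The complement of the
cube is covered by the slabs `{|t_j| > R}`, and by Fubini the integral of the product over one slab
is `(∫_{|x| > R} exp (-c |x|^α)) * (∫ exp (-c |x|^α))^(D-1)`, so only the one-dimensional tail
matters (`integral_Ioi_exp_neg_mul_rpow_le`).

For that tail, put `p = max (1 - α) 0` and `F x = -x^p exp (-c x^α)`. Then
`F' x = (c α x^(p+α-1) - p x^(p-1)) exp (-c x^α)`. Since `p + α - 1 ≥ 0` and `p < 1`, the first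
factor is at least `c α / 2` for large `x`, so `exp (-c x^α) ≤ 2 / (c α) * F' x` there, and
integrating over `(R, ∞)` gives the bound `2 / (c α) * R^p exp (-c R^α)`.
-/

open MeasureTheory Real Finset

lemma integrable_exp_neg_mul_abs_rpow {c α : ℝ} (hc : 0 < c) (hα : 0 < α) :
    Integrable (fun x : ℝ => exp (-c * |x| ^ α)) := by
  -- A function with nonzero Bochner integral is integrable.
  refine Integrable.of_integral_ne_zero ?_
  rw [integral_comp_abs (f := fun x => exp (-c * x ^ α)), integral_exp_neg_mul_rpow hα hc]
  have : 0 < Gamma (1 / α + 1) := Gamma_pos_of_pos (by positivity)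
  positivity

/-- The one-dimensional tail estimate, by comparison with the derivative of
`-x ^ max (1 - α) 0 * exp (-c * x ^ α)`. -/
lemma integral_Ioi_exp_neg_mul_rpow_le {c α : ℝ} (hc : 0 < c) (hα : 0 < α) :
    ∃ R₀ : ℝ, 0 < R₀ ∧ ∀ R : ℝ, R₀ ≤ R →
      ∫ x in Set.Ioi R, exp (-c * x ^ α)
        ≤ 2 / (c * α) * (R ^ max (1 - α) 0 * exp (-c * R ^ α)) := by
  set p := max (1 - α) 0 with hp
  have hp0 : 0 ≤ p := le_max_right _ _
  have hpα : 0 ≤ p + α - 1 := by have := le_max_left (1 - α) 0; linarith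
  have hp1 : p < 1 := max_lt (by linarith) one_pos
  have hlim : Filter.Tendsto (fun x : ℝ => x ^ (-(1 - p))) Filter.atTop (nhds 0) :=
    tendsto_rpow_neg_atTop (by linarith)
  have hev := hlim.eventually (ge_mem_nhds (show 0 < c * α / 2 by positivity))
  obtain ⟨A, hA⟩ := Filter.eventually_atTop.1 hev
  refine ⟨max A 1, by positivity, fun R hR => ?_⟩
  have hAR : A ≤ R := (le_max_left _ _).trans hR
  have h1R : 1 ≤ R := (le_max_right _ _).trans hR
  have hderiv : ∀ x ∈ Set.Ici R,
      HasDerivAt (fun x : ℝ => -(2 / (c * α)) * (x ^ p * exp (-c * x ^ α)))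
        (2 / (c * α) * ((c * α * x ^ (p + α - 1) - p * x ^ (p - 1)) * exp (-c * x ^ α))) x := by
    intro x hx
    have hx0 : 0 < x := by have : R ≤ x := hx; linarith
    have h1 := hasDerivAt_rpow_const (x := x) (p := p) (Or.inl hx0.ne')
    have h2 := ((hasDerivAt_rpow_const (x := x) (p := α) (Or.inl hx0.ne')).const_mul (-c)).exp
    refine ((h1.mul h2).const_mul (-(2 / (c * α)))).congr_deriv ?_
    have : x ^ (p + α - 1) = x ^ p * x ^ (α - 1) := by
      rw [← rpow_add hx0]; ring_nf
    rw [this]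
    ring
  have hbound : ∀ x ∈ Set.Ioi R, exp (-c * x ^ α) ≤
      2 / (c * α) * ((c * α * x ^ (p + α - 1) - p * x ^ (p - 1)) * exp (-c * x ^ α)) := by
    intro x hx
    have hRx : R < x := hx
    have h1 : 1 ≤ x ^ (p + α - 1) := one_le_rpow (by linarith) hpα
    have h2 : x ^ (p - 1) ≤ c * α / 2 := by
      have := hA x (by linarith)
      rwa [neg_sub] at this
    have h3 : 0 ≤ x ^ (p - 1) := rpow_nonneg (by linarith) _
    have h4 : p * x ^ (p - 1) ≤ c * α / 2 := by nlinarith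
    have hcα : 0 < c * α := by positivity
    have h5 : c * α / 2 ≤ c * α * x ^ (p + α - 1) - p * x ^ (p - 1) := by nlinarith
    calc exp (-c * x ^ α) = 2 / (c * α) * (c * α / 2 * exp (-c * x ^ α)) := by field_simp
      _ ≤ _ := by gcongr
  have hpos : ∀ x ∈ Set.Ioi R, 0 ≤
      2 / (c * α) * ((c * α * x ^ (p + α - 1) - p * x ^ (p - 1)) * exp (-c * x ^ α)) :=
    fun x hx => (exp_pos _).le.trans (hbound x hx)
  have htend : Filter.Tendsto (fun x : ℝ => -(2 / (c * α)) * (x ^ p * exp (-c * x ^ α)))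
      Filter.atTop (nhds 0) := by
    -- Substitute `y = x ^ α`, so that `x ^ p = y ^ (p / α)`.
    have h := ((tendsto_rpow_mul_exp_neg_mul_atTop_nhds_zero (p / α) c hc).comp
      (tendsto_rpow_atTop hα)).const_mul (-(2 / (c * α)))
    rw [mul_zero] at h
    refine h.congr' ?_
    filter_upwards [Filter.eventually_ge_atTop 0] with x hx
    simp only [Function.comp]
    rw [← rpow_mul hx, mul_div_cancel₀ _ hα.ne']
  have hint := integrableOn_Ioi_deriv_of_nonneg' hderiv hpos htend
  have heq := integral_Ioi_of_hasDerivAt_of_nonneg' hderiv hpos htend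
  calc ∫ x in Set.Ioi R, exp (-c * x ^ α)
      ≤ ∫ x in Set.Ioi R,
        2 / (c * α) * ((c * α * x ^ (p + α - 1) - p * x ^ (p - 1)) * exp (-c * x ^ α)) := by
        refine integral_mono_of_nonneg (Filter.Eventually.of_forall fun x => (exp_pos _).le)
          hint ?_
        filter_upwards [ae_restrict_mem measurableSet_Ioi] with x hx using hbound x hx
    _ = _ := by rw [heq]; ring

lemma integral_indicator_exp_neg_mul_abs_rpow {c α R : ℝ} (hR : 0 ≤ R) :
    ∫ x : ℝ, (Set.Ioi R).indicator (fun y => exp (-c * y ^ α)) |x|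
      = 2 * ∫ x in Set.Ioi R, exp (-c * x ^ α) := by
  rw [integral_comp_abs (f := (Set.Ioi R).indicator (fun y => exp (-c * y ^ α))),
    setIntegral_indicator measurableSet_Ioi,
    Set.inter_eq_right.2 (Set.Ioi_subset_Ioi hR)]

/-- tail bound on `∫_{ℝ^D ∖ [−R,R]^D} ‖g(t)‖² dt` for a supersmooth-type
envelope `‖g(t)‖ ≤ C₁ exp(−C₂ Σ_j |t_j|^α)`. -/
theorem tail_sq_integral_supersmooth_envelope
    (D : ℕ) (hD : 0 < D)
    (g : (Fin D → ℝ) → ℂ) (hg : Measurable g)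
    (α C₁ C₂ : ℝ) (hα : 0 < α) (hC₁ : 0 < C₁) (hC₂ : 0 < C₂)
    (henv : ∀ᵐ t : Fin D → ℝ,
      ‖g t‖ ≤ C₁ * Real.exp (-C₂ * ∑ j : Fin D, |t j| ^ α)) :
    ∃ C₃ : ℝ, 0 < C₃ ∧ ∃ R₀ : ℝ, 0 < R₀ ∧ ∀ R : ℝ, R₀ ≤ R →
      (∫ t in {t : Fin D → ℝ | ∀ j, |t j| ≤ R}ᶜ, ‖g t‖ ^ 2)
        ≤ C₃ * R ^ max (1 - α) 0 * Real.exp (-2 * C₂ * R ^ α) := by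
  set c := 2 * C₂ with hcdef
  have hc : 0 < c := by positivity
  obtain ⟨R₀, hR₀, htail⟩ := integral_Ioi_exp_neg_mul_rpow_le hc hα
  set h : ℝ → ℝ := fun x => exp (-c * |x| ^ α) with hh
  have hhint : Integrable h := integrable_exp_neg_mul_abs_rpow hc hα
  have hI : 0 < ∫ x, h x := integral_exp_pos hhint
  set I := ∫ x, h x with hIdef
  refine ⟨C₁ ^ 2 * (D * (2 * (2 / (c * α)) * I ^ (D - 1))), by positivity, R₀, hR₀,
    fun R hR => ?_⟩
  set S : Set (Fin D → ℝ) := {t : Fin D → ℝ | ∀ j, |t j| ≤ R}ᶜ with hS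
  have hSm : MeasurableSet S := by
    refine MeasurableSet.compl ?_
    rw [Set.ofPred_forall]
    exact MeasurableSet.iInter fun j => measurableSet_le (by fun_prop) measurable_const
  -- `f` is the one-dimensional envelope cut off to `|x| > R`; in `φ j` it sits at coordinate `j`.
  set f : ℝ → ℝ := fun x => (Set.Ioi R).indicator (fun y => exp (-c * y ^ α)) |x| with hf
  have hfh : f = {x : ℝ | R < |x|}.indicator h := by
    ext x
    simp [hf, hh, Set.indicator]
  have hfint : Integrable f := by
    rw [hfh]
    exact hhint.indicator (measurableSet_lt measurable_const (by fun_prop))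
  have hf0 : ∀ x, 0 ≤ f x := fun x => by
    rw [hfh]; exact Set.indicator_nonneg (fun y _ => (exp_pos _).le) x
  set φ : Fin D → (Fin D → ℝ) → ℝ := fun j t => ∏ i, (if i = j then f else h) (t i) with hφ
  have hφint : ∀ j, Integrable (φ j) := fun j => by
    refine Integrable.fintype_prod (f := fun i => if i = j then f else h) fun i => ?_
    split_ifs <;> assumption
  have hφ0 : ∀ j t, 0 ≤ φ j t := fun j t => by
    refine Finset.prod_nonneg fun i _ => ?_
    split_ifs
    · exact hf0 _
    · exact (exp_pos _).le
  have hφI : ∀ j, ∫ t, φ j t = (∫ x, f x) * I ^ (D - 1) := fun j => by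
    rw [hφ, integral_fintype_prod_volume_eq_prod (fun i => if i = j then f else h),
      ← Finset.mul_prod_erase _ _ (Finset.mem_univ j), if_pos rfl]
    congr 1
    rw [Finset.prod_congr rfl (g := fun _ => I)]
    · simp
    · intro i hi
      rw [if_neg (Finset.ne_of_mem_erase hi)]
  have hfI : ∫ x, f x ≤ 2 * (2 / (c * α) * (R ^ max (1 - α) 0 * exp (-c * R ^ α))) := by
    rw [hf, integral_indicator_exp_neg_mul_abs_rpow (hR₀.le.trans hR)]
    linarith [htail R hR]
  have hdom : ∀ᵐ t ∂(volume.restrict S), ‖g t‖ ^ 2 ≤ C₁ ^ 2 * ∑ j, φ j t := by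
    filter_upwards [ae_restrict_of_ae henv, ae_restrict_mem hSm] with t ht htS
    obtain ⟨j, hj⟩ : ∃ j, R < |t j| := by simpa [hS] using htS
    have hsq : (C₁ * exp (-C₂ * ∑ j : Fin D, |t j| ^ α)) ^ 2 = C₁ ^ 2 * ∏ i, h (t i) := by
      rw [mul_pow, ← exp_nat_mul, hh, ← exp_sum, ← Finset.mul_sum]
      congr 2
      push_cast
      ring
    have hφj : φ j t = ∏ i, h (t i) := by
      refine Finset.prod_congr rfl fun i _ => ?_
      split_ifs with hij
      · subst hij
        rw [hfh]
        exact Set.indicator_of_mem (s := {x : ℝ | R < |x|}) hj h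
      · rfl
    calc ‖g t‖ ^ 2 ≤ (C₁ * exp (-C₂ * ∑ j : Fin D, |t j| ^ α)) ^ 2 := by gcongr
      _ = C₁ ^ 2 * φ j t := by rw [hsq, hφj]
      _ ≤ C₁ ^ 2 * ∑ j, φ j t := by
        gcongr
        exact Finset.single_le_sum (f := fun j => φ j t) (fun j _ => hφ0 j t) (Finset.mem_univ j)
  have hsum : Integrable (fun t => C₁ ^ 2 * ∑ j, φ j t) :=
    (integrable_finsetSum _ fun j _ => hφint j).const_mul _
  calc ∫ t in S, ‖g t‖ ^ 2 ≤ ∫ t in S, C₁ ^ 2 * ∑ j, φ j t :=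
        integral_mono_of_nonneg (Filter.Eventually.of_forall fun t => by positivity)
          hsum.integrableOn hdom
    _ ≤ ∫ t, C₁ ^ 2 * ∑ j, φ j t :=
        setIntegral_le_integral hsum (Filter.Eventually.of_forall fun t =>
          mul_nonneg (by positivity) (Finset.sum_nonneg fun j _ => hφ0 j t))
    _ = C₁ ^ 2 * (D * ((∫ x, f x) * I ^ (D - 1))) := by
        rw [integral_const_mul, integral_finsetSum _ fun j _ => hφint j]
        simp [hφI]
    _ ≤ C₁ ^ 2 * (D * ((2 * (2 / (c * α) * (R ^ max (1 - α) 0 * exp (-c * R ^ α))))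
          * I ^ (D - 1))) := by gcongr
    _ = _ := by
        rw [show -2 * C₂ * R ^ α = -c * R ^ α by rw [hcdef]; ring]
        ring
end

section
/- Let m ∈ ℕ and let φ: ℝ → ℝ satisfy ∫_ℝ φ(sin z / z) z^j dz = 0 for all 1 ≤ j ≤ m and ∫_ℝ |φ(sin z / z)| |z|^j dz < ∞ for all m+1 ≤ j ≤ 2m+2, with A := ∫_ℝ φ(sin z / z) dz ≠ 0. Suppose (v_1, k_1), …, (v_N, k_N) come from the regression model v_j = f(k_j) + ε_j with i.i.d. keys of density p and independent mean-zero noises, where p and f are of class C^{m+1} with all partial derivatives up to order m+1 uniformly bounded. Define a_{N,R}(k) := (R^D/(N A^D)) Σ_{i=1}^N v_i ∏_{j=1}^D φ( sin(R(k_j − k_{ij})) / (R(k_j − k_{ij})) ). Then there exist constants c̄ and c' such that for all R ≥ c̄ and all k ∈ ℝ^D, |E[ a_{N,R}(k) − f(k) p_{N,R}^φ(k) ]| ≤ c' / R^{m+1}. -/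
/-!
Write `ψ z = φ (sin z / z)`. Since the noises are centred and independent of the keys, linearity of
the expectation and the substitution `z = R (k - x)` give
`E[a_{N,R}(k) - f(k) p_{N,R}(k)] = A⁻ᴰ ∫ (∏ⱼ ψ(zⱼ)) h(k - z / R) dz` with `h = (f - f(k)) p`
(`integral_regression_pair`, `integral_rescale`). The function `h` vanishes at `k`, and its
derivatives of order `m + 1` are bounded uniformly in `k`.

The multivariate Taylor expansion is avoided by smoothing one coordinate at a time. In one variable,
the vanishing moments of `ψ` kill every nonconstant term of the Taylor polynomial, so
`∫ ψ(t) g(t) dt` differs from `(∫ ψ) g(0)` by at most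
`sup |g^(m+1)| * ∫ |ψ(t)| |t|^(m+1) dt` (`abs_integral_mul_sub_le`). For `g` the restriction of
`z ↦ h(k - z / R)` to a line parallel to an axis, the supremum is `O(R^-(m+1))`. By induction on the
dimension (`exists_abs_integral_prod_sub_le`), the integral against the product kernel differs from
`(∫ ψ)ᴰ h(k) = 0` by `O(R^-(m+1))`.
-/

open MeasureTheory Real Finset

/-- The generalized Fourier density estimator built from the keys of the sample
`kv i = (k_i, ε_i)`, with `A` passed explicitly. -/
noncomputable def pEstKV (D N : ℕ) (φ : ℝ → ℝ) (A R : ℝ)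
    (kv : Fin N → (Fin D → ℝ) × ℝ) (k : Fin D → ℝ) : ℝ :=
  R ^ D / (N * A ^ D) *
    ∑ i : Fin N, ∏ j : Fin D, φ (sincLike (R * (k j - (kv i).1 j)))

/-- The numerator statistic
`a_{N,R}(k) = (R^D/(N A^D)) Σ_i v_i Π_j φ(sin(R(k_j − k_{ij})) / (R(k_j − k_{ij})))`,
where `v_i = f(k_i) + ε_i` and `kv i = (k_i, ε_i)`. -/
noncomputable def aEst (D N : ℕ) (φ : ℝ → ℝ) (A R : ℝ) (f : (Fin D → ℝ) → ℝ)
    (kv : Fin N → (Fin D → ℝ) × ℝ) (k : Fin D → ℝ) : ℝ :=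
  R ^ D / (N * A ^ D) *
    ∑ i : Fin N, (f (kv i).1 + (kv i).2) *
      ∏ j : Fin D, φ (sincLike (R * (k j - (kv i).1 j)))

/-- The law of an i.i.d. sample of size `N` of pairs (key, noise): the keys have density `p`
on `ℝ^D`, and the noises are independent of the keys with law `ν`. -/
noncomputable def regMeasure (D N : ℕ) (p : (Fin D → ℝ) → ℝ) (ν : Measure ℝ) :
    Measure (Fin N → (Fin D → ℝ) × ℝ) :=
  Measure.pi fun _ : Fin N =>
    (volume.withDensity fun x => ENNReal.ofReal (p x)).prod ν

/-- Two-sided Taylor estimate at `0`; the factor `1 / (m + 1)!` in the remainder is discarded. -/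
theorem abs_sub_taylor_le {m : ℕ} {g : ℝ → ℝ} (hg : ContDiff ℝ (m + 1) g) {M : ℝ}
    (hM : ∀ t, |iteratedDeriv (m + 1) g t| ≤ M) (z : ℝ) :
    |g z - ∑ i ∈ range (m + 1), ((i.factorial : ℝ)⁻¹ * iteratedDeriv i g 0) * z ^ i|
      ≤ M * |z| ^ (m + 1) := by
  have hM0 : 0 ≤ M := (abs_nonneg _).trans (hM 0)
  rcases eq_or_ne z 0 with rfl | hz
  · rw [Finset.sum_eq_single 0]
    · simp
    · intro i _ hi
      simp [hi]
    · simp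
  obtain ⟨s, -, hrem⟩ := taylor_mean_remainder_lagrange_iteratedDeriv (x₀ := 0) (x := z) (n := m)
    hz.symm hg.contDiffOn
  have hsum : taylorWithinEval g m (Set.uIcc 0 z) 0 z
      = ∑ i ∈ range (m + 1), ((i.factorial : ℝ)⁻¹ * iteratedDeriv i g 0) * z ^ i := by
    rw [taylor_within_apply]
    refine Finset.sum_congr rfl fun i hi => ?_
    rw [iteratedDerivWithin_eq_iteratedDeriv (uniqueDiffOn_uIcc hz.symm) _ Set.left_mem_uIcc]
    · simp only [sub_zero, smul_eq_mul]; ring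
    · refine (hg.of_le ?_).contDiffAt
      have : i ≤ m + 1 := (Finset.mem_range.1 hi).le
      exact_mod_cast this
  rw [← hsum, hrem, sub_zero, abs_div, abs_mul, abs_pow, Nat.abs_cast]
  have hf : (1 : ℝ) ≤ ((m + 1).factorial : ℝ) := by exact_mod_cast Nat.factorial_pos (m + 1)
  refine (div_le_self (by positivity) hf).trans ?_
  gcongr
  exact hM s

/-- One-dimensional bias estimate: integrating the Taylor polynomial of `g` against `ψ` leaves
only its constant term, because the moments of orders `1, …, m` vanish. -/
theorem abs_integral_mul_sub_le {m : ℕ} {ψ : ℝ → ℝ} (hψ : Integrable ψ)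
    (hmom : ∀ j : ℕ, 1 ≤ j → j ≤ m → ∫ z : ℝ, ψ z * z ^ j = 0)
    (habs : Integrable (fun z : ℝ => |ψ z| * |z| ^ (m + 1)))
    {g : ℝ → ℝ} (hg : ContDiff ℝ (m + 1) g) {M : ℝ}
    (hM : ∀ t, |iteratedDeriv (m + 1) g t| ≤ M) (hint : Integrable (fun z => ψ z * g z)) :
    |(∫ z, ψ z * g z) - (∫ z, ψ z) * g 0| ≤ M * ∫ z, |ψ z| * |z| ^ (m + 1) := by
  have hpow : ∀ i ∈ range (m + 1), Integrable (fun z : ℝ => ψ z * z ^ i) := by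
    intro i hi
    refine (hψ.abs.add habs).mono (hψ.aestronglyMeasurable.mul (by fun_prop)) ?_
    refine Filter.Eventually.of_forall fun z => ?_
    have h1 : |z| ^ i ≤ 1 + |z| ^ (m + 1) := by
      rcases le_total |z| 1 with h | h
      · exact (pow_le_one₀ (abs_nonneg z) h).trans (le_add_of_nonneg_right (by positivity))
      · exact (pow_le_pow_right₀ h (Finset.mem_range.1 hi).le).trans
          (le_add_of_nonneg_left zero_le_one)
    have h2 : 0 ≤ |ψ z| + |ψ z| * |z| ^ (m + 1) := by positivity
    simp only [Real.norm_eq_abs, Pi.add_apply, abs_mul, abs_pow]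
    rw [abs_of_nonneg h2]
    calc |ψ z| * |z| ^ i ≤ |ψ z| * (1 + |z| ^ (m + 1)) := by gcongr
      _ = _ := by ring
  set c : ℕ → ℝ := fun i => (i.factorial : ℝ)⁻¹ * iteratedDeriv i g 0 with hc
  have hterm : ∀ i ∈ range (m + 1), Integrable (fun z : ℝ => c i * (ψ z * z ^ i)) :=
    fun i hi => (hpow i hi).const_mul _
  have hP : ∫ z, ∑ i ∈ range (m + 1), c i * (ψ z * z ^ i) = (∫ z, ψ z) * g 0 := by
    rw [integral_finsetSum _ hterm, Finset.sum_eq_single 0]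
    · rw [integral_const_mul]
      simp [hc, mul_comm]
    · intro i hi h0
      rw [integral_const_mul, hmom i (Nat.one_le_iff_ne_zero.2 h0)
        (Nat.lt_succ_iff.1 (Finset.mem_range.1 hi)), mul_zero]
    · simp
  rw [← hP, ← integral_sub hint (integrable_finsetSum _ hterm), ← integral_const_mul,
    ← Real.norm_eq_abs]
  refine norm_integral_le_of_norm_le (habs.const_mul M) (Filter.Eventually.of_forall fun z => ?_)
  have : ψ z * g z - ∑ i ∈ range (m + 1), c i * (ψ z * z ^ i)
      = ψ z * (g z - ∑ i ∈ range (m + 1), c i * z ^ i) := by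
    rw [mul_sub, Finset.mul_sum]
    congr 1
    exact Finset.sum_congr rfl fun i _ => by ring
  rw [this, Real.norm_eq_abs, abs_mul]
  calc _ ≤ |ψ z| * (M * |z| ^ (m + 1)) := by gcongr; exact abs_sub_taylor_le hg hM z
    _ = _ := by ring

theorem integrable_prod_mul {n : ℕ} {ψ : ℝ → ℝ} (hψ : Integrable ψ)
    {H : (Fin n → ℝ) → ℝ} (hH : Continuous H) {C : ℝ} (hC : ∀ z, |H z| ≤ C) :
    Integrable (fun z : Fin n → ℝ => (∏ j, ψ (z j)) * H z) :=
  (Integrable.fintype_prod (f := fun _ : Fin n => ψ) (μ := fun _ => volume) fun _ => hψ).mul_bdd (c := C)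
    hH.aestronglyMeasurable (Filter.Eventually.of_forall hC)

/-- Tensorization: if integrating `H` against `ψ` in any single coordinate differs by at most `ε`
from setting that coordinate to `0` and multiplying by `∫ ψ`, then integrating against the product
kernel differs from `(∫ ψ) ^ n * H 0` by at most `K * ε`, where `K` depends only on `ψ` and `n`. -/
theorem exists_abs_integral_prod_sub_le {ψ : ℝ → ℝ} (hψ : Integrable ψ) (n : ℕ) :
    ∃ K : ℝ, 0 ≤ K ∧ ∀ (H : (Fin n → ℝ) → ℝ) (C ε : ℝ), Continuous H → (∀ z, |H z| ≤ C) →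
      (∀ (x : Fin n → ℝ) (j : Fin n),
        |(∫ t, ψ t * H (Function.update x j t)) - (∫ t, ψ t) * H (Function.update x j 0)| ≤ ε) →
      |(∫ z : Fin n → ℝ, (∏ j, ψ (z j)) * H z) - (∫ t, ψ t) ^ n * H 0| ≤ K * ε := by
  induction n with
  | zero =>
    refine ⟨0, le_rfl, fun H C ε _ _ _ => ?_⟩
    have h0 : ∀ z : Fin 0 → ℝ, H z = H 0 := fun z => by rw [Subsingleton.elim z 0]
    simp [h0, Measure.real, volume_pi]
  | succ n ih =>
    obtain ⟨K, hK, ih⟩ := ih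
    set A := ∫ t, ψ t with hA
    have hQ := Integrable.fintype_prod (f := fun _ : Fin n => ψ) (μ := fun _ => volume)
      fun _ => hψ
    refine ⟨(∫ y : Fin n → ℝ, |∏ j, ψ (y j)|) + |A| * K, by positivity,
      fun H C ε hH hC hε => ?_⟩
    have hint := integrable_prod_mul hψ hH hC
    have hmp := (volume_preserving_piFinSuccAbove (fun _ : Fin (n + 1) => ℝ) 0).symm
    have hint2 : Integrable (fun q : ℝ × (Fin n → ℝ) =>
        (∏ j, ψ (q.2 j)) * (ψ q.1 * H (Fin.cons q.1 q.2))) := by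
      have := (hmp.integrable_comp_emb (MeasurableEquiv.measurableEmbedding _)).2 hint
      refine this.congr (Filter.Eventually.of_forall fun q => ?_)
      simp [Fin.prod_univ_succ, MeasurableEquiv.piFinSuccAbove, Fin.consEquiv]
      ring
    have hsplit : ∫ z : Fin (n + 1) → ℝ, (∏ j, ψ (z j)) * H z
        = ∫ y : Fin n → ℝ, (∏ j, ψ (y j)) * ∫ t, ψ t * H (Fin.cons t y) := by
      rw [← hmp.integral_comp (MeasurableEquiv.measurableEmbedding _)]
      simp_rw [← integral_const_mul]
      rw [← integral_prod_symm _ hint2]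
      refine integral_congr_ae (Filter.Eventually.of_forall fun q => ?_)
      simp [Fin.prod_univ_succ, MeasurableEquiv.piFinSuccAbove, Fin.consEquiv]
      ring
    have hcons0 : Continuous fun y : Fin n → ℝ => (Fin.cons 0 y : Fin (n + 1) → ℝ) :=
      continuous_const.finCons continuous_id
    have hI := ih (fun y => H (Fin.cons 0 y)) C ε (hH.comp hcons0) (fun y => hC _)
      (fun x j => by simpa only [Fin.cons_update] using hε (Fin.cons 0 x) j.succ)
    have hz : (Fin.cons 0 0 : Fin (n + 1) → ℝ) = 0 := by
      ext j; refine Fin.cases ?_ (fun i => ?_) j <;> simp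
    simp only [hz] at hI
    have hint3 : Integrable fun y : Fin n → ℝ =>
        (∏ j, ψ (y j)) * ∫ t, ψ t * H (Fin.cons t y) := by
      simp_rw [← integral_const_mul]
      exact hint2.integral_prod_right
    have hint4 : Integrable fun y : Fin n → ℝ => A * ((∏ j, ψ (y j)) * H (Fin.cons 0 y)) :=
      (integrable_prod_mul hψ (hH.comp hcons0) (fun y => hC _)).const_mul A
    -- Replacing the first coordinate by `0` costs `ε` for each `y`; integrate against `∏ |ψ|`.
    have h1 : |(∫ y : Fin n → ℝ, (∏ j, ψ (y j)) * ∫ t, ψ t * H (Fin.cons t y))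
        - A * ∫ y : Fin n → ℝ, (∏ j, ψ (y j)) * H (Fin.cons 0 y)|
        ≤ (∫ y : Fin n → ℝ, |∏ j, ψ (y j)|) * ε := by
      rw [← integral_const_mul, ← integral_sub hint3 hint4, ← integral_mul_const,
        ← Real.norm_eq_abs]
      refine norm_integral_le_of_norm_le (hQ.abs.mul_const ε)
        (Filter.Eventually.of_forall fun y => ?_)
      have := hε (Fin.cons 0 y) 0
      simp only [Fin.update_cons_zero] at this
      rw [Real.norm_eq_abs, show ∀ a b c : ℝ, a * b - A * (a * c) = a * (b - A * c) by intros; ring,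
        abs_mul]
      gcongr
    rw [hsplit]
    calc _ = |((∫ y : Fin n → ℝ, (∏ j, ψ (y j)) * ∫ t, ψ t * H (Fin.cons t y))
        - A * ∫ y : Fin n → ℝ, (∏ j, ψ (y j)) * H (Fin.cons 0 y))
        + A * ((∫ y : Fin n → ℝ, (∏ j, ψ (y j)) * H (Fin.cons 0 y)) - A ^ n * H 0)| := by
          congr 1; ring
      _ ≤ _ := abs_add_le _ _
      _ ≤ (∫ y : Fin n → ℝ, |∏ j, ψ (y j)|) * ε + |A| * (K * ε) := by
          rw [abs_mul A]; gcongr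
      _ = _ := by ring

/-- Bound on the derivatives of `h` restricted to a line in direction `v`. -/
theorem abs_iteratedDeriv_line_le {E : Type*} [NormedAddCommGroup E] [NormedSpace ℝ E] {n : ℕ}
    {h : E → ℝ} (hh : ContDiff ℝ n h) {M : ℝ} (hM : ∀ x, ‖iteratedFDeriv ℝ n h x‖ ≤ M)
    (a v : E) (t : ℝ) :
    |iteratedDeriv n (fun s : ℝ => h (a + s • v)) t| ≤ M * ‖v‖ ^ n := by
  rw [← Real.norm_eq_abs, ← norm_iteratedFDeriv_eq_norm_iteratedDeriv]
  have h1 : (fun s : ℝ => h (a + s • v))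
      = (fun y => h (a + y)) ∘ (ContinuousLinearMap.toSpanSingleton ℝ v) := by
    ext s; simp [ContinuousLinearMap.toSpanSingleton_apply]
  have hs : ContDiff ℝ n (fun y => h (a + y)) := hh.comp (contDiff_const.add contDiff_id)
  rw [h1, ContinuousLinearMap.iteratedFDeriv_comp_right _ hs _ le_rfl]
  refine (ContinuousMultilinearMap.norm_compContinuousLinearMap_le _ _).trans ?_
  rw [iteratedFDeriv_comp_add_left, Finset.prod_const, Finset.card_univ, Fintype.card_fin,
    ContinuousLinearMap.norm_toSpanSingleton]
  gcongr
  exact hM _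

theorem norm_iteratedFDeriv_centered_mul_le {E : Type*} [NormedAddCommGroup E] [NormedSpace ℝ E]
    {n : ℕ} {f p : E → ℝ} (hf : ContDiff ℝ n f) (hp : ContDiff ℝ n p) {M : ℝ}
    (hfM : ∀ i ≤ n, ∀ x, ‖iteratedFDeriv ℝ i f x‖ ≤ M)
    (hpM : ∀ i ≤ n, ∀ x, ‖iteratedFDeriv ℝ i p x‖ ≤ M) (k x : E) :
    ‖iteratedFDeriv ℝ n (fun y => (f y - f k) * p y) x‖ ≤ (2 ^ n + 1) * M ^ 2 := by
  have hM0 : 0 ≤ M := (norm_nonneg _).trans (hfM 0 (Nat.zero_le _) 0)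
  have hfk : ‖f k‖ ≤ M := by simpa using hfM 0 (Nat.zero_le _) k
  have h1 : (fun y => (f y - f k) * p y) = (fun y => f y * p y) - (f k • p) := by
    ext y; simp [sub_mul]
  rw [h1, iteratedFDeriv_sub_apply (g := f k • p) (hf.mul hp).contDiffAt
      (hp.const_smul (f k)).contDiffAt,
    iteratedFDeriv_const_smul_apply hp.contDiffAt]
  refine (norm_sub_le _ _).trans ?_
  have h2 : ‖iteratedFDeriv ℝ n (fun y => f y * p y) x‖ ≤ 2 ^ n * M ^ 2 := by
    refine (norm_iteratedFDeriv_mul_le hf hp x le_rfl).trans ?_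
    have : (2 : ℝ) ^ n * M ^ 2 = ∑ i ∈ range (n + 1), (n.choose i : ℝ) * M * M := by
      simp_rw [mul_assoc, ← Finset.sum_mul]
      rw [← Nat.cast_sum, Nat.sum_range_choose]
      push_cast; ring
    rw [this]
    refine Finset.sum_le_sum fun i hi => ?_
    gcongr
    · exact hfM i (Nat.lt_succ_iff.1 (Finset.mem_range.1 hi)) x
    · exact hpM _ (Nat.sub_le _ _) x
  have h3 : ‖f k • iteratedFDeriv ℝ n p x‖ ≤ M * M := by
    rw [norm_smul]
    gcongr
    exact hpM n le_rfl x
  linarith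

/-- The deterministic bias bound, in the variable `z = R (k - x)`. The constant is uniform in `k`
since the derivatives of `(f - f k) * p` are bounded independently of `k`. -/
theorem exists_smoothing_bound {D m : ℕ} {ψ : ℝ → ℝ} (hψ : Integrable ψ)
    (hmom : ∀ j : ℕ, 1 ≤ j → j ≤ m → ∫ z : ℝ, ψ z * z ^ j = 0)
    (habs : Integrable (fun z : ℝ => |ψ z| * |z| ^ (m + 1)))
    {p f : (Fin D → ℝ) → ℝ}
    (hp : ContDiff ℝ (m + 1 : ℕ) p) (hf : ContDiff ℝ (m + 1 : ℕ) f) {M : ℝ}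
    (hpM : ∀ i ≤ m + 1, ∀ x, ‖iteratedFDeriv ℝ i p x‖ ≤ M)
    (hfM : ∀ i ≤ m + 1, ∀ x, ‖iteratedFDeriv ℝ i f x‖ ≤ M) :
    ∃ c : ℝ, 0 ≤ c ∧ ∀ R : ℝ, 0 < R → ∀ k : Fin D → ℝ,
      |∫ z : Fin D → ℝ, (∏ j, ψ (z j)) * ((f (k - R⁻¹ • z) - f k) * p (k - R⁻¹ • z))|
        ≤ c / R ^ (m + 1) := by
  obtain ⟨K, hK, hKb⟩ := exists_abs_integral_prod_sub_le hψ D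
  have hM0 : 0 ≤ M := (norm_nonneg _).trans (hfM 0 (Nat.zero_le _) 0)
  set M' : ℝ := (2 ^ (m + 1) + 1) * M ^ 2 with hM'
  set J : ℝ := ∫ z, |ψ z| * |z| ^ (m + 1) with hJ
  have hJ0 : 0 ≤ J := integral_nonneg fun z => by positivity
  refine ⟨K * (M' * J), by positivity, fun R hR k => ?_⟩
  set h : (Fin D → ℝ) → ℝ := fun y => (f y - f k) * p y with hh
  have hhs : ContDiff ℝ (m + 1 : ℕ) h := (hf.sub contDiff_const).mul hp
  have hhb : ∀ y, |h y| ≤ (M + M) * M := by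
    have hf0 : ∀ y, |f y| ≤ M := fun y => by simpa using hfM 0 (Nat.zero_le _) y
    have hp0 : ∀ y, |p y| ≤ M := fun y => by simpa using hpM 0 (Nat.zero_le _) y
    intro y
    rw [hh, abs_mul]
    gcongr
    · exact (abs_sub _ _).trans (add_le_add (hf0 y) (hf0 k))
    · exact hp0 y
  have hHc : Continuous fun z : Fin D → ℝ => h (k - R⁻¹ • z) :=
    hhs.continuous.comp (by fun_prop)
  have key := hKb (fun z => h (k - R⁻¹ • z)) ((M + M) * M) (M' * R⁻¹ ^ (m + 1) * J) hHc
    (fun z => hhb _) ?_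
  -- `(f - f k) * p` vanishes at `k`, so the main term `(∫ ψ) ^ D * h k` disappears.
  · have h0 : h (k - R⁻¹ • (0 : Fin D → ℝ)) = 0 := by simp [hh]
    simp only [h0, mul_zero, sub_zero] at key
    refine key.trans (le_of_eq ?_)
    rw [inv_pow]; field_simp
  · intro x j
    set v : Fin D → ℝ := -R⁻¹ • Pi.single j 1 with hv
    set a : Fin D → ℝ := k - R⁻¹ • Function.update x j 0 with ha
    have hline : ∀ t : ℝ, k - R⁻¹ • Function.update x j t = a + t • v := by
      intro t
      ext i
      rcases eq_or_ne i j with rfl | hij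
      · simp [ha, hv]; ring
      · simp [ha, hv, hij]
    have hvn : ‖v‖ = R⁻¹ := by
      rw [hv, norm_smul, Pi.norm_single]
      simp [abs_of_pos hR]
    have hg : ContDiff ℝ (m + 1 : ℕ) fun t : ℝ => h (a + t • v) := hhs.comp (by fun_prop)
    have := abs_integral_mul_sub_le hψ hmom habs (g := fun t => h (a + t • v))
      (by exact_mod_cast hg) (M := M' * R⁻¹ ^ (m + 1)) (fun t => ?_) ?_
    · simpa only [hline, zero_smul, add_zero] using this
    · rw [← hvn]
      exact abs_iteratedDeriv_line_le hhs
        (norm_iteratedFDeriv_centered_mul_le hf hp hfM hpM k) a v t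
    · exact hψ.mul_bdd (c := (M + M) * M) hg.continuous.aestronglyMeasurable
        (Filter.Eventually.of_forall fun t => hhb _)

/-- Change of variables `z = R (k - x)`; no integrability is needed. -/
theorem integral_rescale {D : ℕ} {R : ℝ} (hR : 0 < R) (k : Fin D → ℝ)
    (ψ : ℝ → ℝ) (h : (Fin D → ℝ) → ℝ) :
    R ^ D * ∫ x : Fin D → ℝ, (∏ j, ψ (R * (k j - x j))) * h x
      = ∫ z : Fin D → ℝ, (∏ j, ψ (z j)) * h (k - R⁻¹ • z) := by
  have h1 : ∀ x : Fin D → ℝ, (∏ j, ψ (R * (k j - x j))) * h x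
      = (fun w : Fin D → ℝ => (∏ j, ψ ((R • w) j)) * h (k - R⁻¹ • (R • w))) (k - x) := by
    intro x
    simp [smul_smul, inv_mul_cancel₀ hR.ne']
  simp_rw [h1]
  rw [integral_sub_left_eq_self (fun w : Fin D → ℝ => (∏ j, ψ ((R • w) j)) * h (k - R⁻¹ • (R • w)))
    volume k,
    Measure.integral_comp_smul volume
      (fun z : Fin D → ℝ => (∏ j, ψ (z j)) * h (k - R⁻¹ • z)) R]
  have : 0 < R ^ D := by positivity
  simp [abs_of_pos this, ne_of_gt this]

/-- Expectation over one (key, noise) pair: the noise has mean zero and is independent of the key,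
so it contributes nothing. -/
theorem integral_regression_pair {D : ℕ} {p f q : (Fin D → ℝ) → ℝ} (hp_meas : Measurable p)
    (hp_nonneg : ∀ x, 0 ≤ p x) (hpq : Integrable fun x => p x * q x) (b : ℝ)
    (hpfq : Integrable fun x => p x * ((f x - b) * q x))
    (ν : Measure ℝ) [IsProbabilityMeasure ν]
    [IsProbabilityMeasure (volume.withDensity fun x : Fin D → ℝ => ENNReal.ofReal (p x))]
    (hν_mean : ∫ e : ℝ, e ∂ν = 0) (hν_int : Integrable (fun e : ℝ => e) ν) :
    Integrable (fun w : (Fin D → ℝ) × ℝ => (f w.1 + w.2 - b) * q w.1)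
        ((volume.withDensity fun x => ENNReal.ofReal (p x)).prod ν) ∧
      ∫ w : (Fin D → ℝ) × ℝ, (f w.1 + w.2 - b) * q w.1
        ∂((volume.withDensity fun x => ENNReal.ofReal (p x)).prod ν)
        = ∫ x, q x * ((f x - b) * p x) := by
  set P := (volume : Measure (Fin D → ℝ)).withDensity fun x => ENNReal.ofReal (p x) with hP
  have hm : Measurable fun x => ENNReal.ofReal (p x) := hp_meas.ennreal_ofReal
  have hlt : ∀ᵐ x : Fin D → ℝ, ENNReal.ofReal (p x) < ⊤ :=
    Filter.Eventually.of_forall fun x => ENNReal.ofReal_lt_top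
  have hi : ∀ g : (Fin D → ℝ) → ℝ, Integrable (fun x => p x * g x) → Integrable g P := by
    intro g hg
    rw [hP, integrable_withDensity_iff_integrable_smul' hm hlt]
    simpa only [ENNReal.toReal_ofReal (hp_nonneg _), smul_eq_mul] using hg
  have hq := hi q hpq
  have hfq := hi _ hpfq
  have h1 : Integrable (fun w : (Fin D → ℝ) × ℝ => (f w.1 - b) * q w.1) (P.prod ν) :=
    hfq.comp_fst ν
  have h2 : Integrable (fun w : (Fin D → ℝ) × ℝ => q w.1 * w.2) (P.prod ν) :=
    hq.mul_prod hν_int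
  have he : (fun w : (Fin D → ℝ) × ℝ => (f w.1 + w.2 - b) * q w.1)
      = fun w => (f w.1 - b) * q w.1 + q w.1 * w.2 := by
    ext w; ring
  refine ⟨by rw [he]; exact h1.add h2, ?_⟩
  rw [he, integral_add h1 h2, integral_prod_mul q (fun e : ℝ => e), hν_mean, mul_zero, add_zero,
    integral_fun_fst (fun x => (f x - b) * q x)]
  rw [hP, integral_withDensity_eq_integral_toReal_smul hm hlt]
  simp only [ENNReal.toReal_ofReal (hp_nonneg _), smul_eq_mul, probReal_univ, one_mul]
  exact integral_congr_ae (Filter.Eventually.of_forall fun x => by ring)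

/-- regression bias bound
`|E[a_{N,R}(k) − f(k) p_{N,R}^φ(k)]| ≤ c' / R^{m+1}` for all `R ≥ c̄`. -/
theorem regression_bias_bound_generalized_fourier
    (D m : ℕ) (hD : 0 < D)
    (φ : ℝ → ℝ) (hφ_meas : Measurable φ)
    (A : ℝ) (hA_int : Integrable (fun z : ℝ => φ (sincLike z)))
    (hA_def : A = ∫ z : ℝ, φ (sincLike z)) (hA_ne : A ≠ 0)
    (hmom : ∀ j : ℕ, 1 ≤ j → j ≤ m → ∫ z : ℝ, φ (sincLike z) * z ^ j = 0)
    (habs : ∀ j : ℕ, m + 1 ≤ j → j ≤ 2 * m + 2 →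
      Integrable (fun z : ℝ => |φ (sincLike z)| * |z| ^ j))
    (p f : (Fin D → ℝ) → ℝ)
    (hp_meas : Measurable p) (hp_nonneg : ∀ x, 0 ≤ p x)
    (hp_int : Integrable p) (hp_one : ∫ x : Fin D → ℝ, p x = 1)
    (hp_smooth : ContDiff ℝ (m + 1) p) (hf_smooth : ContDiff ℝ (m + 1) f)
    (Md : ℝ) (hp_deriv : ∀ i : ℕ, i ≤ m + 1 → ∀ x, ‖iteratedFDeriv ℝ i p x‖ ≤ Md)
    (hf_deriv : ∀ i : ℕ, i ≤ m + 1 → ∀ x, ‖iteratedFDeriv ℝ i f x‖ ≤ Md)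
    (ν : Measure ℝ) (hν : IsProbabilityMeasure ν)
    (hν_mean : ∫ e : ℝ, e ∂ν = 0) (hν_int : Integrable (fun e : ℝ => e) ν) :
    ∃ cbar c' : ℝ, 0 < cbar ∧ 0 < c' ∧
      ∀ R : ℝ, cbar ≤ R → ∀ k : Fin D → ℝ, ∀ N : ℕ, 1 ≤ N →
        |∫ kv : Fin N → (Fin D → ℝ) × ℝ,
            (aEst D N φ A R f kv k - f k * pEstKV D N φ A R kv k) ∂(regMeasure D N p ν)|
          ≤ c' / R ^ (m + 1) := by
  set ψ : ℝ → ℝ := fun z => φ (sincLike z) with hψdef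
  have hp' : ContDiff ℝ (m + 1 : ℕ) p := by exact_mod_cast hp_smooth
  have hf' : ContDiff ℝ (m + 1 : ℕ) f := by exact_mod_cast hf_smooth
  obtain ⟨c, hc, hbound⟩ := exists_smoothing_bound hA_int hmom
    (habs (m + 1) le_rfl (by omega)) hp' hf' hp_deriv hf_deriv
  have hP : IsProbabilityMeasure
      (volume.withDensity fun x : Fin D → ℝ => ENNReal.ofReal (p x)) := by
    constructor
    rw [withDensity_apply _ MeasurableSet.univ, Measure.restrict_univ,
      ← ofReal_integral_eq_lintegral_ofReal hp_int (Filter.Eventually.of_forall hp_nonneg),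
      hp_one, ENNReal.ofReal_one]
  refine ⟨1, c / |A| ^ D + 1, one_pos, by positivity, fun R hR k N hN => ?_⟩
  have hR0 : 0 < R := one_pos.trans_le hR
  set q : (Fin D → ℝ) → ℝ := fun x => ∏ j, ψ (R * (k j - x j)) with hq
  have hq_int : Integrable q := by
    refine Integrable.fintype_prod (f := fun (j : Fin D) (t : ℝ) => ψ (R * (k j - t)))
      (μ := fun _ => volume) fun j => ?_
    exact (hA_int.comp_mul_left' hR0.ne').comp_sub_left (k j)
  have hf0 : ∀ y, |f y| ≤ Md := fun y => by simpa using hf_deriv 0 (Nat.zero_le _) y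
  have hp0 : ∀ y, |p y| ≤ Md := fun y => by simpa using hp_deriv 0 (Nat.zero_le _) y
  have hpq : Integrable fun x => p x * q x :=
    hq_int.bdd_mul (c := Md) hp_meas.aestronglyMeasurable (Filter.Eventually.of_forall hp0)
  have hpfq : Integrable fun x => p x * ((f x - f k) * q x) := by
    have := hpq.bdd_mul (c := Md + Md) (f := fun x => f x - f k)
      (hf'.continuous.sub continuous_const).aestronglyMeasurable
      (Filter.Eventually.of_forall fun x =>
        (abs_sub _ _).trans (add_le_add (hf0 x) (hf0 k)))
    refine this.congr (Filter.Eventually.of_forall fun x => ?_)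
    simp only
    ring
  obtain ⟨hT_int, hT_eq⟩ := integral_regression_pair hp_meas hp_nonneg hpq (f k) hpfq ν
    hν_mean hν_int
  have hN0 : (N : ℝ) ≠ 0 := by exact_mod_cast (by omega : N ≠ 0)
  have hrew : ∀ kv : Fin N → (Fin D → ℝ) × ℝ,
      aEst D N φ A R f kv k - f k * pEstKV D N φ A R kv k
        = R ^ D / (N * A ^ D) * ∑ i : Fin N, (f (kv i).1 + (kv i).2 - f k) * q (kv i).1 := by
    intro kv
    simp only [aEst, pEstKV, hq, hψdef]
    rw [mul_left_comm, ← mul_sub, Finset.mul_sum, ← Finset.sum_sub_distrib]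
    congr 1
    exact Finset.sum_congr rfl fun i _ => by ring
  have hE : ∫ kv : Fin N → (Fin D → ℝ) × ℝ,
      (aEst D N φ A R f kv k - f k * pEstKV D N φ A R kv k) ∂(regMeasure D N p ν)
        = (∫ z : Fin D → ℝ, (∏ j, ψ (z j)) * ((f (k - R⁻¹ • z) - f k) * p (k - R⁻¹ • z)))
          / A ^ D := by
    simp_rw [hrew]
    rw [integral_const_mul, regMeasure, integral_finsetSum]
    · have : ∀ i : Fin N, ∫ kv : Fin N → (Fin D → ℝ) × ℝ,
          (f (kv i).1 + (kv i).2 - f k) * q (kv i).1 ∂(Measure.pi fun _ : Fin N =>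
            (volume.withDensity fun x => ENNReal.ofReal (p x)).prod ν)
          = ∫ x, q x * ((f x - f k) * p x) := by
        intro i
        rw [← hT_eq]
        exact integral_comp_eval (μ := fun _ : Fin N =>
            (volume.withDensity fun x => ENNReal.ofReal (p x)).prod ν) (i := i)
            hT_int.aestronglyMeasurable
      simp_rw [this]
      rw [Finset.sum_const, Finset.card_univ, Fintype.card_fin, nsmul_eq_mul,
        ← integral_rescale hR0 k ψ (fun x => (f x - f k) * p x)]
      field_simp
      rfl
    · intro i _
      exact integrable_comp_eval (μ := fun _ : Fin N =>
        (volume.withDensity fun x => ENNReal.ofReal (p x)).prod ν) (i := i) hT_int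
  rw [hE, abs_div, abs_pow]
  have hA0 : 0 < |A| ^ D := pow_pos (abs_pos.2 hA_ne) D
  calc _ ≤ c / R ^ (m + 1) / |A| ^ D := by gcongr; exact hbound R hR0 k
    _ = c / |A| ^ D / R ^ (m + 1) := by ring
    _ ≤ _ := by gcongr; linarith
end

section
/- Under the same hypotheses as the regression bias bound — m ∈ ℕ, φ with vanishing moments ∫_ℝ φ(sin z / z) z^j dz = 0 for 1 ≤ j ≤ m, ∫_ℝ |φ(sin z / z)| |z|^j dz < ∞ for m+1 ≤ j ≤ 2m+2, ∫_ℝ φ²(sin z / z) dz < ∞, A ≠ 0; keys i.i.d. with bounded density p, noises independent with mean zero and variance σ²; p, f ∈ C^{m+1} with bounded derivatives up to order m+1; ‖f²·p‖_∞ < ∞ — there exists a universal constant C such that for all R > 0, N ≥ 1 and k ∈ ℝ^D, E[ ( a_{N,R}(k) − f(k) p_{N,R}^φ(k) )² ] ≤ C ( ( ‖f²·p‖_∞ + f²(k) + σ² ‖p‖_∞ ) R^D / N + 1 / R^{2(m+1)} ). -/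
/-!
Put `ψ z = φ (sin z / z)`, `w x t = ψ (R (x - t))` and `K x = ∏ j, w (k j) (x j)`. The statistic
`a - f(k) p^φ` equals `R^D / (N A^D)` times the sum of the i.i.d. variables
`Y_i = (f(k_i) + ε_i - f(k)) K(k_i)`, so its second moment is at most
`(R^D / A^D)² (E[Y²] / N + E[Y]²)` (`sample_second_moment`).

For `E[Y²]`, bound `(f(x) + ε - f(k))² ≤ 3 (f(x)² + f(k)² + ε²)` and use `∫ K² = (∫ ψ² / R)^D`
(`summand_moments`).

For `E[Y]`, the noise averages out and `E[Y] = ∫ f p K - f(k) ∫ p K`. For a function `g` with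
bounded derivatives, `∫ g K` differs from `(A / R)^D g(k)` by `O(R^{-D-(m+1)})`; the main terms for
`g = f p` and `g = p` cancel. This smoothing estimate is obtained one coordinate at a time: the
one-dimensional Taylor formula and the vanishing moments give it on each line (`one_dim_bias`), and
Fubini together with induction on the dimension propagates it (`tensor_bias`), so that no
multivariate Taylor expansion is needed.
-/

open MeasureTheory Real Finset

/-- Taylor's inequality on both sides of the base point. The factor `1 / (m + 1)!` is dropped. -/
lemma taylor_bound_s17 (m : ℕ) (h : ℝ → ℝ) (hh : ContDiff ℝ (m + 1) h) (M : ℝ)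
    (hM : ∀ t, |iteratedDeriv (m + 1) h t| ≤ M) (x t : ℝ) :
    |h t - ∑ j ∈ range (m + 1), iteratedDeriv j h x / j.factorial * (t - x) ^ j|
      ≤ M * |t - x| ^ (m + 1) := by
  have hM0 : 0 ≤ M := (abs_nonneg _).trans (hM 0)
  rcases eq_or_ne x t with rfl | hx
  · simp [Finset.sum_range_succ']
  obtain ⟨y, -, hy⟩ := taylor_mean_remainder_lagrange_iteratedDeriv hx
    (n := m) (f := h) (by exact_mod_cast hh.contDiffOn)
  have key : taylorWithinEval h m (Set.uIcc x t) x t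
      = ∑ j ∈ range (m + 1), iteratedDeriv j h x / j.factorial * (t - x) ^ j := by
    rw [taylor_within_apply]
    refine Finset.sum_congr rfl fun j hj => ?_
    rw [iteratedDerivWithin_eq_iteratedDeriv (uniqueDiffOn_uIcc hx) _ Set.left_mem_uIcc]
    · simp only [smul_eq_mul]; ring
    · refine (hh.of_le ?_).contDiffAt
      have := Finset.mem_range.1 hj
      exact_mod_cast this.le
  rw [← key, hy, abs_div, abs_mul, abs_pow]
  have h1 : (1 : ℝ) ≤ |((m + 1).factorial : ℝ)| := by
    rw [abs_of_nonneg (by positivity)]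
    exact_mod_cast Nat.succ_le_of_lt (Nat.factorial_pos _)
  refine (div_le_self (by positivity) h1).trans ?_
  gcongr
  exact hM y

/-- Smoothing by a kernel whose moments of orders `1, …, m` vanish reproduces `h x`, up to the
factor `(∫ ψ) / R`, with an error of order `R ^ (-(m + 2))`. -/
lemma one_dim_bias (m : ℕ) (ψ : ℝ → ℝ) (hψ : Integrable ψ)
    (hmom : ∀ j : ℕ, 1 ≤ j → j ≤ m → ∫ z : ℝ, ψ z * z ^ j = 0)
    (habs : Integrable (fun z : ℝ => |ψ z| * |z| ^ (m + 1)))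
    (h : ℝ → ℝ) (hh : ContDiff ℝ (m + 1) h) (G : ℝ) (hG : ∀ t, |h t| ≤ G) (M : ℝ)
    (hM : ∀ t, |iteratedDeriv (m + 1) h t| ≤ M) (R : ℝ) (hR : 0 < R) (x : ℝ) :
    |(∫ t, h t * ψ (R * (x - t))) - (∫ z, ψ z) / R * h x|
      ≤ M * (∫ z, |ψ z| * |z| ^ (m + 1)) / R ^ (m + 1) / R := by
  have hmono : ∀ j : ℕ, j ≤ m → Integrable (fun z : ℝ => ψ z * z ^ j) := by
    intro j hj
    refine (hψ.norm.add habs).mono' (hψ.aestronglyMeasurable.mul (by fun_prop)) ?_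
    refine Filter.Eventually.of_forall fun z => ?_
    simp only [Pi.add_apply, norm_mul, norm_pow, Real.norm_eq_abs]
    have : |z| ^ j ≤ 1 + |z| ^ (m + 1) := by
      rcases le_total |z| 1 with h1 | h1
      · have := pow_le_one₀ (n := j) (abs_nonneg z) h1
        have : 0 ≤ |z| ^ (m + 1) := by positivity
        linarith
      · have := pow_le_pow_right₀ h1 (show j ≤ m + 1 by omega)
        linarith
    nlinarith [abs_nonneg (ψ z)]
  have hcov : (∫ t, h t * ψ (R * (x - t))) = (∫ z, h (x - z / R) * ψ z) / R := by
    have h1 := integral_sub_left_eq_self (fun u => h (x - u) * ψ (R * u)) volume x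
    have h2 := Measure.integral_comp_mul_left (fun z => h (x - z / R) * ψ z) R
    simp only [sub_sub_cancel] at h1
    rw [h1, div_eq_inv_mul, ← smul_eq_mul]
    rw [abs_of_pos (inv_pos.2 hR)] at h2
    rw [← h2]
    congr 1; ext u
    rw [mul_div_cancel_left₀ _ hR.ne']
  set c : ℕ → ℝ := fun j => iteratedDeriv j h x / j.factorial with hc
  have hpoly : Integrable
      (fun z => (∑ j ∈ range (m + 1), c j * (-z / R) ^ j) * ψ z) := by
    simp only [Finset.sum_mul]
    refine integrable_finsetSum _ fun j hj => ?_
    refine ((hmono j (by have := Finset.mem_range.1 hj; omega)).const_mul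
      (c j * (-1 / R) ^ j)).congr (Filter.Eventually.of_forall fun z => ?_)
    simp only [div_pow, neg_pow z]; ring
  have hpint : ∫ z, (∑ j ∈ range (m + 1), c j * (-z / R) ^ j) * ψ z = h x * ∫ z, ψ z := by
    have e : ∀ j z, c j * (-z / R) ^ j * ψ z = c j * (-1 / R) ^ j * (ψ z * z ^ j) := by
      intro j z; simp only [div_pow, neg_pow z]; ring
    simp only [Finset.sum_mul, e]
    rw [integral_finsetSum _ fun j hj =>
      (hmono j (by have := Finset.mem_range.1 hj; omega)).const_mul _]
    simp only [integral_const_mul]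
    -- Only the constant term survives.
    rw [Finset.sum_range_succ', Finset.sum_eq_zero]
    · simp [hc]
    · intro j hj
      rw [hmom (j + 1) (by omega) (by have := Finset.mem_range.1 hj; omega), mul_zero]
  have hfull : Integrable (fun z => h (x - z / R) * ψ z) := by
    refine hψ.bdd_mul (c := G) ?_ (Filter.Eventually.of_forall fun z => hG _)
    have := hh.continuous
    exact Continuous.aestronglyMeasurable (by fun_prop)
  have hdiff : (∫ t, h t * ψ (R * (x - t))) - (∫ z, ψ z) / R * h x
      = (∫ z, (h (x - z / R) - ∑ j ∈ range (m + 1), c j * (-z / R) ^ j) * ψ z) / R := by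
    simp only [sub_mul]
    rw [integral_sub hfull hpoly, hpint, hcov]; ring
  rw [hdiff, abs_div, abs_of_pos hR]
  gcongr
  rw [← Real.norm_eq_abs, ← integral_const_mul, ← integral_div]
  refine norm_integral_le_of_norm_le ((habs.const_mul M).div_const _)
    (Filter.Eventually.of_forall fun z => ?_)
  have := taylor_bound_s17 m h hh M hM x (x - z / R)
  rw [show x - z / R - x = -z / R by ring] at this
  rw [norm_mul, Real.norm_eq_abs, Real.norm_eq_abs]
  calc _ ≤ M * |-z / R| ^ (m + 1) * |ψ z| := by gcongr
    _ = _ := by rw [abs_div, abs_neg, abs_of_pos hR, div_pow]; ring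

/-- If smoothing `g` by `w` in any single coordinate costs an error of at most `e * b`, then
smoothing in all `n` coordinates costs at most `n * e * b ^ n`: by Fubini the coordinates can be
treated one after the other, each remaining integration contributing a factor at most `b`. -/
lemma tensor_bias (w : ℝ → ℝ → ℝ) (hw : ∀ x, Integrable (w x)) (a b e : ℝ)
    (hb : ∀ x, ∫ t, |w x t| = b) (ha : |a| ≤ b) (G : ℝ) :
    ∀ (n : ℕ) (g : (Fin n → ℝ) → ℝ), Measurable g → (∀ x, |g x| ≤ G) →
      (∀ x j, |(∫ t, g (Function.update x j t) * w (x j) t) - a * g x| ≤ e * b) →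
      ∀ k : Fin n → ℝ,
        |(∫ x, g x * ∏ j, w (k j) (x j)) - a ^ n * g k| ≤ n * e * b ^ n := by
  have hb0 : 0 ≤ b := (abs_nonneg a).trans ha
  intro n
  induction n with
  | zero =>
    intro g hg hG hstep k
    have : ∀ x, g x = g k := fun x => by rw [Subsingleton.elim x k]
    simp [this, measureReal_def, volume_pi]
  | succ n ih =>
    intro g hg hG hstep k
    have hgK : Integrable (fun x : Fin (n + 1) → ℝ => g x * ∏ j, w (k j) (x j)) :=
      (Integrable.fintype_prod (f := fun j => w (k j)) fun j => hw _).bdd_mul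
        hg.aestronglyMeasurable (Filter.Eventually.of_forall hG)
    have hmp := (volume_preserving_piFinSuccAbove (fun _ : Fin (n + 1) => ℝ) 0).symm
    have hemb := (MeasurableEquiv.piFinSuccAbove (fun _ : Fin (n + 1) => ℝ) 0).symm.measurableEmbedding
    have hcons : ∀ z : ℝ × (Fin n → ℝ),
        (MeasurableEquiv.piFinSuccAbove (fun _ : Fin (n + 1) => ℝ) 0).symm z
          = Fin.cons z.1 z.2 := by
      intro z; ext i; simp [MeasurableEquiv.piFinSuccAbove]
    set Q : (Fin n → ℝ) → ℝ := fun y => ∏ j, w (k j.succ) (y j) with hQ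
    have hQint : Integrable Q := Integrable.fintype_prod (f := fun j : Fin n => w (k j.succ)) fun j => hw _
    have hgK2 : Integrable (fun z : ℝ × (Fin n → ℝ) =>
        g (Fin.cons z.1 z.2) * (w (k 0) z.1 * Q z.2)) (volume.prod volume) := by
      have := (hmp.integrable_comp_emb hemb).2 hgK
      simp only [Function.comp_def, hcons, Fin.prod_univ_succ, Fin.cons_zero, Fin.cons_succ] at this
      exact this
    have hI : (∫ x, g x * ∏ j, w (k j) (x j))
        = ∫ y, Q y * ∫ t, g (Fin.cons t y) * w (k 0) t := by
      rw [← hmp.integral_comp hemb]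
      simp only [hcons, Fin.prod_univ_succ, Fin.cons_zero, Fin.cons_succ]
      rw [Measure.volume_eq_prod, integral_prod_symm _ hgK2]
      congr 1; ext y
      rw [← integral_const_mul]
      congr 1; ext t; simp only [hQ]; ring
    have hinner : Integrable (fun y => Q y * ∫ t, g (Fin.cons t y) * w (k 0) t) := by
      refine hgK2.integral_prod_right.congr (Filter.Eventually.of_forall fun y => ?_)
      simp only
      rw [← integral_const_mul]
      congr 1; ext t; ring
    set g' : (Fin n → ℝ) → ℝ := fun y => g (Fin.cons (k 0) y) with hg'
    have hg'm : Measurable g' := by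
      refine hg.comp (measurable_pi_lambda _ fun i => ?_)
      refine Fin.cases ?_ (fun j => ?_) i
      · simp
      · simpa using measurable_pi_apply j
    have hslice : Integrable (fun y => a * (g' y * Q y)) :=
      (hQint.bdd_mul hg'm.aestronglyMeasurable
        (Filter.Eventually.of_forall fun y => hG _)).const_mul a
    have hih := ih g' hg'm (fun y => hG _) (fun y j => by
      have := hstep (Fin.cons (k 0) y) j.succ
      simpa [hg', Fin.cons_update] using this) (fun j => k j.succ)
    have hk : g' (fun j => k j.succ) = g k := by
      simp only [hg']; congr 1; exact Fin.cons_self_tail k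
    rw [hk] at hih
    -- Smoothing in the coordinate `0` only; the induction hypothesis handles the others.
    have hfirst : |(∫ y, Q y * ∫ t, g (Fin.cons t y) * w (k 0) t) - ∫ y, a * (g' y * Q y)|
        ≤ e * b * b ^ n := by
      rw [← integral_sub hinner hslice]
      have hQabs : ∫ y, |Q y| = b ^ n := by
        simp only [hQ, Finset.abs_prod]
        rw [integral_fintype_prod_volume_eq_prod (fun (j : Fin n) t => |w (k j.succ) t|)]
        simp [hb]
      rw [← hQabs, ← integral_const_mul, ← Real.norm_eq_abs]
      refine norm_integral_le_of_norm_le (hQint.abs.const_mul _)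
        (Filter.Eventually.of_forall fun y => ?_)
      have := hstep (Fin.cons (k 0) y) 0
      simp only [Fin.update_cons_zero, Fin.cons_zero] at this
      rw [show Q y * (∫ t, g (Fin.cons t y) * w (k 0) t) - a * (g' y * Q y)
        = ((∫ t, g (Fin.cons t y) * w (k 0) t) - a * g' y) * Q y by ring, norm_mul]
      simp only [Real.norm_eq_abs]
      gcongr
    rw [hI]
    calc _ = |((∫ y, Q y * ∫ t, g (Fin.cons t y) * w (k 0) t) - ∫ y, a * (g' y * Q y))
          + a * ((∫ y, g' y * Q y) - a ^ n * g k)| := by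
            rw [integral_const_mul]; congr 1; ring
      _ ≤ e * b * b ^ n + b * (n * e * b ^ n) := by
          refine (abs_add_le _ _).trans (add_le_add hfirst ?_)
          rw [abs_mul]
          gcongr
      _ = _ := by push_cast; ring

/-- The restriction of `g` to a line parallel to a coordinate axis inherits its smoothness and the
bound on its derivative of order `m + 1`, since the axis embeds with operator norm at most `1`. -/
lemma slice_smooth {n : ℕ} (m : ℕ) (g : (Fin n → ℝ) → ℝ) (hg : ContDiff ℝ (m + 1) g) (M : ℝ)
    (hM : ∀ x, ‖iteratedFDeriv ℝ (m + 1) g x‖ ≤ M) (x : Fin n → ℝ) (j : Fin n) :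
    ContDiff ℝ (m + 1) (fun t => g (Function.update x j t)) ∧
      ∀ t, |iteratedDeriv (m + 1) (fun t => g (Function.update x j t)) t| ≤ M := by
  set L : ℝ →L[ℝ] (Fin n → ℝ) := ContinuousLinearMap.single ℝ (fun _ => ℝ) j with hL
  set x0 := Function.update x j 0 with hx0
  have hform : (fun t => g (Function.update x j t)) = (fun y => g (x0 + y)) ∘ L := by
    ext t
    simp only [Function.comp_apply]
    congr 1
    ext i
    rcases eq_or_ne i j with rfl | h <;> simp [x0, L, *]
  have hG : ContDiff ℝ (m + 1) (fun y => g (x0 + y)) := by fun_prop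
  have hLn : ‖L‖ ≤ 1 := by
    refine ContinuousLinearMap.opNorm_le_bound _ zero_le_one fun t => ?_
    rw [one_mul]
    exact (Pi.norm_single (ι := Fin n) (G := fun _ => ℝ) (i := j) t).le
  constructor
  · rw [hform]; exact hG.comp L.contDiff
  · intro t
    rw [← Real.norm_eq_abs, ← norm_iteratedFDeriv_eq_norm_iteratedDeriv, hform,
      L.iteratedFDeriv_comp_right hG t (i := m + 1) (by norm_cast), iteratedFDeriv_comp_add_left]
    refine (ContinuousMultilinearMap.norm_compContinuousLinearMap_le _ _).trans ?_
    have hp : ∏ _i : Fin (m + 1), ‖L‖ ≤ 1 :=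
      Finset.prod_le_one (fun _ _ => norm_nonneg _) fun _ _ => hLn
    exact (mul_le_of_le_one_right (norm_nonneg _) hp).trans (hM _)

/-- Independence enters here: the variance of the sum is `N` times that of `Y`, and is
bounded by `N * E[Y²]`. -/
lemma sample_second_moment {Ω : Type*} [MeasurableSpace Ω] (μ : Measure Ω)
    [IsProbabilityMeasure μ] (Y : Ω → ℝ) (hY : MemLp Y 2 μ) (N : ℕ) (c : ℝ) :
    (∫ ω : Fin N → Ω, (c * ∑ i, Y (ω i)) ^ 2 ∂(Measure.pi fun _ => μ))
      ≤ c ^ 2 * (N * (∫ ω, Y ω ^ 2 ∂μ) + (N * ∫ ω, Y ω ∂μ) ^ 2) := by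
  set Q : Measure (Fin N → Ω) := Measure.pi fun _ => μ
  have hev : ∀ i : Fin N, MeasurePreserving (Function.eval i) Q μ :=
    fun i => measurePreserving_eval (fun _ => μ) i
  have hYi : ∀ i : Fin N, MemLp (fun ω : Fin N → Ω => Y (ω i)) 2 Q :=
    fun i => hY.comp_measurePreserving (hev i)
  have hS : MemLp (∑ i : Fin N, fun ω : Fin N → Ω => Y (ω i)) 2 Q :=
    memLp_finsetSum' _ fun i _ => hYi i
  have hvar := ProbabilityTheory.variance_sum_pi (ι := Fin N) (μ := fun _ => μ)
    (X := fun _ => Y) fun _ => hY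
  have hmean : ∫ ω, (∑ i : Fin N, fun ω : Fin N → Ω => Y (ω i)) ω ∂Q = N * ∫ ω, Y ω ∂μ := by
    simp only [Finset.sum_apply]
    rw [integral_finsetSum _ fun i _ => (hYi i).integrable one_le_two]
    have : ∀ i : Fin N, ∫ ω, Y (ω i) ∂Q = ∫ ω, Y ω ∂μ := fun i => by
      rw [← (hev i).map_eq, integral_map (hev i).aemeasurable]
      rw [(hev i).map_eq]; exact hY.aestronglyMeasurable
    simp [this]
  rw [ProbabilityTheory.variance_eq_sub hS, hmean] at hvar
  have hle : ProbabilityTheory.variance Y μ ≤ ∫ ω, Y ω ^ 2 ∂μ :=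
    ProbabilityTheory.variance_le_expectation_sq hY.aestronglyMeasurable
  simp only [mul_pow, integral_const_mul]
  simp only [Finset.sum_const, Finset.card_univ, Fintype.card_fin, nsmul_eq_mul,
    Pi.pow_apply, Finset.sum_apply] at hvar
  gcongr
  have := mul_le_mul_of_nonneg_left hle (Nat.cast_nonneg (α := ℝ) N)
  nlinarith

/-- Mean and second moment of a single centred summand `(f(x) + ε - y) * K x`, where `x` has
density `p` and the noise `ε` is independent of `x` with law `ν`. -/
lemma summand_moments {D : ℕ} (p f K : (Fin D → ℝ) → ℝ) (hp_meas : Measurable p)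
    (hp_nonneg : ∀ x, 0 ≤ p x) (Mp : ℝ) (hp_bdd : ∀ x, p x ≤ Mp)
    (hp_int : Integrable p) (hp_one : ∫ x, p x = 1)
    (hf : Measurable f) (Mf : ℝ) (hfb : ∀ x, |f x| ≤ Mf)
    (Mf2p : ℝ) (hf2p : ∀ x, f x ^ 2 * p x ≤ Mf2p)
    (hKm : Measurable K) (hK : Integrable K) (hK2 : Integrable fun x => K x ^ 2)
    (ν : Measure ℝ) [IsProbabilityMeasure ν] (hν_mean : ∫ e : ℝ, e ∂ν = 0)
    (hν_int : Integrable (fun e : ℝ => e ^ 2) ν) (y : ℝ) :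
    let P := volume.withDensity fun x => ENNReal.ofReal (p x)
    let Y : (Fin D → ℝ) × ℝ → ℝ := fun z => (f z.1 + z.2 - y) * K z.1
    IsProbabilityMeasure P ∧ MemLp Y 2 (P.prod ν) ∧
      (∫ z, Y z ∂(P.prod ν)) = (∫ x, f x * p x * K x) - y * ∫ x, p x * K x ∧
      (∫ z, Y z ^ 2 ∂(P.prod ν))
        ≤ 3 * (Mf2p + y ^ 2 * Mp + (∫ e, e ^ 2 ∂ν) * Mp) * ∫ x, K x ^ 2 := by
  intro P Y
  have hdm : Measurable fun x => ENNReal.ofReal (p x) := by fun_prop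
  have hPint : ∀ F : (Fin D → ℝ) → ℝ, ∫ x, F x ∂P = ∫ x, p x * F x := by
    intro F
    rw [integral_withDensity_eq_integral_toReal_smul hdm (by simp)]
    simp [ENNReal.toReal_ofReal (hp_nonneg _)]
  have hPI : ∀ F : (Fin D → ℝ) → ℝ, Integrable (fun x => p x * F x) → Integrable F P := by
    intro F hF
    rw [integrable_withDensity_iff_integrable_smul' hdm (by simp)]
    simpa [ENNReal.toReal_ofReal (hp_nonneg _)] using hF
  have hprob : IsProbabilityMeasure P := by
    constructor
    rw [withDensity_apply _ MeasurableSet.univ, Measure.restrict_univ,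
      ← ofReal_integral_eq_lintegral_ofReal hp_int (Filter.Eventually.of_forall hp_nonneg),
      hp_one, ENNReal.ofReal_one]
  have hpa : ∀ x, ‖p x‖ ≤ Mp := fun x => by
    rw [Real.norm_eq_abs, abs_of_nonneg (hp_nonneg x)]; exact hp_bdd x
  have hpK : Integrable (fun x => p x * K x) :=
    hK.bdd_mul hp_meas.aestronglyMeasurable (Filter.Eventually.of_forall hpa)
  have hpfK : Integrable (fun x => f x * p x * K x) := by
    simp only [mul_assoc]
    exact hpK.bdd_mul hf.aestronglyMeasurable (Filter.Eventually.of_forall hfb)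
  have hpK2 : Integrable (fun x => p x * K x ^ 2) :=
    hK2.bdd_mul hp_meas.aestronglyMeasurable (Filter.Eventually.of_forall hpa)
  have hpfK2 : Integrable (fun x => f x ^ 2 * p x * K x ^ 2) := by
    refine hK2.bdd_mul (c := Mf2p) (by fun_prop) (Filter.Eventually.of_forall fun x => ?_)
    rw [Real.norm_eq_abs, abs_of_nonneg (mul_nonneg (sq_nonneg _) (hp_nonneg x))]
    exact hf2p x
  have hνe : Integrable (fun e : ℝ => e) ν :=
    ((memLp_two_iff_integrable_sq (by fun_prop)).2 hν_int).integrable one_le_two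
  have hYm : Measurable Y := by fun_prop
  -- The mean: the noise factors out and integrates to zero.
  have hI1 : Integrable (fun x => (f x - y) * K x) P :=
    hPI _ ((hpfK.sub (hpK.const_mul y)).congr (Filter.Eventually.of_forall fun x => by
      simp only [Pi.sub_apply]; ring))
  have hI2 : Integrable K P := hPI _ hpK
  have hmean : (∫ z, Y z ∂(P.prod ν)) = (∫ x, f x * p x * K x) - y * ∫ x, p x * K x := by
    have e1 : Y = fun z => (f z.1 - y) * K z.1 * (fun _ : ℝ => (1 : ℝ)) z.2 + K z.1 * z.2 := by
      ext z; simp only [Y]; ring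
    rw [e1, integral_add (hI1.mul_prod (integrable_const 1)) (hI2.mul_prod hνe),
      integral_prod_mul (fun x => (f x - y) * K x) (fun _ : ℝ => (1 : ℝ)),
      integral_prod_mul K (fun e : ℝ => e), hν_mean, hPint,
      ← integral_const_mul y, ← integral_sub hpfK (hpK.const_mul y)]
    simp only [integral_const, probReal_univ, smul_eq_mul, mul_one, mul_zero, add_zero]
    congr 1; ext x; ring
  -- A dominating function for the square.
  have hI3 : Integrable (fun x => 3 * (f x ^ 2 + y ^ 2) * K x ^ 2) P :=
    hPI _ (((hpfK2.add (hpK2.const_mul (y ^ 2))).const_mul 3).congr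
      (Filter.Eventually.of_forall fun x => by simp only [Pi.add_apply]; ring))
  have hI4 : Integrable (fun x => 3 * K x ^ 2) P :=
    hPI _ ((hpK2.const_mul 3).congr (Filter.Eventually.of_forall fun x => by ring))
  set U : (Fin D → ℝ) × ℝ → ℝ := fun z =>
    3 * (f z.1 ^ 2 + y ^ 2) * K z.1 ^ 2 * (fun _ : ℝ => (1 : ℝ)) z.2 + 3 * K z.1 ^ 2 * z.2 ^ 2
    with hU
  have hUi1 := hI3.mul_prod (integrable_const (μ := ν) (1 : ℝ))
  have hUi2 := hI4.mul_prod hν_int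
  have hUi : Integrable U (P.prod ν) := hUi1.add hUi2
  have hYU : ∀ z, Y z ^ 2 ≤ U z := by
    intro z
    simp only [Y, hU, mul_pow, mul_one]
    have : (f z.1 + z.2 - y) ^ 2 ≤ 3 * (f z.1 ^ 2 + y ^ 2) + 3 * z.2 ^ 2 := by
      nlinarith [sq_nonneg (f z.1 - z.2), sq_nonneg (f z.1 + y), sq_nonneg (z.2 + y)]
    nlinarith [mul_le_mul_of_nonneg_right this (sq_nonneg (K z.1))]
  have hY2 : Integrable (fun z => Y z ^ 2) (P.prod ν) :=
    hUi.mono' (by fun_prop) (Filter.Eventually.of_forall fun z => by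
      rw [Real.norm_eq_abs, abs_of_nonneg (sq_nonneg _)]; exact hYU z)
  refine ⟨hprob, (memLp_two_iff_integrable_sq hYm.aestronglyMeasurable).2 hY2, hmean, ?_⟩
  refine (integral_mono hY2 hUi hYU).trans ?_
  have hσ : 0 ≤ ∫ e, e ^ 2 ∂ν := integral_nonneg fun e => sq_nonneg e
  rw [hU, integral_add hUi1 hUi2, integral_prod_mul (fun x => 3 * (f x ^ 2 + y ^ 2) * K x ^ 2)
    (fun _ : ℝ => (1 : ℝ)), integral_prod_mul (fun x => 3 * K x ^ 2) (fun e : ℝ => e ^ 2),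
    hPint, hPint]
  simp only [integral_const, probReal_univ, smul_eq_mul, mul_one]
  have b1 : ∫ x, p x * (3 * (f x ^ 2 + y ^ 2) * K x ^ 2)
      ≤ ∫ x, 3 * (Mf2p + y ^ 2 * Mp) * K x ^ 2 := by
    refine integral_mono (((hpfK2.add (hpK2.const_mul (y ^ 2))).const_mul 3).congr
      (Filter.Eventually.of_forall fun x => by simp only [Pi.add_apply]; ring))
      (hK2.const_mul _) fun x => ?_
    have h1 : f x ^ 2 * p x + y ^ 2 * p x ≤ Mf2p + y ^ 2 * Mp :=
      add_le_add (hf2p x) (mul_le_mul_of_nonneg_left (hp_bdd x) (sq_nonneg _))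
    nlinarith [mul_le_mul_of_nonneg_right h1 (sq_nonneg (K x))]
  have b2 : ∫ x, p x * (3 * K x ^ 2) ≤ ∫ x, 3 * Mp * K x ^ 2 := by
    refine integral_mono ((hpK2.const_mul 3).congr (Filter.Eventually.of_forall fun x => by ring))
      (hK2.const_mul _) fun x => ?_
    nlinarith [mul_le_mul_of_nonneg_right (hp_bdd x) (sq_nonneg (K x))]
  rw [integral_const_mul] at b1 b2
  nlinarith [mul_le_mul_of_nonneg_right b2 hσ]

/-- Collects the powers of `R` and `N` in the variance and bias contributions. -/
lemma rate_identity (D m : ℕ) (R N A b c u v s S : ℝ) (hR : R ≠ 0) (hN : N ≠ 0) (hA : A ≠ 0) :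
    (R ^ D / (N * A ^ D)) ^ 2 * (N * (3 * (v * S) * (c / R) ^ D)
        + N ^ 2 * (s * D * (u / R ^ (m + 1)) * (b / R) ^ D) ^ 2)
      = 3 * v * c ^ D / (A ^ D) ^ 2 * (S * R ^ D / N)
        + (s * D * u * b ^ D / A ^ D) ^ 2 * (1 / R ^ (2 * (m + 1))) := by
  have hR' : R ^ D ≠ 0 := pow_ne_zero _ hR
  have hA' : A ^ D ≠ 0 := pow_ne_zero _ hA
  have hRm : R ^ (m + 1) ≠ 0 := pow_ne_zero _ hR
  rw [pow_mul' R 2 (m + 1), div_pow c, div_pow b]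
  generalize R ^ D = r at *
  generalize A ^ D = a at *
  generalize R ^ (m + 1) = q at *
  field_simp

set_option maxHeartbeats 1000000 in
/-- second-moment bound
`E[(a_{N,R}(k) − f(k) p_{N,R}^φ(k))²] ≤ C((‖f²·p‖_∞ + f²(k) + σ²‖p‖_∞) R^D/N + 1/R^{2(m+1)})`. -/
theorem regression_second_moment_bound_generalized_fourier
    (D m : ℕ) (hD : 0 < D)
    (φ : ℝ → ℝ) (hφ_meas : Measurable φ)
    (A : ℝ) (hA_int : Integrable (fun z : ℝ => φ (sincLike z)))
    (hA_def : A = ∫ z : ℝ, φ (sincLike z)) (hA_ne : A ≠ 0)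
    (hmom : ∀ j : ℕ, 1 ≤ j → j ≤ m → ∫ z : ℝ, φ (sincLike z) * z ^ j = 0)
    (habs : ∀ j : ℕ, m + 1 ≤ j → j ≤ 2 * m + 2 →
      Integrable (fun z : ℝ => |φ (sincLike z)| * |z| ^ j))
    (hφ2 : Integrable (fun z : ℝ => φ (sincLike z) ^ 2))
    (p f : (Fin D → ℝ) → ℝ)
    (hp_meas : Measurable p) (hp_nonneg : ∀ x, 0 ≤ p x)
    (hp_int : Integrable p) (hp_one : ∫ x : Fin D → ℝ, p x = 1)
    (Mp : ℝ) (hp_bdd : ∀ x, p x ≤ Mp)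
    (hp_smooth : ContDiff ℝ (m + 1) p) (hf_smooth : ContDiff ℝ (m + 1) f)
    (Md : ℝ) (hp_deriv : ∀ i : ℕ, i ≤ m + 1 → ∀ x, ‖iteratedFDeriv ℝ i p x‖ ≤ Md)
    (hf_deriv : ∀ i : ℕ, i ≤ m + 1 → ∀ x, ‖iteratedFDeriv ℝ i f x‖ ≤ Md)
    (Mf2p : ℝ) (hf2p_bdd : ∀ x, f x ^ 2 * p x ≤ Mf2p)
    (ν : Measure ℝ) (hν : IsProbabilityMeasure ν)
    (hν_mean : ∫ e : ℝ, e ∂ν = 0)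
    (hν_int : Integrable (fun e : ℝ => e ^ 2) ν)
    (σ2 : ℝ) (hν_var : ∫ e : ℝ, e ^ 2 ∂ν = σ2) :
    ∃ C : ℝ, 0 < C ∧
      ∀ R : ℝ, 0 < R → ∀ N : ℕ, 1 ≤ N → ∀ k : Fin D → ℝ,
        (∫ kv : Fin N → (Fin D → ℝ) × ℝ,
            (aEst D N φ A R f kv k - f k * pEstKV D N φ A R kv k) ^ 2
          ∂(regMeasure D N p ν))
          ≤ C * ((Mf2p + f k ^ 2 + σ2 * Mp) * R ^ D / N + 1 / R ^ (2 * (m + 1))) := by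
  set ψ : ℝ → ℝ := fun z => φ (sincLike z) with hψ
  have hsm : Measurable sincLike :=
    Measurable.ite (measurableSet_singleton 0) measurable_const (by fun_prop)
  have hψm : Measurable ψ := hφ_meas.comp hsm
  have hMp : 0 ≤ Mp := (hp_nonneg 0).trans (hp_bdd 0)
  have hMd : 0 ≤ Md := (norm_nonneg _).trans (hp_deriv 0 (by omega) 0)
  have hpM : ∀ x, |p x| ≤ Md := fun x => by
    simpa using hp_deriv 0 (by omega) x
  have hfM : ∀ x, |f x| ≤ Md := fun x => by
    simpa using hf_deriv 0 (by omega) x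
  have hMf2p : 0 ≤ Mf2p := (mul_nonneg (sq_nonneg _) (hp_nonneg 0)).trans (hf2p_bdd 0)
  have hσ : 0 ≤ σ2 := hν_var ▸ integral_nonneg fun e => sq_nonneg e
  set B0 := ∫ z, |ψ z| with hB0
  set B := ∫ z, |ψ z| * |z| ^ (m + 1) with hB
  set B2 := ∫ z, ψ z ^ 2 with hB2
  have hBabs : |A| ≤ B0 := by rw [hA_def]; exact abs_integral_le_integral_abs
  have hB0pos : 0 < B0 := (abs_pos.2 hA_ne).trans_le hBabs
  have hBnn : 0 ≤ B := integral_nonneg fun z => by positivity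
  have hB2nn : 0 ≤ B2 := integral_nonneg fun z => sq_nonneg _
  -- A common bound for the derivatives of order `m + 1` of `p` and of `f * p`.
  set M := 2 ^ (m + 1) * Md ^ 2 + Md with hM
  have hMnn : 0 ≤ M := by positivity
  have hpD : ∀ x, ‖iteratedFDeriv ℝ (m + 1) p x‖ ≤ M := fun x =>
    (hp_deriv _ le_rfl x).trans (le_add_of_nonneg_left (by positivity))
  have hfpD : ∀ x, ‖iteratedFDeriv ℝ (m + 1) (fun x => f x * p x) x‖ ≤ M := fun x => by
    refine (norm_iteratedFDeriv_mul_le hf_smooth hp_smooth x (n := m + 1)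
      (by norm_cast)).trans ?_
    have : ∑ i ∈ range (m + 1 + 1), ((m + 1).choose i : ℝ) * ‖iteratedFDeriv ℝ i f x‖ *
        ‖iteratedFDeriv ℝ (m + 1 - i) p x‖
        ≤ ∑ i ∈ range (m + 1 + 1), ((m + 1).choose i : ℝ) * Md ^ 2 := by
      refine Finset.sum_le_sum fun i hi => ?_
      rw [mul_assoc, sq]
      have := Finset.mem_range.1 hi
      gcongr
      · exact hf_deriv i (by omega) x
      · exact hp_deriv _ (by omega) x
    refine this.trans ?_
    rw [← Finset.sum_mul, ← Nat.cast_sum, Nat.sum_range_choose]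
    push_cast
    linarith
  set G := Md ^ 2 + Md with hG
  have hpG : ∀ x, |p x| ≤ G := fun x =>
    (hpM x).trans (le_add_of_nonneg_left (by positivity))
  have hfpG : ∀ x, |f x * p x| ≤ G := fun x => by
    rw [abs_mul]
    have := mul_le_mul (hfM x) (hpM x) (abs_nonneg _) hMd
    nlinarith
  set C1 := 3 * (1 + Mp) * B2 ^ D / (A ^ D) ^ 2 with hC1
  set C2 := ((1 + Md) * D * (M * B / B0) * B0 ^ D / A ^ D) ^ 2 with hC2
  have hC1nn : 0 ≤ C1 := by positivity
  have hC2nn : 0 ≤ C2 := by positivity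
  refine ⟨C1 + C2 + 1, by positivity, fun R hR N hN k => ?_⟩
  have hN0 : (0 : ℝ) < N := by exact_mod_cast hN
  set w : ℝ → ℝ → ℝ := fun x t => ψ (R * (x - t)) with hw
  have hwint : ∀ (F : ℝ → ℝ) (x : ℝ), ∫ t, F (R * (x - t)) = (∫ z, F z) / R := by
    intro F x
    rw [integral_sub_left_eq_self (fun u => F (R * u)) volume x,
      Measure.integral_comp_mul_left F R, abs_of_pos (inv_pos.2 hR), smul_eq_mul, div_eq_inv_mul]
  have hwI : ∀ (F : ℝ → ℝ), Integrable F → ∀ x : ℝ, Integrable fun t => F (R * (x - t)) :=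
    fun F hF x => (hF.comp_mul_left' hR.ne').comp_sub_left x
  set K : (Fin D → ℝ) → ℝ := fun x => ∏ j, w (k j) (x j) with hK
  have hKm : Measurable K := by fun_prop
  have hKint : Integrable K :=
    Integrable.fintype_prod (f := fun j : Fin D => w (k j)) fun j => hwI ψ hA_int _
  have hK2int : Integrable fun x => K x ^ 2 := by
    simp only [hK, ← Finset.prod_pow]
    exact Integrable.fintype_prod (f := fun (j : Fin D) t => w (k j) t ^ 2)
      fun j => hwI (fun z => ψ z ^ 2) hφ2 _
  have hK2val : ∫ x, K x ^ 2 = (B2 / R) ^ D := by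
    simp only [hK, ← Finset.prod_pow]
    rw [integral_fintype_prod_volume_eq_prod (fun (j : Fin D) t => w (k j) t ^ 2)]
    simp [hw, hwint (fun z => ψ z ^ 2), hB2, div_pow]
  -- Chosen so that `e * (B0 / R)` is the error bound of `one_dim_bias`.
  set e := M * B / B0 / R ^ (m + 1) with he
  have henn : 0 ≤ e := by positivity
  have hbias : ∀ g : (Fin D → ℝ) → ℝ, ContDiff ℝ (m + 1) g → (∀ x, |g x| ≤ G) →
      (∀ x, ‖iteratedFDeriv ℝ (m + 1) g x‖ ≤ M) →
      |(∫ x, g x * K x) - (A / R) ^ D * g k| ≤ D * e * (B0 / R) ^ D := by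
    intro g hg hgG hgM
    refine tensor_bias w (fun x => hwI ψ hA_int x) (A / R) (B0 / R) e
      (fun x => hwint (fun z => |ψ z|) x) ?_ G D g hg.continuous.measurable hgG ?_ k
    · rw [abs_div, abs_of_pos hR]; gcongr
    · intro x j
      obtain ⟨h1, h2⟩ := slice_smooth m g hg M hgM x j
      have := one_dim_bias m ψ hA_int hmom (habs (m + 1) le_rfl (by omega)) _ h1 G
        (fun t => hgG _) M h2 R hR (x j)
      simp only [Function.update_eq_self, ← hA_def] at this
      refine this.trans (le_of_eq ?_)
      rw [he, ← hB]; field_simp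
  obtain ⟨hP, hY, hYmean, hYsq⟩ := summand_moments p f K hp_meas hp_nonneg Mp hp_bdd hp_int hp_one
    hf_smooth.continuous.measurable Md hfM Mf2p hf2p_bdd hKm hKint hK2int ν hν_mean hν_int (f k)
  set P := volume.withDensity fun x => ENNReal.ofReal (p x) with hPdef
  set Y : (Fin D → ℝ) × ℝ → ℝ := fun z => (f z.1 + z.2 - f k) * K z.1 with hYdef
  have hstat : ∀ kv : Fin N → (Fin D → ℝ) × ℝ,
      aEst D N φ A R f kv k - f k * pEstKV D N φ A R kv k
        = R ^ D / (N * A ^ D) * ∑ i, Y (kv i) := by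
    intro kv
    simp only [aEst, pEstKV, hYdef, hK, hw, hψ]
    rw [mul_left_comm, ← mul_sub, Finset.mul_sum, ← Finset.sum_sub_distrib]
    congr 1
    refine Finset.sum_congr rfl fun i _ => ?_
    ring
  simp only [hstat]
  refine (sample_second_moment (P.prod ν) Y hY N _).trans ?_
  have hmeanb : |∫ z, Y z ∂(P.prod ν)| ≤ (1 + Md) * D * e * (B0 / R) ^ D := by
    have h1 := hbias _ (hf_smooth.mul hp_smooth) hfpG hfpD
    have h2 := hbias p hp_smooth hpG hpD
    rw [hYmean]
    calc _ = |((∫ x, f x * p x * K x) - (A / R) ^ D * (f k * p k))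
          - f k * ((∫ x, p x * K x) - (A / R) ^ D * p k)| := by congr 1; ring
      _ ≤ D * e * (B0 / R) ^ D + Md * (D * e * (B0 / R) ^ D) := by
          refine (abs_sub _ _).trans (add_le_add h1 ?_)
          rw [abs_mul]
          gcongr
          exact hfM k
      _ = _ := by ring
  have hmeansq : (∫ z, Y z ∂(P.prod ν)) ^ 2 ≤ ((1 + Md) * D * e * (B0 / R) ^ D) ^ 2 := by
    rw [← sq_abs]; gcongr
  set S := Mf2p + f k ^ 2 + σ2 * Mp with hS
  have hSnn : 0 ≤ S := by positivity
  have hYsq' : (∫ z, Y z ^ 2 ∂(P.prod ν)) ≤ 3 * ((1 + Mp) * S) * (B2 / R) ^ D := by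
    rw [hν_var, hK2val] at hYsq
    refine hYsq.trans ?_
    gcongr
    have := mul_nonneg hMp hMf2p
    have := mul_nonneg hMp (mul_nonneg hσ hMp)
    have := sq_nonneg (f k)
    rw [hS]; nlinarith
  calc _ ≤ (R ^ D / (N * A ^ D)) ^ 2 * (N * (3 * ((1 + Mp) * S) * (B2 / R) ^ D)
        + N ^ 2 * ((1 + Md) * D * e * (B0 / R) ^ D) ^ 2) := by
          rw [mul_pow]; gcongr
    _ = C1 * (S * R ^ D / N) + C2 * (1 / R ^ (2 * (m + 1))) := by
          exact rate_identity D m R N A B0 B2 (M * B / B0) (1 + Mp) (1 + Md) S hR.ne' hN0.ne' hA_ne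
    _ ≤ (C1 + C2 + 1) * (S * R ^ D / N + 1 / R ^ (2 * (m + 1))) := by
          have h1 : 0 ≤ S * R ^ D / N := by positivity
          have h2 : 0 ≤ 1 / R ^ (2 * (m + 1)) := by positivity
          nlinarith [mul_nonneg hC1nn h2, mul_nonneg hC2nn h1]
end
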